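/- For every N ≥ 1 and every n ∈ ℕ, the following are equivalent: (1) there exists an ℝ-linear map f : ℝⁿ → M(N,ℂ) such that every f(v) is skew-symmetric (f(v)ᵀ = −f(v)) and f(v) f(v)ᴴ = ‖v‖² I_N for all v ∈ ℝⁿ; (2) there exists an ℝ-linear map f : ℝⁿ → M(N,ℂ) with every f(v) skew-symmetric and f(v) invertible for every nonzero v; (3) n ≤ ρ(N/8) + 6. (Entry 𝔤 = 𝔰𝔬*(2N) of the Hurwitz–Radon value theorem; it recovers Au-Yeung's number ℂ_{sk-s}(N).) -/

import Mathlib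

open Matrix

section FA
set_option linter.all false
open scoped InnerProductSpace

/-- index space: kernel of `T` intersected with the `e`-eigenspace of `P` -/
def kerP {E : Type*} [NormedAddCommGroup E] [InnerProductSpace ℝ E] (T P : E →L[ℝ] E) (e : ℝ) :
    Submodule ℝ E where
  carrier := {u | T u = 0 ∧ P u = e • u}
  zero_mem' := by simp
  add_mem' := by
    rintro a b ⟨h1, h2⟩ ⟨h3, h4⟩
    exact ⟨by simp [h1, h3], by simp [h2, h4]⟩
  smul_mem' := by
    rintro c a ⟨h1, h2⟩
    exact ⟨by simp [h1], by simp [h2, smul_comm c e]⟩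

variable {E : Type*} [NormedAddCommGroup E] [InnerProductSpace ℝ E]

lemma mem_kerP {T P : E →L[ℝ] E} {e : ℝ} {u : E} : u ∈ kerP T P e ↔ T u = 0 ∧ P u = e • u :=
  Iff.rfl

noncomputable def idx (T P : E →L[ℝ] E) : ℤ :=
  (Module.finrank ℝ (kerP T P 1) : ℤ) - Module.finrank ℝ (kerP T P (-1))

structure SkewFred (T : E →L[ℝ] E) : Prop where
  skew : ∀ u v, ⟪T u, v⟫_ℝ = -⟪u, T v⟫_ℝ
  bdd : ∃ F : Submodule ℝ E, FiniteDimensional ℝ F ∧ ∃ c : ℝ, 0 < c ∧ ∀ u ∈ Fᗮ, c * ‖u‖ ≤ ‖T u‖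

structure Odd' (P T : E →L[ℝ] E) : Prop where
  symm : ∀ u v, ⟪P u, v⟫_ℝ = ⟪u, P v⟫_ℝ
  sq : ∀ u, P (P u) = u
  anti : ∀ u, P (T u) = - T (P u)

lemma SkewFred.finite_ker {T : E →L[ℝ] E} (h : SkewFred T) : FiniteDimensional ℝ (LinearMap.ker T.toLinearMap) := by
  obtain ⟨F, hF, c, hc, hb⟩ := h.bdd
  let φ : (LinearMap.ker T.toLinearMap) →ₗ[ℝ] F :=
    (F.orthogonalProjectionOnto : E →L[ℝ] F).toLinearMap ∘ₗ (LinearMap.ker T.toLinearMap).subtype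
  refine Module.Finite.of_injective φ ?_
  rw [← LinearMap.ker_eq_bot, LinearMap.ker_eq_bot']
  rintro ⟨u, hu⟩ h0
  have h1 : u ∈ Fᗮ := by
    rw [← Submodule.orthogonalProjectionOnto_eq_zero_iff]
    exact h0
  have := hb u h1
  have hu' : T u = 0 := hu
  rw [hu', norm_zero] at this
  have : ‖u‖ = 0 := by nlinarith [norm_nonneg u]
  simpa using this

lemma finite_kerP {T P : E →L[ℝ] E} (h : SkewFred T) (e : ℝ) : FiniteDimensional ℝ (kerP T P e) := by
  have := h.finite_ker
  exact Submodule.finiteDimensional_of_le (S₂ := LinearMap.ker T.toLinearMap) (fun u hu => hu.1)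

variable [CompleteSpace E]

lemma SkewFred.range_eq {T : E →L[ℝ] E} (h : SkewFred T) :
    LinearMap.range T.toLinearMap = (LinearMap.ker T.toLinearMap)ᗮ := by
  have hcl : IsClosed (LinearMap.range T.toLinearMap : Set E) := by
    obtain ⟨F, hF, c, hc, hb⟩ := h.bdd
    have h1 : LinearMap.range T.toLinearMap = Fᗮ.map T.toLinearMap ⊔ F.map T.toLinearMap := by
      rw [← Submodule.map_sup, sup_comm, Submodule.sup_orthogonal_of_hasOrthogonalProjection, Submodule.map_top]
    have h2 : IsClosed (Fᗮ.map T.toLinearMap : Set E) := by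
      have ha : AntilipschitzWith (Real.toNNReal c⁻¹) (T.comp Fᗮ.subtypeL) := by
        refine ContinuousLinearMap.antilipschitz_of_bound _ ?_
        rintro ⟨u, hu⟩
        have := hb u hu
        have hc' : 0 ≤ c⁻¹ := by positivity
        rw [Real.coe_toNNReal _ hc']
        simp only [Submodule.coe_norm, ContinuousLinearMap.comp_apply, Submodule.subtypeL_apply]
        rw [inv_mul_eq_div, le_div_iff₀ hc]; linarith
      have := ha.isClosed_range (T.comp Fᗮ.subtypeL).uniformContinuous
      convert this using 1
      ext x; simp
    rw [h1]
    exact Submodule.isClosed_sup_finiteDimensional _ _ h2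
  have h3 : (LinearMap.range T.toLinearMap)ᗮ = LinearMap.ker T.toLinearMap := by
    ext u
    rw [Submodule.mem_orthogonal, LinearMap.mem_ker]
    constructor
    · intro hu
      have := hu (T (T u)) ⟨T u, rfl⟩
      rw [h.skew] at this
      simpa using this
    · rintro hu _ ⟨w, rfl⟩
      have hu' : T u = 0 := hu
      have := h.skew w u
      rw [hu'] at this
      simpa using this
  rw [← h3, Submodule.orthogonal_orthogonal_eq_closure, hcl.submodule_topologicalClosure_eq]

noncomputable def compr (K : Submodule ℝ E) [K.HasOrthogonalProjection] (S : E →L[ℝ] E) : Kᗮ →L[ℝ] Kᗮ :=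
  (Kᗮ.orthogonalProjectionOnto).comp (S.comp Kᗮ.subtypeL)

lemma continuous_compr (K : Submodule ℝ E) [K.HasOrthogonalProjection] :
    Continuous (compr K) := by
  unfold compr
  fun_prop

lemma SkewFred.isUnit_compr {T : E →L[ℝ] E} (h : SkewFred T) [FiniteDimensional ℝ (LinearMap.ker T.toLinearMap)] :
    IsUnit (compr (LinearMap.ker T.toLinearMap) T) := by
  set K := LinearMap.ker T.toLinearMap with hK
  have hr := h.range_eq
  have key : ∀ u : Kᗮ, ((compr K T u : Kᗮ) : E) = T u := by
    intro u
    have : T u ∈ Kᗮ := hr.le ⟨u, rfl⟩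
    simp only [compr, ContinuousLinearMap.comp_apply, Submodule.subtypeL_apply]
    exact Submodule.starProjection_eq_self_iff.2 this
  have hker : LinearMap.ker (compr K T).toLinearMap = ⊥ := by
    rw [LinearMap.ker_eq_bot']
    intro u hu
    have h1 : T u = 0 := by
      rw [← key u]
      have : compr K T u = 0 := hu
      rw [this]; rfl
    have h2 : (u : E) ∈ K ⊓ Kᗮ := ⟨h1, u.2⟩
    rw [Submodule.inf_orthogonal_eq_bot] at h2
    exact Subtype.ext h2
  have hran : LinearMap.range (compr K T).toLinearMap = ⊤ := by
    rw [eq_top_iff]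
    rintro w -
    have : (w : E) ∈ LinearMap.range T.toLinearMap := by rw [hr]; exact w.2
    obtain ⟨u, hu⟩ := this
    have hu' : T u = w := hu
    refine ⟨⟨u - K.starProjection u, Submodule.sub_starProjection_mem_orthogonal u⟩, ?_⟩
    apply Subtype.ext
    have := key ⟨u - K.starProjection u, Submodule.sub_starProjection_mem_orthogonal u⟩
    refine this.trans ?_
    have h0 : T (K.starProjection u) = 0 := Submodule.starProjection_apply_mem K u
    simp [h0, hu']
  let e := ContinuousLinearEquiv.ofBijective (compr K T) hker hran
  exact ⟨ContinuousLinearEquiv.toUnit e, rfl⟩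

lemma adj_index {X Y : Type*} [NormedAddCommGroup X] [InnerProductSpace ℝ X] [FiniteDimensional ℝ X]
    [NormedAddCommGroup Y] [InnerProductSpace ℝ Y] [FiniteDimensional ℝ Y] (a : X →ₗ[ℝ] Y) (b : Y →ₗ[ℝ] X)
    (hab : ∀ x y, ⟪a x, y⟫_ℝ = -⟪x, b y⟫_ℝ) :
    (Module.finrank ℝ (LinearMap.ker a) : ℤ) - Module.finrank ℝ (LinearMap.ker b)
      = Module.finrank ℝ X - Module.finrank ℝ Y := by
  have h1 := LinearMap.finrank_range_add_finrank_ker a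
  have h2 : (LinearMap.range a)ᗮ = LinearMap.ker b := by
    ext y
    rw [Submodule.mem_orthogonal, LinearMap.mem_ker]
    constructor
    · intro h
      have := h (a (b y)) ⟨_, rfl⟩
      rw [hab] at this
      simpa using this
    · rintro hy _ ⟨w, rfl⟩
      rw [hab, hy]; simp
  have h3 := Submodule.finrank_add_finrank_orthogonal (LinearMap.range a)
  rw [h2] at h3
  omega


lemma idx_local {T S P : E →L[ℝ] E} (h : SkewFred T) (hT : Odd' P T) (hS : Odd' P S)
    (hsk : ∀ u v, ⟪S u, v⟫_ℝ = -⟪u, S v⟫_ℝ)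
    [FiniteDimensional ℝ (LinearMap.ker T.toLinearMap)]
    (hu : IsUnit (compr (LinearMap.ker T.toLinearMap) S)) : idx S P = idx T P := by
  set K := LinearMap.ker T.toLinearMap with hK
  obtain ⟨D, hD⟩ := hu
  have hDl : ∀ w : Kᗮ, compr K S ((↑D⁻¹ : Kᗮ →L[ℝ] Kᗮ) w) = w := by
    intro w
    rw [← hD, ← mul_apply_eq_comp, Units.mul_inv]; rfl
  have hDr : ∀ w : Kᗮ, ((↑D⁻¹ : Kᗮ →L[ℝ] Kᗮ) (compr K S w)) = w := by
    intro w
    rw [← hD, ← mul_apply_eq_comp, Units.inv_mul]; rfl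
  have hcinj : ∀ w : Kᗮ, S w ∈ K → w = 0 := by
    intro w hw
    have : compr K S w = 0 := by
      simp only [compr, ContinuousLinearMap.comp_apply, Submodule.subtypeL_apply]
      rw [Submodule.orthogonalProjectionOnto_eq_zero_iff, Submodule.orthogonal_orthogonal]
      exact hw
    rw [← hDr w, this, map_zero]
  have hPK : ∀ u ∈ K, P u ∈ K := by
    intro u hu
    have hu' : T u = 0 := hu
    have := hT.anti u
    rw [hu', map_zero] at this
    change T (P u) = 0
    exact neg_eq_zero.1 this.symm
  have hPKo : ∀ u ∈ Kᗮ, P u ∈ Kᗮ := by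
    intro u hu
    rw [Submodule.mem_orthogonal] at hu ⊢
    intro k hk
    rw [← hT.symm]
    exact hu _ (hPK k hk)
  -- L
  let L : E →ₗ[ℝ] E := LinearMap.id - (Kᗮ.subtypeL.comp ((↑D⁻¹ : Kᗮ →L[ℝ] Kᗮ).comp
      (Kᗮ.orthogonalProjectionOnto.comp S))).toLinearMap
  have hL : ∀ u, ∃ w ∈ Kᗮ, L u = u - w ∧ S (L u) ∈ K := by
    intro u
    refine ⟨((↑D⁻¹ : Kᗮ →L[ℝ] Kᗮ) (Kᗮ.orthogonalProjectionOnto (S u))), Submodule.coe_mem _, rfl, ?_⟩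
    have h1 : L u = u - ((↑D⁻¹ : Kᗮ →L[ℝ] Kᗮ) (Kᗮ.orthogonalProjectionOnto (S u)) : Kᗮ) := rfl
    rw [h1]
    have h2 := hDl (Kᗮ.orthogonalProjectionOnto (S u))
    refine (Submodule.orthogonal_orthogonal K).le (Submodule.orthogonalProjectionOnto_eq_zero_iff.1 ?_)
    rw [map_sub, map_sub, sub_eq_zero]
    exact h2.symm
  have hLuniq : ∀ u w, w ∈ Kᗮ → S (u - w) ∈ K → L u = u - w := by
    intro u w hw hS'
    obtain ⟨w', hw', h1, h2⟩ := hL u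
    have : (⟨w - w', Submodule.sub_mem _ hw hw'⟩ : Kᗮ) = 0 := by
      apply hcinj
      have := K.sub_mem h2 hS'
      rw [h1, ← map_sub] at this
      simpa using this
    have h3 : w - w' = 0 := congrArg Subtype.val this
    rw [h1, sub_eq_zero.1 h3]
  have hLP : ∀ u, L (P u) = P (L u) := by
    intro u
    obtain ⟨w, hw, h1, h2⟩ := hL u
    rw [h1, map_sub]
    apply hLuniq _ _ (hPKo _ hw)
    rw [← map_sub, ← h1]
    have := hS.anti (L u)
    rw [← neg_neg (S (P (L u))), ← this]
    exact K.neg_mem (hPK _ h2)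
  have hkK : ∀ e, kerP T P e ≤ K := fun e u hu => hu.1
  have hfd : ∀ e, FiniteDimensional ℝ (kerP T P e) := fun e => Submodule.finiteDimensional_of_le (hkK e)
  have hmem : ∀ e : ℝ, ∀ u : kerP T P e, S (L u) ∈ kerP T P (-e) := by
    rintro e ⟨u, hu⟩
    obtain ⟨w, hw, h1, h2⟩ := hL u
    refine ⟨h2, ?_⟩
    change P (S (L u)) = _
    rw [hS.anti, ← hLP, hu.2, map_smul, map_smul, neg_smul]
  let a : ∀ e : ℝ, kerP T P e →ₗ[ℝ] kerP T P (-e) := fun e =>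
    LinearMap.codRestrict _ (S.toLinearMap ∘ₗ L ∘ₗ (kerP T P e).subtype) (hmem e)
  have ha : ∀ e u, ((a e u : kerP T P (-e)) : E) = S (L u) := fun e u => rfl
  have hinj : ∀ u ∈ K, L u = 0 → u = 0 := by
    intro u hu h0
    obtain ⟨w, hw, h1, h2⟩ := hL u
    rw [h0] at h1
    have : u = w := (sub_eq_zero.1 h1.symm)
    have h2 : u ∈ K ⊓ Kᗮ := ⟨hu, this ▸ hw⟩
    rw [Submodule.inf_orthogonal_eq_bot] at h2
    exact h2
  have hker : ∀ e : ℝ, Module.finrank ℝ (LinearMap.ker (a e)) = Module.finrank ℝ (kerP S P e) := by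
    intro e
    have hmm : ∀ u : LinearMap.ker (a e), L (u : kerP T P e) ∈ kerP S P e := by
      rintro ⟨⟨u, hu⟩, hu2⟩
      refine ⟨congrArg Subtype.val hu2, ?_⟩
      change P (L u) = _
      rw [← hLP, hu.2, map_smul]
    let g : LinearMap.ker (a e) →ₗ[ℝ] kerP S P e :=
      LinearMap.codRestrict _ (L ∘ₗ (kerP T P e).subtype ∘ₗ (LinearMap.ker (a e)).subtype) hmm
    refine LinearEquiv.finrank_eq (LinearEquiv.ofBijective g ⟨?_, ?_⟩)
    · rw [← LinearMap.ker_eq_bot, LinearMap.ker_eq_bot']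
      rintro ⟨⟨u, hu⟩, hu2⟩ h0
      have : u = 0 := hinj u hu.1 (congrArg Subtype.val h0)
      subst this; rfl
    · rintro ⟨u, hu⟩
      have hdec : L (K.starProjection u) = u := by
        have : L (K.starProjection u) = K.starProjection u - (K.starProjection u - u) := by
          apply hLuniq
          · rw [← neg_sub]
            exact Submodule.neg_mem _ (Submodule.sub_starProjection_mem_orthogonal u)
          · rw [sub_sub_cancel, hu.1]; exact K.zero_mem
        rw [this, sub_sub_cancel]
      have hPp : P (K.starProjection u) = e • K.starProjection u := by
        have h3 : K.starProjection u ∈ K := Submodule.starProjection_apply_mem K u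
        have h4 : P (K.starProjection u) - e • K.starProjection u = 0 := by
          apply hinj
          · exact K.sub_mem (hPK _ h3) (K.smul_mem _ h3)
          · rw [map_sub, hLP, map_smul, hdec, hu.2, sub_self]
        exact sub_eq_zero.1 h4
      refine ⟨⟨⟨K.starProjection u, Submodule.starProjection_apply_mem K u, hPp⟩, ?_⟩, ?_⟩
      · apply Subtype.ext
        change S (L (K.starProjection u)) = 0
        rw [hdec, hu.1]
      · apply Subtype.ext
        exact hdec
  let b : kerP T P (-1) →ₗ[ℝ] kerP T P 1 := LinearMap.codRestrict _ (S.toLinearMap ∘ₗ L ∘ₗ (kerP T P (-1)).subtype)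
    (fun u => by have := hmem (-1) u; rwa [neg_neg] at this)
  have hb : LinearMap.ker b = LinearMap.ker (a (-1)) := by
    ext u
    simp only [LinearMap.mem_ker, Subtype.ext_iff]
    rfl
  have := adj_index (a 1) b (by
    rintro ⟨x, hx⟩ ⟨y, hy⟩
    change ⟪S (L x), y⟫_ℝ = - ⟪x, S (L y)⟫_ℝ
    obtain ⟨w, hw, h1, h2⟩ := hL x
    obtain ⟨w', hw', h1', h2'⟩ := hL y
    have e1 : ⟪S (L x), y⟫_ℝ = ⟪S (L x), L y⟫_ℝ := by
      rw [h1', inner_sub_right, (Submodule.mem_orthogonal _ _).1 hw' _ h2, sub_zero]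
    have e2 : ⟪x, S (L y)⟫_ℝ = ⟪L x, S (L y)⟫_ℝ := by
      rw [h1, inner_sub_left, real_inner_comm (S (L y)) w, (Submodule.mem_orthogonal _ _).1 hw _ h2', sub_zero]
    rw [e1, e2, hsk])
  rw [hb, hker, hker] at this
  exact this

lemma isOpen_units_clm (E : Type*) [NormedAddCommGroup E] [NormedSpace ℝ E] [CompleteSpace E] :
    IsOpen {x : E →L[ℝ] E | IsUnit x} := Units.isOpen (R := E →L[ℝ] E)

lemma idx_const {P : E →L[ℝ] E} (T : ℝ → E →L[ℝ] E) (hc : Continuous T) (h : ∀ s, SkewFred (T s))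
    (ho : ∀ s, Odd' P (T s)) : idx (T 0) P = idx (T 1) P := by
  have hl : IsLocallyConstant (fun s => idx (T s) P) := by
    rw [IsLocallyConstant.iff_eventually_eq]
    intro s
    have := (h s).finite_ker
    have h1 : IsUnit (compr (LinearMap.ker (T s).toLinearMap) (T s)) := (h s).isUnit_compr
    have h0 : IsOpen {x : (LinearMap.ker (T s).toLinearMap)ᗮ →L[ℝ] (LinearMap.ker (T s).toLinearMap)ᗮ | IsUnit x} :=
      isOpen_units_clm _
    have h2 : {S | IsUnit (compr (LinearMap.ker (T s).toLinearMap) S)} ∈ nhds (T s) :=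
      ContinuousAt.preimage_mem_nhds (t := {x | IsUnit x})
        (continuous_compr (LinearMap.ker (T s).toLinearMap)).continuousAt (h0.mem_nhds h1)
    filter_upwards [hc.continuousAt h2] with t ht
    exact idx_local (h s) (ho s) (ho t) (h t).skew ht
  exact hl.apply_eq_of_isPreconnected isPreconnected_univ (Set.mem_univ _) (Set.mem_univ _)

end FA

section divis

lemma two_dvd_of_J {V : Type*} [AddCommGroup V] [Module ℝ V] [FiniteDimensional ℝ V] (J : V →ₗ[ℝ] V)
    (h : ∀ v, J (J v) = -v) : 2 ∣ Module.finrank ℝ V := by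
  have h1 : J * J = (-1 : ℝ) • (1 : V →ₗ[ℝ] V) := by
    ext v; simp [h]
  have h2 := congrArg LinearMap.det h1
  rw [map_mul, LinearMap.det_smul, map_one, mul_one] at h2
  rw [← even_iff_two_dvd]
  by_contra hodd
  rw [Nat.not_even_iff_odd] at hodd
  rw [hodd.neg_one_pow] at h2
  nlinarith [mul_self_nonneg (LinearMap.det J)]

lemma four_dvd_of_J {V : Type*} [AddCommGroup V] [Module ℝ V] [FiniteDimensional ℝ V] (J K : V →ₗ[ℝ] V)
    (hJ : ∀ v, J (J v) = -v) (hK : ∀ v, K (K v) = -v) (hJK : ∀ v, J (K v) = - K (J v)) :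
    4 ∣ Module.finrank ℝ V := by
  let q : QuaternionAlgebra.Basis (Module.End ℝ V) (-1 : ℝ) 0 (-1) :=
    { i := J, j := K, k := J * K
      i_mul_i := by ext v; simp [hJ]
      j_mul_j := by ext v; simp [hK]
      i_mul_j := rfl
      j_mul_i := by ext v; simp [hJK] }
  let φ := QuaternionAlgebra.lift q
  let _ : Module (Quaternion ℝ) V := Module.compHom V φ.toRingHom
  have : IsScalarTower ℝ (Quaternion ℝ) V := ⟨fun r x v => by
    have := congrArg (fun g : Module.End ℝ V => g v) (map_smul φ r x)
    exact this⟩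
  have := Module.finrank_mul_finrank ℝ (Quaternion ℝ) V
  rw [Quaternion.finrank_eq_four] at this
  exact ⟨_, this.symm⟩

end divis

section Fock1
set_option linter.all false
open scoped InnerProductSpace

abbrev Hl (A V : Type*) [NormedAddCommGroup V] := lp (fun _ : A => V) 2

variable {A V : Type*} [NormedAddCommGroup V] [InnerProductSpace ℝ V]

lemma Hl.summable_sq (u : Hl A V) : Summable fun a => ‖u a‖ ^ 2 := by
  have := (memℓp_gen_iff (p := 2) (by norm_num)).1 (lp.memℓp u)
  simpa using this

lemma Hl.norm_sq (u : Hl A V) : ‖u‖ ^ 2 = ∑' a, ‖u a‖ ^ 2 := by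
  rw [← real_inner_self_eq_norm_sq, lp.inner_eq_tsum]
  simp

lemma Hl.mem_of_sq {f : A → V} (h : Summable fun a => ‖f a‖ ^ 2) : Memℓp f 2 := by
  apply memℓp_gen
  simpa using h

lemma wop_summable (σ : A → A) (hσ : Function.Injective σ) (B : A → V →L[ℝ] V) (C : ℝ)
    (hB : ∀ a, ‖B a‖ ≤ C) (u : Hl A V) : Summable fun a => ‖B a (u (σ a))‖ ^ 2 := by
  have h1 : Summable fun a => C ^ 2 * ‖u (σ a)‖ ^ 2 := ((Hl.summable_sq u).comp_injective hσ).mul_left _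
  refine Summable.of_nonneg_of_le (fun a => by positivity) (fun a => ?_) h1
  rw [← mul_pow]
  gcongr
  exact (B a).le_of_opNorm_le (hB a) _

noncomputable def wop (σ : A → A) (hσ : Function.Injective σ) (B : A → V →L[ℝ] V) (C : ℝ)
    (hB : ∀ a, ‖B a‖ ≤ C) : Hl A V →L[ℝ] Hl A V :=
  LinearMap.mkContinuous
    { toFun := fun u => ⟨fun a => B a (u (σ a)), Hl.mem_of_sq (wop_summable σ hσ B C hB u)⟩
      map_add' := fun u v => by ext a; simp; rfl
      map_smul' := fun c u => by ext a; simp } |C| (by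
    intro u
    apply le_of_sq_le_sq _ (by positivity)
    rw [mul_pow, Hl.norm_sq, Hl.norm_sq, sq_abs]
    have h2 := (Hl.summable_sq u).comp_injective hσ
    calc ∑' a, ‖B a (u (σ a))‖ ^ 2 ≤ ∑' a, C ^ 2 * ‖u (σ a)‖ ^ 2 := by
          refine Summable.tsum_le_tsum (fun a => ?_) (wop_summable σ hσ B C hB u) (h2.mul_left _)
          rw [← mul_pow]
          gcongr
          exact (B a).le_of_opNorm_le (hB a) _
      _ = C ^ 2 * ∑' a, ‖u (σ a)‖ ^ 2 := tsum_mul_left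
      _ ≤ C ^ 2 * ∑' a, ‖u a‖ ^ 2 := by
          refine mul_le_mul_of_nonneg_left ?_ (by positivity)
          exact Summable.tsum_le_tsum_of_inj σ hσ (fun _ _ => by positivity) (fun _ => le_rfl) h2
            (Hl.summable_sq u))

@[simp] lemma wop_apply (σ : A → A) (hσ : Function.Injective σ) (B : A → V →L[ℝ] V) (C : ℝ)
    (hB : ∀ a, ‖B a‖ ≤ C) (u : Hl A V) (a : A) : (wop σ hσ B C hB u) a = B a (u (σ a)) := rfl

/-- pointwise operator -/
noncomputable def Dop (A : Type*) (B : V →L[ℝ] V) : Hl A V →L[ℝ] Hl A V :=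
  wop id Function.injective_id (fun _ => B) ‖B‖ (fun _ => le_rfl)

@[simp] lemma Dop_apply (B : V →L[ℝ] V) (u : Hl A V) (a : A) : (Dop A B u) a = B (u a) := rfl

variable {ι : Type*} [Fintype ι] [DecidableEq ι]

abbrev up (i : ι) (α : ι → ℕ) : ι → ℕ := α + Pi.single i 1
abbrev dn (i : ι) (α : ι → ℕ) : ι → ℕ := α - Pi.single i 1

def dg (α : ι → ℕ) : ℕ := ∑ i, α i

omit [Fintype ι] in
lemma up_inj (i : ι) : Function.Injective (up (ι := ι) i) := add_left_injective _

omit [Fintype ι] in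
@[simp] lemma dn_up (i : ι) (α : ι → ℕ) : dn i (up i α) = α := by simp [up, dn]

omit [Fintype ι] in
lemma up_dn (i : ι) (α : ι → ℕ) (h : α i ≠ 0) : up i (dn i α) = α := by
  ext j
  by_cases hj : j = i
  · subst hj; simp [up, dn]; omega
  · simp [up, dn, hj]

@[simp] lemma dg_up (i : ι) (α : ι → ℕ) : dg (up i α) = dg α + 1 := by
  simp [dg, up, Finset.sum_add_distrib]

omit [Fintype ι] in
@[simp] lemma up_self (i : ι) (α : ι → ℕ) : up i α i = α i + 1 := by simp [up]
omit [Fintype ι] in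
@[simp] lemma dn_self (i : ι) (α : ι → ℕ) : dn i α i = α i - 1 := by simp [dn]
omit [Fintype ι] in
lemma up_ne {i j : ι} (h : j ≠ i) (α : ι → ℕ) : up i α j = α j := by simp [up, h]
omit [Fintype ι] in
lemma dn_ne {i j : ι} (h : j ≠ i) (α : ι → ℕ) : dn i α j = α j := by simp [dn, h]

omit [DecidableEq ι] in
lemma le_dg (α : ι → ℕ) (i : ι) : α i ≤ dg α := Finset.single_le_sum (fun _ _ => Nat.zero_le _) (Finset.mem_univ i)

lemma dg_dn (i : ι) (α : ι → ℕ) (h : α i ≠ 0) : dg (dn i α) + 1 = dg α := by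
  rw [← dg_up i, up_dn i α h]

omit [Fintype ι] in
/-- shift of summation -/
lemma tsum_shift {M : Type*} [AddCommMonoid M] [TopologicalSpace M] (i : ι) (f : (ι → ℕ) → M)
    (h : ∀ α, α i = 0 → f α = 0) : ∑' α, f (up i α) = ∑' α, f α := by
  refine (up_inj i).tsum_eq ?_
  intro α hα
  refine ⟨dn i α, up_dn i α ?_⟩
  intro h0
  exact hα (h α h0)

noncomputable def cc (i : ι) (α : ι → ℕ) : ℝ := √((α i + 1) / (dg α + 1))

noncomputable def aop (V : Type*) [NormedAddCommGroup V] [InnerProductSpace ℝ V] (i : ι) : Hl (ι → ℕ) V →L[ℝ] Hl (ι → ℕ) V :=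
  wop (up i) (up_inj i) (fun α => cc i α • ContinuousLinearMap.id ℝ V) 1 (by
    intro α
    rw [norm_smul]
    have h1 : ‖cc i α‖ ≤ 1 := by
      rw [cc, Real.norm_of_nonneg (Real.sqrt_nonneg _), Real.sqrt_le_one]
      rw [div_le_one (by positivity)]
      have := le_dg α i
      gcongr
    calc _ ≤ (1 : ℝ) * 1 := by
          gcongr
          exact ContinuousLinearMap.norm_id_le
      _ = 1 := one_mul 1)

@[simp] lemma aop_apply (i : ι) (u : Hl (ι → ℕ) V) (α : ι → ℕ) : aop V i u α = cc i α • u (up i α) := rfl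

noncomputable def Pop (ι V : Type*) [Fintype ι] [NormedAddCommGroup V] [InnerProductSpace ℝ V] : Hl (ι → ℕ) V →L[ℝ] Hl (ι → ℕ) V :=
  wop id Function.injective_id (fun α => ((-1 : ℝ) ^ dg α) • ContinuousLinearMap.id ℝ V) 1 (by
    intro α
    rw [norm_smul]
    simpa using ContinuousLinearMap.norm_id_le)

omit [DecidableEq ι] in
@[simp] lemma Pop_apply (u : Hl (ι → ℕ) V) (α : ι → ℕ) : Pop ι V u α = ((-1 : ℝ) ^ dg α) • u α := rfl

variable [CompleteSpace V]

noncomputable def Fop (Z : ι → V →L[ℝ] V) : Hl (ι → ℕ) V →L[ℝ] Hl (ι → ℕ) V :=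
  ∑ i, (Dop _ (Z i) ∘L aop V i - ContinuousLinearMap.adjoint (Dop _ (Z i) ∘L aop V i))

lemma Fop_skew (Z : ι → V →L[ℝ] V) (u v : Hl (ι → ℕ) V) : ⟪Fop Z u, v⟫_ℝ = -⟪u, Fop Z v⟫_ℝ := by
  simp only [Fop, _root_.sum_apply, _root_.sub_apply, sum_inner, inner_sum,
    inner_sub_left, inner_sub_right, ContinuousLinearMap.adjoint_inner_left,
    ContinuousLinearMap.adjoint_inner_right, ← Finset.sum_neg_distrib, neg_sub]

lemma adj_formula (Z : V →L[ℝ] V) (i : ι) (u : Hl (ι → ℕ) V) (β : ι → ℕ) :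
    (ContinuousLinearMap.adjoint (Dop _ Z ∘L aop V i) u) β =
      √(β i / dg β) • ContinuousLinearMap.adjoint Z (u (dn i β)) := by
  classical
  refine ext_inner_right ℝ (fun v => ?_)
  have h1 := ContinuousLinearMap.adjoint_inner_left (Dop _ Z ∘L aop V i) (lp.single 2 β v) u
  rw [lp.inner_single_right] at h1
  rw [h1, lp.inner_eq_tsum, inner_smul_left, ContinuousLinearMap.adjoint_inner_left]
  have h2 : ∀ α, ⟪u α, (Dop _ Z ∘L aop V i) (lp.single 2 β v) α⟫_ℝ =
    (fun γ : ι → ℕ => √(γ i / dg γ) * ⟪u (dn i γ), Z ((lp.single 2 β v : Hl (ι → ℕ) V) γ)⟫_ℝ) (up i α) := by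
    intro α
    simp only [ContinuousLinearMap.comp_apply, Dop_apply, aop_apply, map_smul, inner_smul_right, dn_up,
      dg_up, up_self, cc]
    push_cast; rfl
  rw [tsum_congr h2, tsum_shift i (fun γ : ι → ℕ => √(γ i / dg γ) * ⟪u (dn i γ), Z ((lp.single 2 β v : Hl (ι → ℕ) V) γ)⟫_ℝ)]
  · rw [tsum_eq_single β]
    · simp
    · intro γ hγ
      rw [lp.single_apply_ne _ _ _ hγ]; simp
  · intro α h; simp [h]

lemma Fop_apply (Z : ι → V →L[ℝ] V) (u : Hl (ι → ℕ) V) (β : ι → ℕ) :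
    Fop Z u β = ∑ i, (√((β i + 1) / (dg β + 1)) • Z i (u (up i β))
      - √(β i / dg β) • ContinuousLinearMap.adjoint (Z i) (u (dn i β))) := by
  simp only [Fop, _root_.sum_apply, _root_.sub_apply]
  rw [lp.coeFn_sum, Finset.sum_apply]
  refine Finset.sum_congr rfl fun i _ => ?_
  rw [lp.coeFn_sub, Pi.sub_apply, adj_formula]
  simp [cc]

lemma Fop_odd (Z : ι → V →L[ℝ] V) : Odd' (Pop ι V) (Fop Z) where
  symm u v := by
    simp [lp.inner_eq_tsum, inner_smul_left, inner_smul_right]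
  sq u := by
    ext α
    simp [smul_smul, ← mul_pow]
  anti u := by
    ext β
    rw [Pop_apply, lp.coeFn_neg, Pi.neg_apply, Fop_apply, Fop_apply, Finset.smul_sum, ← Finset.sum_neg_distrib]
    refine Finset.sum_congr rfl fun i _ => ?_
    rw [Pop_apply, Pop_apply, dg_up]
    by_cases h : β i = 0
    · simp only [h, smul_sub, map_smul, pow_succ]
      simp [smul_smul, mul_comm]
    · have := dg_dn i β h
      rw [← this]
      simp only [smul_sub, map_smul, pow_succ, smul_smul]
      simp [mul_comm]
      abel

end Fock1

section Fock2
set_option linter.all false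
open scoped InnerProductSpace

variable {V : Type*} [NormedAddCommGroup V] [InnerProductSpace ℝ V]
variable {ι : Type*} [DecidableEq ι]

abbrev FF (ι V : Type*) := (ι → ℕ) → V

noncomputable def fa (V : Type*) [NormedAddCommGroup V] [InnerProductSpace ℝ V] (i : ι) : Module.End ℝ (FF ι V) where
  toFun v := fun β => √(β i + 1 : ℝ) • v (up i β)
  map_add' u v := by ext β; simp
  map_smul' c v := by ext β; simp [smul_comm c]

noncomputable def fad (V : Type*) [NormedAddCommGroup V] [InnerProductSpace ℝ V] (i : ι) : Module.End ℝ (FF ι V) where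
  toFun v := fun β => √(β i : ℝ) • v (dn i β)
  map_add' u v := by ext β; simp
  map_smul' c v := by ext β; simp [smul_comm c]

noncomputable def fD (ι : Type*) (B : V →L[ℝ] V) : Module.End ℝ (FF ι V) where
  toFun v := fun β => B (v β)
  map_add' u v := by ext β; simp
  map_smul' c v := by ext β; simp

lemma fa_apply (i : ι) (v : FF ι V) (β) : fa V i v β = √(β i + 1 : ℝ) • v (up i β) := rfl
lemma fad_apply (i : ι) (v : FF ι V) (β) : fad V i v β = √(β i : ℝ) • v (dn i β) := rfl
lemma fD_apply (B : V →L[ℝ] V) (v : FF ι V) (β) : fD ι B v β = B (v β) := rfl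

lemma up_up (i j : ι) (β : ι → ℕ) : up i (up j β) = up j (up i β) := by
  simp only [up]; rw [add_right_comm]
lemma dn_dn (i j : ι) (β : ι → ℕ) : dn i (dn j β) = dn j (dn i β) := by
  ext k; simp only [dn, Pi.sub_apply]; omega
lemma up_dn' {i j : ι} (h : i ≠ j) (β : ι → ℕ) : up i (dn j β) = dn j (up i β) := by
  ext k
  by_cases hk : k = i
  · subst hk; simp [up, dn, h]
  · simp [up, dn, hk]

lemma fa_fa (i j : ι) : fa V i * fa V j = fa V j * fa V i := by
  by_cases h : i = j
  · rw [h]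
  ext v β
  simp only [Module.End.mul_apply, fa_apply, up_ne h, up_ne (Ne.symm h), up_up i j, smul_smul]
  rw [mul_comm]

lemma fad_fad (i j : ι) : fad V i * fad V j = fad V j * fad V i := by
  by_cases h : i = j
  · rw [h]
  ext v β
  simp only [Module.End.mul_apply, fad_apply, dn_ne h, dn_ne (Ne.symm h), dn_dn i j, smul_smul]
  rw [mul_comm]

lemma fa_fad {i j : ι} (h : i ≠ j) : fa V i * fad V j = fad V j * fa V i := by
  ext v β
  simp only [Module.End.mul_apply, fa_apply, fad_apply, dn_ne h, up_ne h.symm, up_dn' h, smul_smul]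
  rw [mul_comm]

lemma fa_fad_apply (i : ι) (v : FF ι V) (β) : fa V i (fad V i v) β = (β i + 1 : ℝ) • v β := by
  rw [fa_apply, fad_apply, dn_up, up_self, smul_smul]
  push_cast
  rw [Real.mul_self_sqrt (by positivity)]

lemma fad_fa_apply (i : ι) (v : FF ι V) (β) : fad V i (fa V i v) β = (β i : ℝ) • v β := by
  rw [fad_apply, fa_apply]
  by_cases h : β i = 0
  · simp [h]
  · rw [up_dn i β h, dn_self, smul_smul]
    have : ((β i - 1 : ℕ) : ℝ) + 1 = β i := by
      have : 1 ≤ β i := by omega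
      push_cast [this]; ring
    rw [this, Real.mul_self_sqrt (by positivity)]

lemma fa_fad_self (i : ι) : fa V i * fad V i = fad V i * fa V i + 1 := by
  ext v β
  simp only [Module.End.mul_apply, fa_fad_apply, LinearMap.add_apply, Pi.add_apply, fad_fa_apply, Module.End.one_apply]
  rw [add_smul, one_smul]

noncomputable def fx (V : Type*) [NormedAddCommGroup V] [InnerProductSpace ℝ V] (i : ι) : Module.End ℝ (FF ι V) := fa V i + fad V i
noncomputable def fd (V : Type*) [NormedAddCommGroup V] [InnerProductSpace ℝ V] (i : ι) : Module.End ℝ (FF ι V) := fa V i - fad V i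

lemma fx_fx (i j : ι) : fx V i * fx V j = fx V j * fx V i := by
  by_cases h : i = j
  · rw [h]
  have h1 := fa_fa (V := V) i j
  have h2 := fad_fad (V := V) i j
  have h3 := fa_fad (V := V) h
  have h4 := fa_fad (V := V) (Ne.symm h)
  simp only [fx, mul_add, add_mul, h1, h2, h3, h4]; abel

lemma fd_fd (i j : ι) : fd V i * fd V j = fd V j * fd V i := by
  by_cases h : i = j
  · rw [h]
  have h1 := fa_fa (V := V) i j
  have h2 := fad_fad (V := V) i j
  have h3 := fa_fad (V := V) h
  have h4 := fa_fad (V := V) (Ne.symm h)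
  simp only [fd, mul_sub, sub_mul, h1, h2, h3, h4]; abel

lemma fd_fx {i j : ι} (h : i ≠ j) : fd V i * fx V j = fx V j * fd V i := by
  have h1 := fa_fa (V := V) i j
  have h2 := fad_fad (V := V) i j
  have h3 := fa_fad (V := V) h
  have h4 := fa_fad (V := V) (Ne.symm h)
  simp only [fd, fx, mul_sub, sub_mul, add_mul, mul_add, h1, h2, h3, h4]; abel

lemma fd_fx_self (i : ι) : fd V i * fx V i = fx V i * fd V i + 2 := by
  have h3 := fa_fad_self (V := V) i
  simp only [fd, fx, mul_sub, sub_mul, add_mul, mul_add, h3]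
  rw [← one_add_one_eq_two]; abel

lemma ring_r0 {R : Type*} [Ring R] (a b c : R) : a - b - (b + 1 - c) - (a + b + (b + 1 + c)) = -(4 * b + 2) := by
  have h4 : (4 : R) * b = b + b + b + b := by
    rw [show (4 : R) = 1 + 1 + 1 + 1 by norm_num]; noncomm_ring
  rw [h4, ← one_add_one_eq_two]; abel
lemma ring_r1 {R : Type*} [Ring R] (p q r s w : R) : p + (-q) * w + (r + s) = p + s - q * w + r := by
  rw [neg_mul]; abel
lemma ring_r2 {R : Type*} [Ring R] (x d t k : R) : (-1) * x + 1 * d - t * k + t * (k + 2) = d - x + t * 2 := by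
  rw [neg_mul, one_mul, one_mul, mul_add]; abel
lemma ring_r3 {R : Type*} [Ring R] (a b c d e f : R) : -a * b + -c * d - e + f + (a * b + c * d - f + e) = 0 := by
  rw [neg_mul, neg_mul]; abel

lemma fd_sq (i : ι) : fd V i * fd V i - fx V i * fx V i = -(4 * (fad V i * fa V i) + 2) := by
  have h3 := fa_fad_self (V := V) i
  simp only [fd, fx, mul_sub, sub_mul, add_mul, mul_add, h3]
  exact ring_r0 _ _ _

lemma fD_mul (B C : V →L[ℝ] V) : fD ι (B * C) = fD ι B * fD ι C := rfl
lemma fD_add (B C : V →L[ℝ] V) : fD ι (B + C) = fD ι B + fD ι C := rfl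
lemma fD_neg (B : V →L[ℝ] V) : fD ι (-B) = -fD ι B := rfl
lemma fD_one : fD ι (1 : V →L[ℝ] V) = 1 := rfl

lemma fD_fa (B : V →L[ℝ] V) (i : ι) : fa V i * fD ι B = fD ι B * fa V i := by
  ext v β; simp [fD_apply, fa_apply]
lemma fD_fad (B : V →L[ℝ] V) (i : ι) : fad V i * fD ι B = fD ι B * fad V i := by
  ext v β; simp [fD_apply, fad_apply]
lemma fD_fx (B : V →L[ℝ] V) (i : ι) : Commute (fx V i) (fD ι B) := by
  unfold Commute SemiconjBy fx; rw [mul_add, add_mul, fD_fa, fD_fad]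
lemma fD_fd (B : V →L[ℝ] V) (i : ι) : Commute (fd V i) (fD ι B) := by
  unfold Commute SemiconjBy fd; rw [mul_sub, sub_mul, fD_fa, fD_fad]

variable [Fintype ι] [CompleteSpace V]

structure Ell (X Y : ι → V →L[ℝ] V) : Prop where
  Xs : ∀ i, ContinuousLinearMap.adjoint (X i) = -X i
  Ys : ∀ i, ContinuousLinearMap.adjoint (Y i) = Y i
  XY : ∀ i j, X i * Y j = -(Y j * X i)
  YY1 : ∀ i, Y i * Y i = 1
  YY : ∀ i j, i ≠ j → Y i * Y j = -(Y j * Y i)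
  inj : ∀ x : ι → ℝ, x ≠ 0 → ∀ v, ∑ i, x i • X i v = 0 → v = 0

noncomputable def Aop (X Y : ι → V →L[ℝ] V) : Module.End ℝ (FF ι V) :=
  ∑ i, (fD ι (X i) * fx V i + fD ι (Y i) * fd V i)

lemma Aop_eq (X Y : ι → V →L[ℝ] V) (v : FF ι V) (β) : Aop X Y v β =
    ∑ i, (√(β i + 1 : ℝ) • (X i + Y i) (v (up i β)) + √(β i : ℝ) • (X i - Y i) (v (dn i β))) := by
  simp only [Aop, LinearMap.sum_apply, Finset.sum_apply]
  refine Finset.sum_congr rfl fun i _ => ?_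
  simp only [LinearMap.add_apply, Module.End.mul_apply, Pi.add_apply, fD_apply, fx, fd, LinearMap.sub_apply, Pi.sub_apply,
    fa_apply, fad_apply, map_add, map_sub, map_smul, smul_add, smul_sub]
  simp only [_root_.add_apply, _root_.sub_apply, smul_add, smul_sub]
  abel

lemma sum_symm {M : Type*} [AddCommGroup M] (g : ι → ι → M) (h : ι → M)
    (hd : ∀ i, g i i = h i) (ho : ∀ i j, i ≠ j → g i j + g j i = 0) (h2 : ∀ x : M, x + x = 0 → x = 0) :
    ∑ i, ∑ j, g i j = ∑ i, h i := by
  have key : ∑ i, ∑ j, (g i j + g j i) = ∑ i, (h i + h i) := by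
    refine Finset.sum_congr rfl fun i _ => ?_
    rw [Finset.sum_eq_single i]
    · rw [hd]
    · intro j _ hj
      exact ho i j (Ne.symm hj)
    · simp
  have k2 : ∑ i, ∑ j, (g i j + g j i) = (∑ i, ∑ j, g i j) + ∑ i, ∑ j, g i j := by
    simp only [Finset.sum_add_distrib]
    congr 1
    rw [Finset.sum_comm]
  rw [k2, Finset.sum_add_distrib] at key
  rw [← sub_eq_zero]
  apply h2
  rw [sub_add_sub_comm, key, sub_self]

lemma Aop_sq {X Y : ι → V →L[ℝ] V} (h : Ell X Y) (h1 : ∀ i, X i * X i = -1)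
    (h2 : ∀ i j, i ≠ j → X i * X j = -(X j * X i)) :
    Aop X Y * Aop X Y = ∑ i, (-(4 * (fad V i * fa V i) + 2) + fD ι (Y i * X i) * 2) := by
  unfold Aop
  rw [Finset.sum_mul_sum]
  have e1 : ∀ i j, (fD ι (X i) * fx V i + fD ι (Y i) * fd V i) * (fD ι (X j) * fx V j + fD ι (Y j) * fd V j)
      = fD ι (X i * X j) * (fx V i * fx V j) + fD ι (Y i * Y j) * (fd V i * fd V j)
        - fD ι (Y j * X i) * (fx V i * fd V j) + fD ι (Y i * X j) * (fd V i * fx V j) := by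
    intro i j
    rw [add_mul, mul_add, mul_add, (fD_fx (X j) i).mul_mul_mul_comm, (fD_fx (Y j) i).mul_mul_mul_comm,
      (fD_fd (X j) i).mul_mul_mul_comm, (fD_fd (Y j) i).mul_mul_mul_comm]
    simp only [← fD_mul]
    rw [h.XY i j, fD_neg]
    exact ring_r1 _ _ _ _ _
  refine sum_symm _ _ ?_ ?_ ?_
  · intro i
    rw [e1, h1, h.YY1, fd_fx_self, fD_neg, fD_one, ← fd_sq]
    exact ring_r2 _ _ _ _
  · intro i j hij
    rw [e1, e1, h2 i j hij, h.YY i j hij, fd_fx hij, fd_fx hij.symm, fx_fx i j, fd_fd i j, fD_neg, fD_neg]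
    exact ring_r3 _ _ _ _ _ _
  · intro x hx
    rw [← two_smul ℝ] at hx
    exact (smul_eq_zero.1 hx).resolve_left two_ne_zero

noncomputable def ww : ℕ → ℝ
  | 0 => 1
  | d + 1 => 1 / (√(d + 1) * ww d)

lemma ww_pos : ∀ d, 0 < ww d
  | 0 => by simp [ww]
  | d + 1 => by have := ww_pos d; simp only [ww]; positivity

lemma ww_succ (d : ℕ) : ww (d + 1) = (ww d)⁻¹ * (√(d + 1))⁻¹ := by
  rw [ww, one_div, mul_inv, mul_comm]

lemma ell_adj {X Y : ι → V →L[ℝ] V} (h : Ell X Y) (i : ι) :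
    ContinuousLinearMap.adjoint (X i + Y i) = -(X i - Y i) := by
  rw [map_add, h.Xs, h.Ys]; abel

lemma Fop_Aop {X Y : ι → V →L[ℝ] V} (h : Ell X Y) (u : Hl (ι → ℕ) V) (β : ι → ℕ) :
    Aop X Y (fun α => ww (dg α) • u α) β = (ww (dg β))⁻¹ • Fop (fun i => X i + Y i) u β := by
  rw [Aop_eq, Fop_apply, Finset.smul_sum]
  refine Finset.sum_congr rfl fun i _ => ?_
  rw [ell_adj h]
  simp only [dg_up, map_smul, smul_smul, _root_.neg_apply, smul_neg, sub_neg_eq_add, smul_add]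
  congr 2
  · rw [ww_succ, Real.sqrt_div (by positivity)]
    field_simp
  · by_cases hb : β i = 0
    · simp [hb]
    · have := dg_dn i β hb
      rw [← this, ww_succ, Real.sqrt_div (by positivity)]
      have := ww_pos (dg (dn i β))
      push_cast
      field_simp

lemma tau_norm {V : Type*} [NormedAddCommGroup V] [InnerProductSpace ℝ V] [CompleteSpace V] {X Y : ι → V →L[ℝ] V} (h : Ell X Y) (h1 : ∀ i, X i * X i = -1) (i : ι) (x : V) :
    ‖x - Y i (X i x)‖ ^ 2 = 2 * (‖x‖ ^ 2 - ⟪x, Y i (X i x)⟫_ℝ) := by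
  have hYY : ∀ x, Y i (Y i x) = x := fun x => DFunLike.congr_fun (h.YY1 i) x
  have hXX : ∀ x, X i (X i x) = -x := fun x => DFunLike.congr_fun (h1 i) x
  have : ‖Y i (X i x)‖ ^ 2 = ‖x‖ ^ 2 := by
    rw [← real_inner_self_eq_norm_sq, ← ContinuousLinearMap.adjoint_inner_right, h.Ys, hYY,
      ← ContinuousLinearMap.adjoint_inner_right, h.Xs, _root_.neg_apply, hXX, neg_neg, real_inner_self_eq_norm_sq]
  rw [norm_sub_sq_real, this]; ring

lemma ker_cliff {X Y : ι → V →L[ℝ] V} (h : Ell X Y) (h1 : ∀ i, X i * X i = -1)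
    (h2 : ∀ i j, i ≠ j → X i * X j = -(X j * X i)) (u : Hl (ι → ℕ) V) :
    Fop (fun i => X i + Y i) u = 0 ↔ (∀ β, β ≠ 0 → u β = 0) ∧ ∀ i, Y i (X i (u 0)) = u 0 := by
  have hYY : ∀ i x, Y i (Y i x) = x := fun i x => DFunLike.congr_fun (h.YY1 i) x
  constructor
  · intro h0
    set v : FF ι V := fun α => ww (dg α) • u α with hv
    have hA : Aop X Y v = 0 := by
      ext β
      rw [hv, Fop_Aop h, h0]; simp
    have hA2 : (Aop X Y * Aop X Y) v = 0 := by rw [Module.End.mul_apply, hA, map_zero]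
    rw [Aop_sq h h1 h2] at hA2
    have hB : ∀ β, ∑ i, (-(4 * (β i : ℝ) + 2) • v β + (2 : ℝ) • Y i (X i (v β))) = 0 := by
      intro β
      have := congrFun hA2 β
      rw [LinearMap.sum_apply, Finset.sum_apply] at this
      rw [Pi.zero_apply] at this
      rw [← this]
      refine Finset.sum_congr rfl fun i _ => ?_
      have e4 : (4 : Module.End ℝ (FF ι V)) = (4 : ℝ) • 1 := by
        ext x b
        simp [Module.End.ofNat_apply, ← Nat.cast_smul_eq_nsmul ℝ]
      have e2 : (2 : Module.End ℝ (FF ι V)) = (2 : ℝ) • 1 := by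
        ext x b
        simp [Module.End.ofNat_apply, ← Nat.cast_smul_eq_nsmul ℝ]
      rw [e4, e2]
      simp only [LinearMap.add_apply, LinearMap.neg_apply, Pi.add_apply, Pi.neg_apply, smul_mul_assoc, one_mul,
        mul_smul_comm, mul_one, LinearMap.smul_apply, Pi.smul_apply, Module.End.mul_apply, fad_fa_apply,
        Module.End.one_apply, fD_apply, mul_apply_eq_comp, ContinuousLinearMap.comp_apply]
      rw [neg_smul, add_smul, mul_smul]
    have hC : ∀ β, (4 * dg β : ℝ) * ‖v β‖ ^ 2 + ∑ i, ‖v β - Y i (X i (v β))‖ ^ 2 = 0 := by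
      intro β
      have := congrArg (fun z => ⟪v β, z⟫_ℝ) (hB β)
      simp only [inner_sum, inner_zero_right, inner_add_right, inner_smul_right, real_inner_self_eq_norm_sq] at this
      simp only [tau_norm h h1]
      rw [dg, Nat.cast_sum, Finset.mul_sum, Finset.sum_mul, ← Finset.sum_add_distrib, ← neg_eq_zero,
        ← Finset.sum_neg_distrib, ← this]
      refine Finset.sum_congr rfl fun i _ => ?_
      ring
    have hD : ∀ β, (4 * dg β : ℝ) * ‖v β‖ ^ 2 = 0 ∧ ∑ i, ‖v β - Y i (X i (v β))‖ ^ 2 = 0 := by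
      intro β
      have p1 : 0 ≤ (4 * dg β : ℝ) * ‖v β‖ ^ 2 := by positivity
      have p2 : 0 ≤ ∑ i, ‖v β - Y i (X i (v β))‖ ^ 2 := by positivity
      have := hC β
      constructor <;> linarith
    constructor
    · intro β hβ
      have h3 := (hD β).1
      have hd : dg β ≠ 0 := by
        intro hd
        apply hβ
        ext i
        have := le_dg β i
        simp only [Pi.zero_apply]; omega
      have h4 : v β = 0 := by
        simpa [hd] using h3
      have := ww_pos (dg β)
      rw [hv] at h4
      simpa [this.ne'] using h4
    · intro i
      have h3 := (hD 0).2
      rw [Finset.sum_eq_zero_iff_of_nonneg (fun _ _ => by positivity)] at h3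
      have h4 := h3 i (Finset.mem_univ i)
      have hv0 : v 0 = u 0 := by simp [hv, dg, ww]
      rw [hv0] at h4
      have h5 : u 0 - Y i (X i (u 0)) = 0 := by simpa using h4
      exact (sub_eq_zero.1 h5).symm
  · rintro ⟨h3, h4⟩
    ext β
    rw [Fop_apply]
    refine Finset.sum_eq_zero fun i _ => ?_
    rw [h3 (up i β) (by intro h; have := congrFun h i; simp at this), map_zero, smul_zero, zero_sub, neg_eq_zero]
    by_cases hb : β i = 0
    · simp [hb]
    by_cases hz : dn i β = 0
    · rw [hz, ell_adj h]
      have h5 := h4 i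
      have : X i (u 0) = Y i (u 0) := by
        conv_rhs => rw [← h5, hYY]
      simp [this]
    · rw [h3 _ hz]; simp

lemma joint_eig {V : Type*} [AddCommGroup V] [Module ℝ V] [FiniteDimensional ℝ V] (τ g : ι → Module.End ℝ V)
    (hτ : ∀ i, τ i * τ i = 1) (hττ : ∀ i j, τ i * τ j = τ j * τ i) (hg : ∀ i, g i * g i = 1)
    (h1 : ∀ i, g i * τ i = -(τ i * g i)) (h2 : ∀ i j, i ≠ j → g i * τ j = τ j * g i) (s : Finset ι) :
    2 ^ s.card * Module.finrank ℝ (⨅ i ∈ s, LinearMap.ker (τ i - 1) : Submodule ℝ V) = Module.finrank ℝ V := by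
  have mem : ∀ (s : Finset ι) (v : V), v ∈ (⨅ i ∈ s, LinearMap.ker (τ i - 1) : Submodule ℝ V) ↔ ∀ i ∈ s, τ i v = v := by
    intro s v
    simp [Submodule.mem_iInf, sub_eq_zero]
  have aτ : ∀ i v, τ i (τ i v) = v := fun i v => DFunLike.congr_fun (hτ i) v
  have aττ : ∀ i j v, τ i (τ j v) = τ j (τ i v) := fun i j v => DFunLike.congr_fun (hττ i j) v
  have ag : ∀ i v, g i (g i v) = v := fun i v => DFunLike.congr_fun (hg i) v
  have a1 : ∀ i v, g i (τ i v) = - τ i (g i v) := fun i v => DFunLike.congr_fun (h1 i) v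
  have a2 : ∀ i j, i ≠ j → ∀ v, g i (τ j v) = τ j (g i v) := fun i j h v => DFunLike.congr_fun (h2 i j h) v
  induction s using Finset.induction_on with
  | empty =>
    have : (⨅ i ∈ (∅ : Finset ι), LinearMap.ker (τ i - 1) : Submodule ℝ V) = ⊤ := by
      rw [eq_top_iff]; intro v _; rw [mem]; simp
    rw [this]; simp
  | insert k s hk ih =>
    rw [← ih, Finset.card_insert_of_notMem hk, pow_succ, mul_assoc]
    congr 1
    set J : Submodule ℝ V := ⨅ i ∈ s, LinearMap.ker (τ i - 1) with hJ
    set Jp : Submodule ℝ V := ⨅ i ∈ insert k s, LinearMap.ker (τ i - 1) with hJp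
    let q : J →ₗ[ℝ] V := (τ k + 1) ∘ₗ J.subtype
    have hr := LinearMap.finrank_range_add_finrank_ker q
    have e1 : LinearMap.range q = Jp := by
      ext v
      rw [hJp, mem]
      constructor
      · rintro ⟨⟨w, hw⟩, rfl⟩ i hi
        change τ i (τ k w + w) = τ k w + w
        rw [hJ, mem] at hw
        rcases Finset.mem_insert.1 hi with rfl | hi
        · rw [map_add, aτ]; abel
        · rw [map_add, aττ, hw i hi]
      · intro h
        refine ⟨⟨(1/2 : ℝ) • v, ?_⟩, ?_⟩
        · rw [hJ, mem]; intro i hi; rw [map_smul, h i (Finset.mem_insert_of_mem hi)]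
        · change τ k ((1/2 : ℝ) • v) + (1/2 : ℝ) • v = v
          rw [map_smul, h k (Finset.mem_insert_self _ _), ← add_smul]; norm_num
    have e2 : Module.finrank ℝ (LinearMap.ker q) = Module.finrank ℝ Jp := by
      have hm : ∀ v : LinearMap.ker q, g k (v : J) ∈ Jp := by
        rintro ⟨⟨w, hw⟩, hw2⟩
        have hw2' : τ k w + w = 0 := hw2
        rw [hJ, mem] at hw
        rw [hJp, mem]
        intro i hi
        change τ i (g k w) = g k w
        rcases Finset.mem_insert.1 hi with rfl | hi
        · rw [← neg_eq_iff_eq_neg.2 (a1 i w), eq_neg_of_add_eq_zero_left hw2', map_neg, neg_neg]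
        · rw [← a2 k i (by rintro rfl; exact hk hi), hw i hi]
      refine LinearEquiv.finrank_eq (LinearEquiv.ofBijective (LinearMap.codRestrict Jp ((g k) ∘ₗ J.subtype ∘ₗ (LinearMap.ker q).subtype) hm) ⟨?_, ?_⟩)
      · intro x y hxy
        have : g k (x : J) = g k (y : J) := congrArg Subtype.val hxy
        apply Subtype.ext; apply Subtype.ext
        rw [← ag k ((x : J) : V), this, ag]
      · rintro ⟨w, hw⟩
        have hw' := hw
        rw [hJp, mem] at hw'
        refine ⟨⟨⟨g k w, ?_⟩, ?_⟩, ?_⟩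
        · rw [hJ, mem]
          intro i hi
          rw [← a2 k i (by rintro rfl; exact hk hi), hw' i (Finset.mem_insert_of_mem hi)]
        · change τ k (g k w) + g k w = 0
          rw [← neg_eq_iff_eq_neg.2 (a1 k w), hw' k (Finset.mem_insert_self _ _)]; simp
        · apply Subtype.ext
          exact ag k w
    rw [← hr, e1, e2, two_mul]

lemma idx_cliff [FiniteDimensional ℝ V] {X Y : ι → V →L[ℝ] V} (h : Ell X Y) (h1 : ∀ i, X i * X i = -1)
    (h2 : ∀ i j, i ≠ j → X i * X j = -(X j * X i)) :
    2 ^ Fintype.card ι * idx (Fop (fun i => X i + Y i)) (Pop ι V) = Module.finrank ℝ V := by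
  classical
  have aXY : ∀ i j x, X i (Y j x) = -Y j (X i x) := fun i j x => DFunLike.congr_fun (h.XY i j) x
  have aYY1 : ∀ i x, Y i (Y i x) = x := fun i x => DFunLike.congr_fun (h.YY1 i) x
  have aXX1 : ∀ i x, X i (X i x) = -x := fun i x => DFunLike.congr_fun (h1 i) x
  have aYY : ∀ i j, i ≠ j → ∀ x, Y i (Y j x) = -Y j (Y i x) := fun i j hij x => DFunLike.congr_fun (h.YY i j hij) x
  have aXX : ∀ i j, i ≠ j → ∀ x, X i (X j x) = -X j (X i x) := fun i j hij x => DFunLike.congr_fun (h2 i j hij) x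
  have key := joint_eig (fun i => ((Y i * X i : V →L[ℝ] V) : V →ₗ[ℝ] V)) (fun i => (Y i : V →ₗ[ℝ] V))
    (by intro i; ext x; simp [aXY, aYY1, aXX1])
    (by
      intro i j; ext x
      by_cases hij : i = j
      · rw [hij]
      · simp [aXY, aYY i j hij, aXX i j hij])
    (by intro i; ext x; simp [aYY1])
    (by intro i; ext x; simp [aXY])
    (by intro i j hij; ext x; simp [aXY, aYY i j hij]) Finset.univ
  have hm : kerP (Fop (fun i => X i + Y i)) (Pop ι V) (-1) = ⊥ := by
    rw [eq_bot_iff]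
    rintro u ⟨hu, hP⟩
    rw [ker_cliff h h1 h2] at hu
    have : u = 0 := by
      ext β
      by_cases hb : β = 0
      · have h3 : Pop ι V u 0 = ((-1 : ℝ) • u : Hl (ι → ℕ) V) 0 := by rw [hP]
        rw [Pop_apply, lp.coeFn_smul, Pi.smul_apply] at h3
        have h0 : dg (0 : ι → ℕ) = 0 := by simp [dg]
        rw [h0, pow_zero, one_smul, neg_smul, one_smul] at h3
        have h4 : (u 0 : V) = 0 := by
          have h5 : (2 : ℝ) • (u 0 : V) = 0 := by
            rw [two_smul]; nth_rewrite 1 [h3]; exact neg_add_cancel _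
          exact (smul_eq_zero.1 h5).resolve_left two_ne_zero
        rw [hb, h4]; rfl
      · rw [hu.1 β hb]; rfl
    exact this
  set J : Submodule ℝ V := ⨅ i ∈ Finset.univ, LinearMap.ker (((Y i * X i : V →L[ℝ] V) : V →ₗ[ℝ] V) - 1) with hJ
  have memJ : ∀ v, v ∈ J ↔ ∀ i, Y i (X i v) = v := by
    intro v
    simp [hJ, Submodule.mem_iInf, sub_eq_zero]
  have hp : Module.finrank ℝ (kerP (Fop (fun i => X i + Y i)) (Pop ι V) 1) = Module.finrank ℝ J := by
    let ev : kerP (Fop (fun i => X i + Y i)) (Pop ι V) 1 →ₗ[ℝ] J :=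
      { toFun := fun u => ⟨(u : Hl (ι → ℕ) V) 0, (memJ _).2 ((ker_cliff h h1 h2 _).1 u.2.1).2⟩
        map_add' := fun u v => rfl
        map_smul' := fun c u => rfl }
    refine LinearEquiv.finrank_eq (LinearEquiv.ofBijective ev ⟨?_, ?_⟩)
    · intro u v huv
      have e0 : (u : Hl (ι → ℕ) V) 0 = (v : Hl (ι → ℕ) V) 0 := congrArg Subtype.val huv
      apply Subtype.ext
      ext β
      by_cases hb : β = 0
      · rw [hb, e0]
      · rw [((ker_cliff h h1 h2 _).1 u.2.1).1 β hb, ((ker_cliff h h1 h2 _).1 v.2.1).1 β hb]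
    · rintro ⟨x, hx⟩
      rw [memJ] at hx
      refine ⟨⟨lp.single 2 0 x, ?_, ?_⟩, ?_⟩
      · rw [ker_cliff h h1 h2]
        refine ⟨fun β hb => lp.single_apply_ne _ _ _ hb, ?_⟩
        rw [lp.single_apply_self]; exact hx
      · ext β
        rw [Pop_apply, one_smul]
        by_cases hb : β = 0
        · simp [hb, dg]
        · rw [lp.single_apply_ne _ _ _ hb, smul_zero]
      · apply Subtype.ext
        exact lp.single_apply_self 2 _ _
  rw [idx, hm, hp, finrank_bot, ← key, Finset.card_univ]
  push_cast; ring

end Fock2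

section Fock3
set_option linter.all false
open scoped InnerProductSpace

lemma comm_pos {ι E : Type*} [Fintype ι] [NormedAddCommGroup E] [InnerProductSpace ℝ E] [FiniteDimensional ℝ E]
    (J X : ι → Module.End ℝ E) (hs : ∀ i, (J i).IsSymmetric) (hc : ∀ i j, i ≠ j → J i * J j = J j * J i)
    (hX : ∀ i j u, J i (X j u) = X j (J i u)) (c : ℝ)
    (hp : ∀ (l : ι → ℝ) w, c * ((∑ i, l i ^ 2) * ‖w‖ ^ 2) ≤ ‖∑ i, l i • X i w‖ ^ 2) (v : E) :
    c * ∑ i, ‖J i v‖ ^ 2 ≤ ‖∑ i, X i (J i v)‖ ^ 2 := by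
  classical
  have hI := LinearMap.IsSymmetric.directSum_isInternal_of_pairwise_commute hs
    (fun i j hij => hc i j hij)
  have hO := LinearMap.IsSymmetric.orthogonalFamily_iInf_eigenspaces hs
  have hv : v ∈ ⨆ a : ι → ℝ, ⨅ j, (J j).eigenspace (a j) := by
    rw [hI.submodule_iSup_eq_top]; trivial
  rw [Submodule.mem_iSup_iff_exists_finsupp] at hv
  obtain ⟨f, hf, hfv⟩ := hv
  have hf' : ∀ a i, J i (f a) = a i • f a := by
    intro a i
    have := (Submodule.mem_iInf _).1 (hf a) i
    rwa [Module.End.mem_eigenspace_iff] at this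
  have nrm : ∀ (g : (ι → ℝ) → E), (∀ a i, J i (g a) = a i • g a) →
      ‖∑ a ∈ f.support, g a‖ ^ 2 = ∑ a ∈ f.support, ‖g a‖ ^ 2 := by
    intro g hg
    have := hO.norm_sum (fun a => ⟨g a, (Submodule.mem_iInf _).2 fun i =>
      Module.End.mem_eigenspace_iff.2 (hg a i)⟩) f.support
    simpa using this
  have hJ : ∀ i, J i v = ∑ a ∈ f.support, a i • f a := by
    intro i
    rw [← hfv, Finsupp.sum, map_sum]
    exact Finset.sum_congr rfl fun a _ => hf' a i
  have e1 : ∀ i, ‖J i v‖ ^ 2 = ∑ a ∈ f.support, a i ^ 2 * ‖f a‖ ^ 2 := by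
    intro i
    rw [hJ, nrm]
    · refine Finset.sum_congr rfl fun a _ => ?_
      rw [norm_smul, mul_pow, Real.norm_eq_abs, sq_abs]
    · intro a j
      rw [map_smul, hf', smul_comm]
  have e2 : ∑ i, X i (J i v) = ∑ a ∈ f.support, ∑ i, a i • X i (f a) := by
    rw [Finset.sum_comm]
    refine Finset.sum_congr rfl fun i _ => ?_
    rw [hJ, map_sum]
    exact Finset.sum_congr rfl fun a _ => by rw [map_smul]
  rw [e2, nrm]
  · simp only [e1]
    rw [Finset.sum_comm, Finset.mul_sum]
    refine Finset.sum_le_sum fun a _ => ?_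
    rw [← Finset.sum_mul]
    exact hp a (f a)
  · intro a j
    rw [map_sum, Finset.smul_sum]
    refine Finset.sum_congr rfl fun i _ => ?_
    rw [map_smul, hX, hf', map_smul, smul_comm]

lemma harm_id {ι E : Type*} [Fintype ι] [DecidableEq ι] [NormedAddCommGroup E] [InnerProductSpace ℝ E]
    (x d X Y : ι → Module.End ℝ E)
    (xs : ∀ i u w, ⟪x i u, w⟫_ℝ = ⟪u, x i w⟫_ℝ)
    (ds : ∀ i u w, ⟪d i u, w⟫_ℝ = -⟪u, d i w⟫_ℝ)
    (Xs : ∀ i u w, ⟪X i u, w⟫_ℝ = -⟪u, X i w⟫_ℝ)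
    (Ys : ∀ i u w, ⟪Y i u, w⟫_ℝ = ⟪u, Y i w⟫_ℝ)
    (xX : ∀ i j u, x i (X j u) = X j (x i u))
    (xY : ∀ i j u, x i (Y j u) = Y j (x i u))
    (dX : ∀ i j u, d i (X j u) = X j (d i u))
    (dY : ∀ i j u, d i (Y j u) = Y j (d i u))
    (dd : ∀ i j u, d i (d j u) = d j (d i u))
    (dx : ∀ i j u, i ≠ j → d i (x j u) = x j (d i u))
    (dx1 : ∀ i u, d i (x i u) = x i (d i u) + (2 : ℝ) • u)
    (XY : ∀ i j u, X i (Y j u) = -Y j (X i u))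
    (YY : ∀ i j u, i ≠ j → Y i (Y j u) = -Y j (Y i u))
    (YY1 : ∀ i u, Y i (Y i u) = u) (v : E) :
    ‖∑ i, (X i (x i v) + Y i (d i v))‖ ^ 2 =
      ‖∑ i, X i (x i v)‖ ^ 2 + ∑ i, ‖d i v‖ ^ 2 + 2 * ∑ i, ⟪v, X i (Y i v)⟫_ℝ := by
  rw [Finset.sum_add_distrib, norm_add_sq_real]
  have h1 : ‖∑ i, Y i (d i v)‖ ^ 2 = ∑ i, ‖d i v‖ ^ 2 := by
    rw [← real_inner_self_eq_norm_sq, sum_inner]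
    simp only [inner_sum]
    apply sum_symm
    · intro i
      rw [Ys, YY1, real_inner_self_eq_norm_sq]
    · intro i j hij
      rw [Ys, Ys, ds, ds, dY, dY, dY, dY, YY i j _ hij, dd i j, inner_neg_right]; ring
    · intro y hy; linarith
  have h2 : ⟪∑ i, X i (x i v), ∑ i, Y i (d i v)⟫_ℝ = ∑ i, ⟪v, X i (Y i v)⟫_ℝ := by
    have key : ∀ i j, 2 * ⟪X i (x i v), Y j (d j v)⟫_ℝ =
        ⟪v, X i (Y j (d j (x i v) - x i (d j v)))⟫_ℝ := by
      intro i j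
      have a1 : ⟪X i (x i v), Y j (d j v)⟫_ℝ = -⟪v, X i (Y j (x i (d j v)))⟫_ℝ := by
        rw [Xs, xs, xX, xY]
      have a2 : ⟪X i (x i v), Y j (d j v)⟫_ℝ = ⟪v, X i (Y j (d j (x i v)))⟫_ℝ := by
        rw [real_inner_comm, Ys, ds, dY, dX, XY, inner_neg_right]
      rw [map_sub, map_sub, inner_sub_right, ← a2, ← neg_eq_iff_eq_neg.2 a1]; ring
    rw [sum_inner]
    refine Finset.sum_congr rfl fun i _ => ?_
    rw [inner_sum, Finset.sum_eq_single i]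
    · have := key i i
      rw [dx1, add_sub_cancel_left, map_smul, map_smul, inner_smul_right] at this
      linarith
    · intro j _ hj
      have := key i j
      rw [dx j i _ hj, sub_self, map_zero, map_zero, inner_zero_right] at this
      linarith
    · simp
  rw [h1, h2]; ring

end Fock3

section Fock4
set_option linter.all false
open scoped InnerProductSpace

variable {V : Type*} [NormedAddCommGroup V] [InnerProductSpace ℝ V]
variable {ι : Type*} [DecidableEq ι] [Fintype ι]

lemma ell_const [FiniteDimensional ℝ V] [CompleteSpace V] {X Y : ι → V →L[ℝ] V} (h : Ell X Y) : ∃ c : ℝ, 0 < c ∧ c ≤ 1 ∧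
    ∀ (l : ι → ℝ) (w : V), c * ((∑ i, l i ^ 2) * ‖w‖ ^ 2) ≤ ‖∑ i, l i • X i w‖ ^ 2 := by
  have hK : IsCompact ((Metric.sphere (0 : EuclideanSpace ℝ ι) 1) ×ˢ (Metric.sphere (0 : V) 1)) :=
    (isCompact_sphere _ _).prod (@isCompact_sphere _ _ (FiniteDimensional.proper ℝ V) _ _)
  have hc : Continuous fun p : EuclideanSpace ℝ ι × V => ‖∑ i, p.1 i • X i p.2‖ ^ 2 := by fun_prop
  obtain ⟨c, c0, hc⟩ := hK.exists_forall_le' (a := 0) hc.continuousOn (by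
    rintro ⟨l, w⟩ ⟨hl, hw⟩
    have hl0 : (l : ι → ℝ) ≠ 0 := by
      intro h0
      have : l = 0 := by ext i; exact congr_fun h0 i
      rw [this] at hl; simp at hl
    have hw0 : w ≠ 0 := by rintro rfl; simp at hw
    have : ∑ i, l i • X i w ≠ 0 := fun h0 => hw0 (h.inj _ hl0 _ h0)
    positivity)
  refine ⟨min c 1, by positivity, min_le_right _ _, fun l w => ?_⟩
  by_cases hl : WithLp.toLp 2 l = 0
  · have : l = 0 := by ext i; exact congr_arg (fun z : EuclideanSpace ℝ ι => z i) hl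
    simp [this]
  by_cases hw : w = 0
  · simp [hw]
  set L : EuclideanSpace ℝ ι := WithLp.toLp 2 l
  have h1 := hc (‖L‖⁻¹ • L, ‖w‖⁻¹ • w) ⟨by simp [norm_smul, hl], by simp [norm_smul, hw]⟩
  have h2 : ∑ i, (‖L‖⁻¹ • L) i • X i (‖w‖⁻¹ • w) = (‖L‖⁻¹ * ‖w‖⁻¹) • ∑ i, l i • X i w := by
    rw [Finset.smul_sum]
    refine Finset.sum_congr rfl fun i _ => ?_
    rw [map_smul, smul_smul, smul_smul]
    congr 1
    simp [L]; ring
  simp only [h2] at h1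
  have h3 : ∑ i, l i ^ 2 = ‖L‖ ^ 2 := by rw [EuclideanSpace.real_norm_sq_eq]
  have hL : 0 < ‖L‖ := norm_pos_iff.2 hl
  have hw' : 0 < ‖w‖ := norm_pos_iff.2 hw
  rw [norm_smul, mul_pow, Real.norm_of_nonneg (by positivity), mul_pow, inv_pow, inv_pow,
    ← mul_inv, ← div_eq_inv_mul, le_div_iff₀ (by positivity)] at h1
  rw [h3]
  exact (mul_le_mul_of_nonneg_right (min_le_left _ _) (by positivity)).trans h1

/-- finitely supported functions as elements of the Hilbert space -/
noncomputable def toHl (f : FF ι V) (hf : f.support.Finite) : Hl (ι → ℕ) V :=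
  ⟨f, Hl.mem_of_sq (summable_of_finite_support (hf.subset (fun a ha h0 => ha (by show ‖f a‖ ^ 2 = 0; rw [h0, norm_zero]; norm_num))))⟩

@[simp] lemma toHl_apply (f : FF ι V) (hf) (a) : toHl f hf a = f a := rfl

lemma supp_fa (i : ι) {f : FF ι V} (hf : f.support.Finite) : (fa V i f).support.Finite := by
  refine (hf.preimage (up_inj i).injOn).subset ?_
  intro a ha h0
  apply ha
  rw [fa_apply, h0, smul_zero]

lemma supp_fad (i : ι) {f : FF ι V} (hf : f.support.Finite) : (fad V i f).support.Finite := by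
  refine (hf.image (up i)).subset ?_
  intro a ha
  have h1 : a i ≠ 0 := by intro h0; apply ha; simp [fad_apply, h0]
  refine ⟨dn i a, ?_, up_dn i a h1⟩
  intro h0; apply ha
  rw [fad_apply, h0, smul_zero]

lemma supp_fD (B : V →L[ℝ] V) {f : FF ι V} (hf : f.support.Finite) : (fD ι B f).support.Finite := by
  refine hf.subset ?_
  intro a ha h0
  apply ha
  rw [fD_apply, h0, map_zero]

lemma supp_fx (i : ι) {f : FF ι V} (hf : f.support.Finite) : (fx V i f).support.Finite :=
  ((supp_fa i hf).union (supp_fad i hf)).subset (Function.support_add _ _)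
lemma supp_fd (i : ι) {f : FF ι V} (hf : f.support.Finite) : (fd V i f).support.Finite :=
  ((supp_fa i hf).union (supp_fad i hf)).subset (Function.support_sub _ _)

lemma ip_a (i : ι) (f g : FF ι V) : ∑' a, ⟪fa V i f a, g a⟫_ℝ = ∑' a, ⟪f a, fad V i g a⟫_ℝ := by
  rw [← tsum_shift i (fun a => ⟪f a, fad V i g a⟫_ℝ)]
  · refine tsum_congr fun a => ?_
    rw [fa_apply, fad_apply, dn_up, up_self, inner_smul_left, inner_smul_right]
    push_cast; rfl
  · intro a h; simp [fad_apply, h]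

lemma ip_sum {f : FF ι V} (hf : f.support.Finite) (g : FF ι V) : Summable fun a => ⟪f a, g a⟫_ℝ :=
  summable_of_finite_support (hf.subset (fun a ha h0 => ha (by simp [h0])))

lemma ip_comm (f g : FF ι V) : ∑' a, ⟪f a, g a⟫_ℝ = ∑' a, ⟪g a, f a⟫_ℝ :=
  tsum_congr fun a => real_inner_comm _ _

lemma ip_fx (i : ι) {f g : FF ι V} (hf : f.support.Finite) :
    ∑' a, ⟪fx V i f a, g a⟫_ℝ = ∑' a, ⟪f a, fx V i g a⟫_ℝ := by
  simp only [fx, LinearMap.add_apply, Pi.add_apply, inner_add_left, inner_add_right]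
  rw [Summable.tsum_add (ip_sum (supp_fa i hf) _) (ip_sum (supp_fad i hf) _),
    Summable.tsum_add (ip_sum hf _) (ip_sum hf _), ip_a i f g, ip_comm (fad V i f), ← ip_a i g f, ip_comm (fa V i g)]
  ring

lemma ip_fd (i : ι) {f g : FF ι V} (hf : f.support.Finite) :
    ∑' a, ⟪fd V i f a, g a⟫_ℝ = -∑' a, ⟪f a, fd V i g a⟫_ℝ := by
  simp only [fd, LinearMap.sub_apply, Pi.sub_apply, inner_sub_left, inner_sub_right]
  rw [Summable.tsum_sub (ip_sum (supp_fa i hf) _) (ip_sum (supp_fad i hf) _),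
    Summable.tsum_sub (ip_sum hf _) (ip_sum hf _), ip_a i f g, ip_comm (fad V i f), ← ip_a i g f, ip_comm (fa V i g)]
  ring

/-- finitely supported vectors -/
def Wf (ι V : Type*) [NormedAddCommGroup V] [InnerProductSpace ℝ V] : Submodule ℝ (Hl (ι → ℕ) V) where
  carrier := {u | (Function.support (u : FF ι V)).Finite}
  add_mem' := fun {a b} ha hb => (ha.union hb).subset (by
    have := Function.support_add (a : FF ι V) (b : FF ι V); exact this)
  zero_mem' := by
    have : Function.support (0 : FF ι V) = ∅ := Function.support_zero
    show (Function.support (0 : FF ι V)).Finite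
    rw [this]; exact Set.finite_empty
  smul_mem' := fun c x hx => hx.subset (by
    intro a ha h0; apply ha; simp only [lp.coeFn_smul, Pi.smul_apply]; rw [h0, smul_zero])

noncomputable def liftW (T : Module.End ℝ (FF ι V)) (hT : ∀ f : FF ι V, f.support.Finite → (T f).support.Finite) :
    Module.End ℝ (Wf ι V) where
  toFun u := ⟨toHl (T u.1) (hT _ u.2), hT _ u.2⟩
  map_add' u v := by
    apply Subtype.ext; ext a
    have := congr_fun (T.map_add (u.1 : FF ι V) (v.1 : FF ι V)) a
    exact this
  map_smul' c u := by
    apply Subtype.ext; ext a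
    have := congr_fun (T.map_smul c (u.1 : FF ι V)) a
    exact this

lemma liftW_apply (T : Module.End ℝ (FF ι V)) (hT) (u : Wf ι V) (a) : (liftW T hT u).1 a = T u.1 a := rfl
lemma liftW_coe (T : Module.End ℝ (FF ι V)) (hT) (u : Wf ι V) : ((liftW T hT u).1 : FF ι V) = T u.1 := rfl

lemma W_inner (u v : Wf ι V) : ⟪u, v⟫_ℝ = ∑' a, ⟪u.1 a, v.1 a⟫_ℝ := by
  rw [← lp.inner_eq_tsum]; rfl
lemma W_norm (u : Wf ι V) : ‖u‖ ^ 2 = ∑' a, ‖u.1 a‖ ^ 2 := by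
  rw [← Hl.norm_sq]; rfl

lemma W_ext {u v : Wf ι V} (h : (u.1 : FF ι V) = v.1) : u = v := Subtype.ext (by ext a; exact congr_fun h a)

variable [CompleteSpace V]

noncomputable def Wx (V : Type*) [NormedAddCommGroup V] [InnerProductSpace ℝ V] (i : ι) : Module.End ℝ (Wf ι V) := liftW (fx V i) (fun _ h => supp_fx i h)
noncomputable def Wd (V : Type*) [NormedAddCommGroup V] [InnerProductSpace ℝ V] (i : ι) : Module.End ℝ (Wf ι V) := liftW (fd V i) (fun _ h => supp_fd i h)
noncomputable def WD (ι : Type*) [DecidableEq ι] [Fintype ι] (B : V →L[ℝ] V) : Module.End ℝ (Wf ι V) := liftW (fD ι B) (fun _ h => supp_fD B h)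

lemma W_harm {X Y : ι → V →L[ℝ] V} (h : Ell X Y) (v : Wf ι V) :
    ‖∑ i, (WD ι (X i) (Wx V i v) + WD ι (Y i) (Wd V i v))‖ ^ 2 =
      ‖∑ i, WD ι (X i) (Wx V i v)‖ ^ 2 + ∑ i, ‖Wd V i v‖ ^ 2 + 2 * ∑ i, ⟪v, WD ι (X i) (WD ι (Y i) v)⟫_ℝ := by
  have e : ∀ {S T : Module.End ℝ (FF ι V)}, S = T → ∀ u : FF ι V, S u = T u := fun h u => by rw [h]
  apply harm_id
  · intro i u w; rw [W_inner, W_inner]; exact ip_fx i u.2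
  · intro i u w; rw [W_inner, W_inner]; exact ip_fd i u.2
  · intro i u w; rw [W_inner, W_inner, ← tsum_neg]
    refine tsum_congr fun a => ?_
    show ⟪X i (u.1 a), w.1 a⟫_ℝ = -⟪u.1 a, X i (w.1 a)⟫_ℝ
    rw [← ContinuousLinearMap.adjoint_inner_right, h.Xs, _root_.neg_apply, inner_neg_right]
  · intro i u w; rw [W_inner, W_inner]
    refine tsum_congr fun a => ?_
    show ⟪Y i (u.1 a), w.1 a⟫_ℝ = ⟪u.1 a, Y i (w.1 a)⟫_ℝ
    rw [← ContinuousLinearMap.adjoint_inner_right, h.Ys]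
  · intro i j u; exact W_ext (e (fD_fx (X j) i) u.1)
  · intro i j u; exact W_ext (e (fD_fx (Y j) i) u.1)
  · intro i j u; exact W_ext (e (fD_fd (X j) i) u.1)
  · intro i j u; exact W_ext (e (fD_fd (Y j) i) u.1)
  · intro i j u; exact W_ext (e (fd_fd i j) u.1)
  · intro i j u hij; exact W_ext (e (fd_fx hij) u.1)
  · intro i u
    refine W_ext ((e (fd_fx_self i) u.1).trans ?_)
    have h2 : (2 : Module.End ℝ (FF ι V)) u.1 = (2 : ℝ) • (u.1 : FF ι V) := by
      rw [← one_add_one_eq_two, LinearMap.add_apply, Module.End.one_apply, two_smul]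
    rw [LinearMap.add_apply, h2]; rfl
  · intro i j u
    refine W_ext ?_
    ext a
    exact DFunLike.congr_fun (h.XY i j) (u.1 a)
  · intro i j u hij
    refine W_ext ?_
    ext a
    exact DFunLike.congr_fun (h.YY i j hij) (u.1 a)
  · intro i u
    refine W_ext ?_
    ext a
    exact DFunLike.congr_fun (h.YY1 i) (u.1 a)

end Fock4

section Fock5
set_option linter.all false
open scoped InnerProductSpace

variable {V : Type*} [NormedAddCommGroup V] [InnerProductSpace ℝ V]
variable {ι : Type*} [DecidableEq ι] [Fintype ι]

/-- vectors supported in S -/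
def Sb (V : Type*) [NormedAddCommGroup V] [InnerProductSpace ℝ V] (S : Set (ι → ℕ)) : Submodule ℝ (Hl (ι → ℕ) V) where
  carrier := {u | ∀ a, a ∉ S → u a = 0}
  add_mem' := fun {a b} ha hb x hx => by
    rw [lp.coeFn_add, Pi.add_apply, ha x hx, hb x hx, add_zero]
  zero_mem' := fun x hx => rfl
  smul_mem' := fun c u hu x hx => by rw [lp.coeFn_smul, Pi.smul_apply, hu x hx, smul_zero]

lemma Sb_fin [FiniteDimensional ℝ V] {S : Set (ι → ℕ)} (hS : S.Finite) : FiniteDimensional ℝ (Sb V S) := by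
  have := hS.to_subtype
  let L : Sb V S →ₗ[ℝ] (S → V) :=
    { toFun := fun u a => u.1 a.1
      map_add' := fun u v => rfl
      map_smul' := fun c u => rfl }
  refine FiniteDimensional.of_injective L ?_
  intro u v huv
  apply Subtype.ext
  ext a
  by_cases ha : a ∈ S
  · exact congr_fun huv ⟨a, ha⟩
  · rw [u.2 a ha, v.2 a ha]

def box (ι : Type*) (m : ℕ) : Set (ι → ℕ) := {a | ∀ i, a i ≤ m}
lemma box_fin (m : ℕ) : (box ι m).Finite := by
  have : box ι m = Set.Iic (fun _ => m) := by ext a; exact Iff.rfl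
  rw [this]; exact Set.finite_Iic _
lemma deg_fin (m : ℕ) : {a : ι → ℕ | dg a < m}.Finite :=
  (box_fin m).subset fun a ha i => ((le_dg a i).trans_lt ha).le

open Classical in
noncomputable def Jb (V : Type*) [NormedAddCommGroup V] [InnerProductSpace ℝ V] (m : ℕ) (i : ι) : Module.End ℝ (Sb V (box ι m)) where
  toFun u := ⟨toHl (fun a => if a ∈ box ι m then fx V i u.1 a else 0)
      ((box_fin m).subset fun a ha => by
        by_contra h; apply ha; exact if_neg h), fun a ha => if_neg ha⟩
  map_add' u v := by
    apply Subtype.ext; ext a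
    have := congr_fun ((fx V i).map_add (u.1 : FF ι V) (v.1 : FF ι V)) a
    show (if a ∈ box ι m then fx V i ((u.1 : FF ι V) + (v.1 : FF ι V)) a else 0) = (if a ∈ box ι m then fx V i u.1 a else 0) + (if a ∈ box ι m then fx V i v.1 a else 0)
    split_ifs
    · exact this
    · simp
  map_smul' c u := by
    apply Subtype.ext; ext a
    have := congr_fun ((fx V i).map_smul c (u.1 : FF ι V)) a
    show (if a ∈ box ι m then fx V i (c • (u.1 : FF ι V)) a else 0) = c • (if a ∈ box ι m then fx V i u.1 a else 0)
    split_ifs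
    · exact this
    · simp

lemma Jb_in {m : ℕ} (i : ι) (u : Sb V (box ι m)) {a} (ha : a ∈ box ι m) : (Jb V m i u).1 a = fx V i u.1 a := if_pos ha

lemma supp_Sb {m : ℕ} (u : Sb V (box ι m)) : (Function.support (u.1 : FF ι V)).Finite :=
  (box_fin m).subset fun a ha => by by_contra h; exact ha (u.2 a h)

lemma fx_apply (i : ι) (v : FF ι V) (β) : fx V i v β = √(β i + 1 : ℝ) • v (up i β) + √(β i : ℝ) • v (dn i β) := rfl

lemma Jb_symm (m : ℕ) (i : ι) : (Jb V m i).IsSymmetric := by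
  intro u w
  have e1 : ∀ u w : Sb V (box ι m), ⟪Jb V m i u, w⟫_ℝ = ∑' a, ⟪fx V i u.1 a, w.1 a⟫_ℝ := by
    intro u w
    show ⟪(Jb V m i u).1, w.1⟫_ℝ = _
    rw [lp.inner_eq_tsum]
    refine tsum_congr fun a => ?_
    by_cases ha : a ∈ box ι m
    · rw [Jb_in i u ha]
    · rw [w.2 a ha, inner_zero_right, inner_zero_right]
  rw [e1, real_inner_comm, e1, ip_fx i (supp_Sb u), ip_comm]

lemma dn_box {m : ℕ} (i : ι) {a : ι → ℕ} (ha : a ∈ box ι m) : dn i a ∈ box ι m := by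
  intro k
  have := ha k
  simp only [dn, Pi.sub_apply]; omega

lemma Jb_Jb (m : ℕ) {i j : ι} (hij : i ≠ j) (u : Sb V (box ι m)) {a} (ha : a ∈ box ι m) :
    (Jb V m i (Jb V m j u)).1 a = (fx V i * fx V j) u.1 a := by
  rw [Jb_in _ _ ha, Module.End.mul_apply, fx_apply, fx_apply i, Jb_in _ _ (dn_box i ha)]
  congr 2
  by_cases hu : up i a ∈ box ι m
  · exact Jb_in _ _ hu
  · rw [(Jb V m j u).2 _ hu, fx_apply]
    have h1 : m < a i + 1 := by
      by_contra h
      apply hu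
      intro k
      by_cases hk : k = i
      · subst hk; rw [up_self]; omega
      · rw [up_ne hk]; exact ha k
    have h2 : ∀ b : ι → ℕ, b i = a i + 1 → u.1 b = 0 := by
      intro b hb
      apply u.2
      intro hh
      have := hh i
      omega
    rw [h2 (up j (up i a)) (by rw [up_ne hij, up_self]), h2 (dn j (up i a)) (by rw [dn_ne hij, up_self])]
    simp

lemma Jb_comm (m : ℕ) {i j : ι} (hij : i ≠ j) : Jb V m i * Jb V m j = Jb V m j * Jb V m i := by
  ext u a
  rw [Module.End.mul_apply, Module.End.mul_apply]
  by_cases ha : a ∈ box ι m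
  · rw [Jb_Jb m hij u ha, Jb_Jb m hij.symm u ha, fx_fx]
  · rw [(Jb V m i (Jb V m j u)).2 a ha, (Jb V m j (Jb V m i u)).2 a ha]

noncomputable def Xb (B : V →L[ℝ] V) (m : ℕ) : Module.End ℝ (Sb V (box ι m)) where
  toFun u := ⟨Dop _ B u.1, fun a ha => by rw [Dop_apply, u.2 a ha, map_zero]⟩
  map_add' u v := by apply Subtype.ext; exact map_add _ _ _
  map_smul' c u := by apply Subtype.ext; exact map_smul _ _ _

variable [CompleteSpace V]

lemma W_pos [FiniteDimensional ℝ V] {X : ι → V →L[ℝ] V} {c : ℝ}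
    (hc : ∀ (l : ι → ℝ) (w : V), c * ((∑ i, l i ^ 2) * ‖w‖ ^ 2) ≤ ‖∑ i, l i • X i w‖ ^ 2) (v : Wf ι V) :
    c * ∑ i, ‖Wx V i v‖ ^ 2 ≤ ‖∑ i, WD ι (X i) (Wx V i v)‖ ^ 2 := by
  obtain ⟨m, hm⟩ : ∃ m, ∀ a, v.1 a ≠ 0 → ∀ i, a i < m := by
    obtain ⟨b, hb⟩ := (show (Function.support (v.1 : FF ι V)).Finite from v.2).bddAbove
    refine ⟨dg b + 1, fun a ha i => ?_⟩
    have h1 : a i ≤ b i := hb ha i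
    have := le_dg b i
    omega
  have := Sb_fin (V := V) (box_fin (ι := ι) m)
  let u : Sb V (box ι m) := ⟨v.1, fun a ha => by
    by_contra h
    exact ha fun i => (hm a h i).le⟩
  have hJ : ∀ i, (Jb V m i u).1 = (Wx V i v).1 := by
    intro i
    ext a
    by_cases ha : a ∈ box ι m
    · rw [Jb_in i u ha]; rfl
    · rw [(Jb V m i u).2 a ha]
      show 0 = fx V i v.1 a
      rw [fx_apply]
      have z : ∀ b : ι → ℕ, (∃ i, m ≤ b i) → v.1 b = 0 := by
        rintro b ⟨i, hi⟩
        by_contra h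
        have := hm b h i
        omega
      simp only [box, Set.mem_setOf_eq, not_forall, not_le] at ha
      obtain ⟨k, hk⟩ := ha
      rw [z (up i a) ⟨k, by simp only [up, Pi.add_apply]; omega⟩, z (dn i a) ⟨k, by
        simp only [dn, Pi.sub_apply, Pi.single_apply]; split_ifs <;> omega⟩]
      simp
  have key := comm_pos (Jb V m) (fun i => Xb (X i) m) (Jb_symm m) (fun i j h => Jb_comm m h) ?_ c ?_ u
  · have e1 : ∀ i, ‖Jb V m i u‖ = ‖Wx V i v‖ := fun i => by
      show ‖(Jb V m i u).1‖ = ‖(Wx V i v).1‖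
      rw [hJ]
    have e2 : ‖∑ i, Xb (X i) m (Jb V m i u)‖ = ‖∑ i, WD ι (X i) (Wx V i v)‖ := by
      show ‖(∑ i, Xb (X i) m (Jb V m i u)).1‖ = ‖(∑ i, WD ι (X i) (Wx V i v)).1‖
      rw [Submodule.coe_sum, Submodule.coe_sum]
      congr 1
      refine Finset.sum_congr rfl fun i _ => ?_
      show Dop _ (X i) (Jb V m i u).1 = _
      rw [hJ]; rfl
    simp only [e1] at key
    rw [← e2]; exact key
  · intro i j u
    apply Subtype.ext
    ext a
    by_cases ha : a ∈ box ι m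
    · rw [Jb_in i _ ha]
      show _ = X j ((Jb V m i u).1 a)
      rw [Jb_in i _ ha, fx_apply, fx_apply, map_add, map_smul, map_smul]; rfl
    · rw [(Jb V m i _).2 a ha, (Xb (X j) m _).2 a ha]
  · intro l w
    have e3 : ‖w‖ ^ 2 = ∑' a, ‖w.1 a‖ ^ 2 := Hl.norm_sq w.1
    have e4 : ‖∑ i, l i • Xb (X i) m w‖ ^ 2 = ∑' a, ‖∑ i, l i • X i (w.1 a)‖ ^ 2 := by
      have := Hl.norm_sq (∑ i, l i • Xb (X i) m w : Sb V (box ι m)).1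
      rw [Submodule.coe_norm, this]
      refine tsum_congr fun a => ?_
      congr 2
      rw [Submodule.coe_sum, lp.coeFn_sum, Finset.sum_apply]
      rfl
    have s4 := Hl.summable_sq (∑ i, l i • Xb (X i) m w : Sb V (box ι m)).1
    have s4' : Summable fun a => ‖∑ i, l i • X i (w.1 a)‖ ^ 2 := by
      refine s4.congr fun a => ?_
      congr 2
      rw [Submodule.coe_sum, lp.coeFn_sum, Finset.sum_apply]
      rfl
    rw [e3, e4, ← tsum_mul_left, ← tsum_mul_left]
    exact Summable.tsum_le_tsum (fun a => hc l _) (((Hl.summable_sq w.1).mul_left _).mul_left _) s4'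

end Fock5

section Fock6
set_option linter.all false
open scoped InnerProductSpace

variable {V : Type*} [NormedAddCommGroup V] [InnerProductSpace ℝ V]
variable {ι : Type*} [DecidableEq ι] [Fintype ι]

lemma Hl.norm_le {A : Type*} {u w : Hl A V} {c : ℝ} (hc : 0 ≤ c) (h : ∀ a, ‖u a‖ ≤ c * ‖w a‖) : ‖u‖ ≤ c * ‖w‖ := by
  apply le_of_sq_le_sq _ (by positivity)
  rw [mul_pow, Hl.norm_sq, Hl.norm_sq, ← tsum_mul_left]
  refine Summable.tsum_le_tsum (fun a => ?_) (Hl.summable_sq u) ((Hl.summable_sq w).mul_left _)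
  rw [← mul_pow]
  have := h a
  gcongr

lemma aop_le (i : ι) (u : Hl (ι → ℕ) V) : ‖aop V i u‖ ≤ ‖u‖ := by
  have h : ‖aop V i‖ ≤ |(1 : ℝ)| := by
    unfold aop wop
    exact LinearMap.mkContinuous_norm_le _ (abs_nonneg _) _
  rw [abs_one] at h
  simpa using (aop V i).le_of_opNorm_le h u

lemma Dop_le {A : Type*} (B : V →L[ℝ] V) (u : Hl A V) : ‖Dop A B u‖ ≤ ‖B‖ * ‖u‖ :=
  Hl.norm_le (norm_nonneg _) fun a => B.le_opNorm _

lemma WD_le [CompleteSpace V] (B : V →L[ℝ] V) (u : Wf ι V) : ‖WD ι B u‖ ≤ ‖B‖ * ‖u‖ :=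
  Hl.norm_le (norm_nonneg _) fun a => B.le_opNorm _

lemma W_xd (i : ι) (v : Wf ι V) : 2 * ∑' a, (a i + 1 : ℝ) * ‖v.1 a‖ ^ 2 ≤ ‖Wx V i v‖ ^ 2 + ‖Wd V i v‖ ^ 2 := by
  set A := liftW (fa V i) (fun _ h => supp_fa i h) v with hA
  set B := liftW (fad V i) (fun _ h => supp_fad i h) v with hB
  have h1 : Wx V i v = A + B := rfl
  have h2 : Wd V i v = A - B := rfl
  have h3 : ‖B‖ ^ 2 = ∑' a, (a i + 1 : ℝ) * ‖v.1 a‖ ^ 2 := by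
    rw [W_norm]
    have := ip_a i (fad V i v.1) v.1
    simp only [fa_fad_apply, inner_smul_left, real_inner_self_eq_norm_sq] at this
    exact this.symm
  rw [← h3, h1, h2, norm_add_sq_real, norm_sub_sq_real]
  nlinarith [sq_nonneg ‖A‖]

lemma W_xd_sum [Nonempty ι] (v : Wf ι V) : 2 * ∑' a, (dg a + 1 : ℝ) * ‖v.1 a‖ ^ 2 ≤ ∑ i, ‖Wx V i v‖ ^ 2 + ∑ i, ‖Wd V i v‖ ^ 2 := by
  have hs : ∀ g : (ι → ℕ) → ℝ, Summable fun a => g a * ‖v.1 a‖ ^ 2 := fun g =>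
    summable_of_finite_support ((show (Function.support (v.1 : FF ι V)).Finite from v.2).subset (fun a ha h0 => ha (by
      show g a * ‖v.1 a‖ ^ 2 = 0
      rw [h0, norm_zero]; norm_num)))
  rw [← Finset.sum_add_distrib]
  refine le_trans ?_ (Finset.sum_le_sum fun i _ => W_xd i v)
  rw [← Finset.mul_sum, ← Summable.tsum_finsetSum (fun i _ => hs _)]
  refine mul_le_mul_of_nonneg_left ?_ (by norm_num)
  refine Summable.tsum_le_tsum (fun a => ?_) (hs _) (by
    simp only [← Finset.sum_mul]; exact hs _)
  rw [← Finset.sum_mul]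
  refine mul_le_mul_of_nonneg_right ?_ (by positivity)
  rw [Finset.sum_add_distrib]
  simp [dg]
  exact Fintype.card_pos

lemma supp_sc (g : (ι → ℕ) → ℝ) (u : Wf ι V) : (Function.support (fun a => g a • u.1 a : FF ι V)).Finite :=
  (show (Function.support (u.1 : FF ι V)).Finite from u.2).subset (fun a ha h0 => ha (by
      show g a • u.1 a = 0
      rw [h0, smul_zero]))

noncomputable def scW (g : (ι → ℕ) → ℝ) (u : Wf ι V) : Wf ι V :=
  ⟨toHl (fun a => g a • u.1 a) (supp_sc g u), supp_sc g u⟩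

lemma scW_apply (g : (ι → ℕ) → ℝ) (u : Wf ι V) (a) : (scW g u).1 a = g a • u.1 a := rfl

variable [CompleteSpace V]

noncomputable def AW (X Y : ι → V →L[ℝ] V) (v : Wf ι V) : Wf ι V := ∑ i, (WD ι (X i) (Wx V i v) + WD ι (Y i) (Wd V i v))

lemma AW_apply (X Y : ι → V →L[ℝ] V) (v : Wf ι V) (β) : (AW X Y v).1 β = Aop X Y v.1 β := by
  rw [AW, Submodule.coe_sum, lp.coeFn_sum, Finset.sum_apply, Aop, LinearMap.sum_apply, Finset.sum_apply]
  rfl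

lemma AW_low [FiniteDimensional ℝ V] [Nonempty ι] {X Y : ι → V →L[ℝ] V} (h : Ell X Y) {c : ℝ} (c1 : c ≤ 1) (c0 : 0 ≤ c)
    (hc : ∀ (l : ι → ℝ) (w : V), c * ((∑ i, l i ^ 2) * ‖w‖ ^ 2) ≤ ‖∑ i, l i • X i w‖ ^ 2) (v : Wf ι V) :
    c * (2 * ∑' a, (dg a + 1 : ℝ) * ‖v.1 a‖ ^ 2) ≤ ‖AW X Y v‖ ^ 2 + 2 * (∑ i, ‖X i‖ * ‖Y i‖) * ‖v‖ ^ 2 := by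
  have h1 := W_harm h v
  have h2 := W_pos hc v
  have h3 := mul_le_mul_of_nonneg_left (W_xd_sum v) c0
  have h4 : -((∑ i, ‖X i‖ * ‖Y i‖) * ‖v‖ ^ 2) ≤ ∑ i, ⟪v, WD ι (X i) (WD ι (Y i) v)⟫_ℝ := by
    rw [Finset.sum_mul, ← Finset.sum_neg_distrib]
    refine Finset.sum_le_sum fun i _ => ?_
    refine (abs_le.1 ((abs_real_inner_le_norm _ _).trans ?_)).1
    calc ‖v‖ * ‖WD ι (X i) (WD ι (Y i) v)‖ ≤ ‖v‖ * (‖X i‖ * (‖Y i‖ * ‖v‖)) := by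
          gcongr
          refine (WD_le _ _).trans ?_
          gcongr
          exact WD_le _ _
      _ = _ := by ring
  have h5 : c * ∑ i, ‖Wd V i v‖ ^ 2 ≤ ∑ i, ‖Wd V i v‖ ^ 2 :=
    mul_le_of_le_one_left (Finset.sum_nonneg fun i _ => by positivity) c1
  rw [mul_add] at h3
  have h6 : ‖AW X Y v‖ ^ 2 = _ := h1
  rw [h6]
  linarith

lemma Fop_dec {X Y : ι → V →L[ℝ] V} (h : Ell X Y) (u : Wf ι V) :
    Fop (fun i => X i + Y i) u.1 = (AW X Y (scW (fun a => (√(dg a + 1 : ℝ))⁻¹) u)).1 +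
      ∑ i, Dop _ (X i + Y i) (aop V i (scW (fun a => 1 - √(dg a / (dg a + 1) : ℝ)) u).1) := by
  ext β
  rw [lp.coeFn_add, Pi.add_apply, AW_apply, Aop_eq, Fop_apply, lp.coeFn_sum, Finset.sum_apply, ← Finset.sum_add_distrib]
  refine Finset.sum_congr rfl fun i _ => ?_
  rw [Dop_apply, aop_apply, scW_apply, scW_apply, scW_apply, ell_adj h, cc, dg_up]
  simp only [map_smul, smul_smul, _root_.neg_apply, smul_neg, sub_neg_eq_add, Nat.cast_add, Nat.cast_one]
  have e1 : √((β i + 1 : ℝ) / (dg β + 1)) * (1 - √((dg β + 1 : ℝ) / (dg β + 1 + 1))) =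
      √((β i + 1 : ℝ) / (dg β + 1)) - √(β i + 1 : ℝ) * (√(dg β + 1 + 1 : ℝ))⁻¹ := by
    rw [mul_sub, mul_one, ← Real.sqrt_mul (by positivity), ← Real.sqrt_inv, ← Real.sqrt_mul (by positivity)]
    congr 2
    field_simp
  have e2 : √((β i : ℝ) / dg β) • (X i - Y i) (u.1 (dn i β)) = (√(β i : ℝ) * (√(dg (dn i β) + 1 : ℝ))⁻¹) • (X i - Y i) (u.1 (dn i β)) := by
    by_cases hb : β i = 0
    · simp [hb]
    · have := dg_dn i β hb
      rw [← this, Real.sqrt_div (by positivity), div_eq_mul_inv]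
      push_cast; rfl
  rw [e1, e2, sub_smul]
  abel

lemma g_bound (d m : ℕ) (h : m ≤ d) : |1 - √(d / (d + 1) : ℝ)| ≤ 1 / (m + 1) := by
  have h0 : (0 : ℝ) ≤ d / (d + 1) := by positivity
  have h1 : (d / (d + 1) : ℝ) ≤ 1 := by rw [div_le_one (by positivity)]; linarith
  have h2 : (d / (d + 1) : ℝ) ≤ √(d / (d + 1) : ℝ) := by
    apply Real.le_sqrt_of_sq_le
    nlinarith
  have h3 : √(d / (d + 1) : ℝ) ≤ 1 := by rw [Real.sqrt_le_one]; exact h1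
  rw [abs_of_nonneg (by linarith)]
  have h4 : 1 - (d / (d + 1) : ℝ) = 1 / (d + 1) := by field_simp; ring
  have h5 : (1 : ℝ) / (d + 1) ≤ 1 / (m + 1) := by gcongr
  linarith

lemma low_W [FiniteDimensional ℝ V] [Nonempty ι] {X Y : ι → V →L[ℝ] V} (h : Ell X Y) : ∃ (m : ℕ) (k : ℝ), 0 < k ∧
    ∀ u : Wf ι V, (∀ a, dg a < m → u.1 a = 0) → k * ‖u‖ ≤ ‖Fop (fun i => X i + Y i) u.1‖ := by
  obtain ⟨c, c0, c1, hc⟩ := ell_const h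
  set C := 2 * (∑ i, ‖X i‖ * ‖Y i‖) with hC
  set K := ∑ i, ‖X i + Y i‖ with hK
  have C0 : 0 ≤ C := by positivity
  have K0 : 0 ≤ K := by positivity
  obtain ⟨m, hm⟩ := exists_nat_gt (C / c + K / (√c / 2))
  have sc : 0 < √c := Real.sqrt_pos.2 c0
  have m1 : C ≤ c * (m + 1) := by
    have : 0 ≤ K / (√c / 2) := by positivity
    have : C / c ≤ m + 1 := by linarith
    rwa [div_le_iff₀ c0, mul_comm] at this
  have m2 : K ≤ (√c / 2) * (m + 1) := by
    have : 0 ≤ C / c := by positivity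
    have : K / (√c / 2) ≤ m + 1 := by linarith
    rwa [div_le_iff₀ (by positivity), mul_comm] at this
  refine ⟨m, √c / 2, by positivity, fun u hu => ?_⟩
  set v := scW (fun a => (√(dg a + 1 : ℝ))⁻¹) u with hv
  set r := scW (fun a => 1 - √(dg a / (dg a + 1) : ℝ)) u with hr
  have e1 : ∑' a, (dg a + 1 : ℝ) * ‖v.1 a‖ ^ 2 = ‖u‖ ^ 2 := by
    rw [W_norm]
    refine tsum_congr fun a => ?_
    rw [hv, scW_apply, norm_smul, mul_pow, norm_inv, Real.norm_of_nonneg (Real.sqrt_nonneg _), inv_pow, Real.sq_sqrt (by positivity)]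
    field_simp
  have e2 : (m + 1) * ‖v‖ ^ 2 ≤ ‖u‖ ^ 2 := by
    rw [← e1, W_norm, ← tsum_mul_left]
    have hs : ∀ g : (ι → ℕ) → ℝ, Summable fun a => g a * ‖v.1 a‖ ^ 2 := fun g =>
      summable_of_finite_support ((show (Function.support (v.1 : FF ι V)).Finite from v.2).subset (fun a ha h0 => ha (by
        show g a * ‖v.1 a‖ ^ 2 = 0
        rw [h0, norm_zero]; norm_num)))
    refine Summable.tsum_le_tsum (fun a => ?_) (hs _) (hs _)
    by_cases ha : dg a < m
    · rw [hv, scW_apply, hu a ha]; simp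
    · have : (m : ℝ) ≤ dg a := by exact_mod_cast not_lt.1 ha
      gcongr
  have e3 : ‖r.1‖ ≤ 1 / (m + 1) * ‖u.1‖ := by
    refine Hl.norm_le (by positivity) fun a => ?_
    rw [hr, scW_apply, norm_smul]
    by_cases ha : dg a < m
    · rw [hu a ha]; simp
    · gcongr
      exact g_bound _ _ (not_lt.1 ha)
  have e4 := AW_low h c1 c0.le hc v
  rw [e1] at e4
  have e5 : √c * ‖u‖ ≤ ‖AW X Y v‖ := by
    apply le_of_sq_le_sq _ (norm_nonneg _)
    rw [mul_pow, Real.sq_sqrt c0.le]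
    have : C * ‖v‖ ^ 2 ≤ c * ‖u‖ ^ 2 := by
      calc C * ‖v‖ ^ 2 ≤ (c * (m + 1)) * ‖v‖ ^ 2 := by gcongr
        _ = c * ((m + 1) * ‖v‖ ^ 2) := by ring
        _ ≤ _ := by gcongr
    linarith
  have e6 : ‖∑ i, Dop _ (X i + Y i) (aop V i r.1)‖ ≤ (√c / 2) * ‖u‖ := by
    calc _ ≤ ∑ i, ‖X i + Y i‖ * (1 / (m + 1) * ‖u.1‖) := by
          refine (norm_sum_le _ _).trans (Finset.sum_le_sum fun i _ => ?_)
          refine (Dop_le _ _).trans ?_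
          gcongr
          exact (aop_le i _).trans e3
      _ = K * (1 / (m + 1) * ‖u.1‖) := by rw [← Finset.sum_mul]
      _ ≤ ((√c / 2) * (m + 1)) * (1 / (m + 1) * ‖u.1‖) := by gcongr
      _ = _ := by field_simp; rfl
  rw [Fop_dec h]
  have e7 := norm_sub_le_norm_add (AW X Y v).1 (∑ i, Dop _ (X i + Y i) (aop V i r.1))
  have e8 : ‖(AW X Y v).1‖ = ‖AW X Y v‖ := rfl
  rw [e8] at e7
  linarith

theorem Ell.fred [FiniteDimensional ℝ V] [Nonempty ι] {X Y : ι → V →L[ℝ] V} (h : Ell X Y) :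
    SkewFred (Fop (fun i => X i + Y i)) := by
  classical
  obtain ⟨m, k, k0, hk⟩ := low_W h
  refine ⟨Fop_skew _, Sb V {a | dg a < m}, Sb_fin (deg_fin m), k, k0, fun u hu => ?_⟩
  have hu0 : ∀ a, dg a < m → u a = 0 := by
    intro a ha
    have h1 : lp.single 2 a (u a) ∈ Sb V {a : ι → ℕ | dg a < m} := by
      intro b hb
      refine lp.single_apply_ne _ _ _ ?_
      rintro rfl; exact hb ha
    have h2 := (Submodule.mem_orthogonal _ _).1 hu _ h1
    rw [lp.inner_single_left, inner_self_eq_zero] at h2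
    exact h2
  have hs : HasSum (fun a => lp.single 2 a (u a)) u := lp.hasSum_single (by norm_num) u
  have ht : Filter.Tendsto (fun s : Finset (ι → ℕ) => ∑ a ∈ s, lp.single 2 a (u a)) Filter.atTop (nhds u) := hs
  refine le_of_tendsto_of_tendsto' (ht.norm.const_mul k) (((Fop (fun i => X i + Y i)).continuous.tendsto u).comp ht).norm fun s => ?_
  have hval : ∀ b, (∑ a ∈ s, lp.single 2 a (u a) : Hl (ι → ℕ) V) b = if b ∈ s then u b else 0 := by
    intro b
    rw [lp.coeFn_sum, Finset.sum_apply]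
    split_ifs with hb
    · rw [Finset.sum_eq_single b]
      · exact lp.single_apply_self 2 _ _
      · intro c _ hc; exact lp.single_apply_ne _ _ _ hc.symm
      · exact fun h => absurd hb h
    · refine Finset.sum_eq_zero fun c hc => lp.single_apply_ne _ _ _ ?_
      rintro rfl; exact hb hc
  refine hk ⟨∑ a ∈ s, lp.single 2 a (u a), ?_⟩ ?_
  · refine s.finite_toSet.subset fun b hb => ?_
    by_contra h0
    apply hb
    rw [hval]; exact if_neg h0
  · intro a ha
    show (∑ a ∈ s, lp.single 2 a (u a) : Hl (ι → ℕ) V) a = 0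
    rw [hval, hu0 a ha]; simp

end Fock6

section IndexS
set_option linter.all false
open scoped InnerProductSpace Kronecker

section Lops
variable {V V' : Type*} [NormedAddCommGroup V] [InnerProductSpace ℝ V] [NormedAddCommGroup V'] [InnerProductSpace ℝ V']
variable {ι : Type*} [DecidableEq ι] [Fintype ι]

noncomputable def Lop (A : Type*) (L : V →L[ℝ] V') : Hl A V →ₗ[ℝ] Hl A V' where
  toFun u := ⟨fun a => L (u a), Hl.mem_of_sq (by
    refine Summable.of_nonneg_of_le (fun a => by positivity) (fun a => ?_) ((Hl.summable_sq u).mul_left (‖L‖ ^ 2))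
    rw [← mul_pow]
    gcongr
    exact L.le_opNorm _)⟩
  map_add' u v := by ext a; exact map_add L _ _
  map_smul' c u := by ext a; exact map_smul L _ _

@[simp] lemma Lop_apply {A : Type*} (L : V →L[ℝ] V') (u : Hl A V) (a) : Lop A L u a = L (u a) := rfl

variable [CompleteSpace V] [CompleteSpace V']

lemma Lop_Fop {Z : ι → V →L[ℝ] V} {Z' : ι → V' →L[ℝ] V'} (L : V →L[ℝ] V') (Q : V' →L[ℝ] V')
    (h1 : ∀ i x, L (Z i x) = Q (Z' i (L x)))
    (h2 : ∀ i x, L (ContinuousLinearMap.adjoint (Z i) x) = Q (ContinuousLinearMap.adjoint (Z' i) (L x))) (u : Hl (ι → ℕ) V) :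
    Lop _ L (Fop Z u) = Lop _ Q (Fop Z' (Lop _ L u)) := by
  ext β
  rw [Lop_apply, Lop_apply, Fop_apply, Fop_apply, map_sum, map_sum]
  refine Finset.sum_congr rfl fun i _ => ?_
  rw [map_sub, map_sub, map_smul, map_smul, map_smul, map_smul, h1, h2, Lop_apply, Lop_apply]

lemma Lop_Pop (L : V →L[ℝ] V') (u : Hl (ι → ℕ) V) : Lop _ L (Pop ι V u) = Pop ι V' (Lop _ L u) := by
  ext β
  rw [Lop_apply, Pop_apply, Pop_apply, Lop_apply, map_smul]

lemma Lop_ker {Z : ι → V →L[ℝ] V} {Z' : ι → V' →L[ℝ] V'} (L : V →L[ℝ] V') (Q : V' →L[ℝ] V')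
    (hQ : Function.Injective Q)
    (h1 : ∀ i x, L (Z i x) = Q (Z' i (L x)))
    (h2 : ∀ i x, L (ContinuousLinearMap.adjoint (Z i) x) = Q (ContinuousLinearMap.adjoint (Z' i) (L x)))
    (e : ℝ) (u : Hl (ι → ℕ) V) (hu : u ∈ kerP (Fop Z) (Pop ι V) e) :
    Lop _ L u ∈ kerP (Fop Z') (Pop ι V') e := by
  obtain ⟨ha, hb⟩ := hu
  constructor
  · have := Lop_Fop L Q h1 h2 u
    rw [ha, map_zero] at this
    ext β
    have h3 := congr_arg (fun w : Hl (ι → ℕ) V' => w β) this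
    apply hQ
    show Q (Fop Z' (Lop _ L u) β) = Q 0
    rw [map_zero]; exact h3.symm
  · rw [← Lop_Pop, hb, map_smul]

noncomputable def kerMap {Z : ι → V →L[ℝ] V} {Z' : ι → V' →L[ℝ] V'} (L : V →L[ℝ] V') (Q : V' →L[ℝ] V')
    (hQ : Function.Injective Q)
    (h1 : ∀ i x, L (Z i x) = Q (Z' i (L x)))
    (h2 : ∀ i x, L (ContinuousLinearMap.adjoint (Z i) x) = Q (ContinuousLinearMap.adjoint (Z' i) (L x)))
    (e : ℝ) : kerP (Fop Z) (Pop ι V) e →ₗ[ℝ] kerP (Fop Z') (Pop ι V') e :=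
  (Lop _ L).restrict (Lop_ker L Q hQ h1 h2 e)

lemma kerMap_apply {Z : ι → V →L[ℝ] V} {Z' : ι → V' →L[ℝ] V'} (L : V →L[ℝ] V') (Q : V' →L[ℝ] V')
    (hQ) (h1) (h2) (e : ℝ) (u : kerP (Fop Z) (Pop ι V) e) (a) :
    (kerMap (Z' := Z') L Q hQ h1 h2 e u).1 a = L (u.1 a) := rfl

lemma Fop_lin (Z Z' : ι → V →L[ℝ] V) (s : ℝ) : Fop (fun i => Z i + s • Z' i) = Fop Z + s • Fop Z' := by
  ext u β
  rw [Fop_apply, _root_.add_apply, _root_.smul_apply, lp.coeFn_add, lp.coeFn_smul, Pi.add_apply, Pi.smul_apply, Fop_apply, Fop_apply,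
    Finset.smul_sum, ← Finset.sum_add_distrib]
  refine Finset.sum_congr rfl fun i _ => ?_
  rw [map_add, map_smulₛₗ, _root_.add_apply, _root_.add_apply, _root_.smul_apply, _root_.smul_apply]
  simp only [smul_add, smul_sub, smul_comm s]
  simp
  abel
end Lops

variable {ι : Type*} [DecidableEq ι] [Fintype ι]
variable {m : Type*} [DecidableEq m] [Fintype m] {κ : Type*} [DecidableEq κ] [Fintype κ]

lemma neg_kron (A : Matrix m m ℝ) (B : Matrix κ κ ℝ) : (-A) ⊗ₖ B = -(A ⊗ₖ B) := by ext; simp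
lemma kron_neg (A : Matrix m m ℝ) (B : Matrix κ κ ℝ) : A ⊗ₖ (-B) = -(A ⊗ₖ B) := by ext; simp
lemma kron_mul (A A' : Matrix m m ℝ) (B B' : Matrix κ κ ℝ) : (A ⊗ₖ B) * (A' ⊗ₖ B') = (A * A') ⊗ₖ (B * B') :=
  (mul_kronecker_mul A A' B B').symm
lemma kron_tr (A : Matrix m m ℝ) (B : Matrix κ κ ℝ) : (A ⊗ₖ B)ᵀ = Aᵀ ⊗ₖ Bᵀ := (kroneckerMap_transpose _ _ _).symm

structure MEll (X Y : ι → Matrix m m ℝ) : Prop where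
  Xs : ∀ i, (X i)ᵀ = -X i
  Ys : ∀ i, (Y i)ᵀ = Y i
  XY : ∀ i j, X i * Y j = -(Y j * X i)
  YY1 : ∀ i, Y i * Y i = 1
  YY : ∀ i j, i ≠ j → Y i * Y j = -(Y j * Y i)
  inj : ∀ x : ι → ℝ, x ≠ 0 → ∀ v, (∑ i, x i • X i) *ᵥ v = 0 → v = 0

structure CS (γ : ι → Matrix κ κ ℝ) (ω : Matrix κ κ ℝ) : Prop where
  gs : ∀ i, (γ i)ᵀ = γ i
  ws : ωᵀ = ω
  g1 : ∀ i, γ i * γ i = 1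
  w1 : ω * ω = 1
  gg : ∀ i j, i ≠ j → γ i * γ j = -(γ j * γ i)
  gw : ∀ i, γ i * ω = -(ω * γ i)

noncomputable abbrev eE (A : Matrix m m ℝ) : EuclideanSpace ℝ m →L[ℝ] EuclideanSpace ℝ m := toEuclideanCLM (𝕜 := ℝ) A

lemma eE_adj (A : Matrix m m ℝ) : ContinuousLinearMap.adjoint (eE A) = eE Aᵀ := by
  rw [eE, ← ContinuousLinearMap.star_eq_adjoint, ← map_star, star_eq_conjTranspose, conjTranspose_eq_transpose_of_trivial]

lemma MEll.ell {X Y : ι → Matrix m m ℝ} (h : MEll X Y) : Ell (fun i => eE (X i)) (fun i => eE (Y i)) where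
  Xs i := by rw [eE_adj, h.Xs, eE, map_neg]
  Ys i := by rw [eE_adj, h.Ys]
  XY i j := by simp only [eE]; rw [← map_mul, ← map_mul, h.XY, map_neg]
  YY1 i := by simp only [eE]; rw [← map_mul, h.YY1, map_one]
  YY i j hij := by simp only [eE]; rw [← map_mul, ← map_mul, h.YY i j hij, map_neg]
  inj x hx v hv := by
    have : eE (∑ i, x i • X i) v = 0 := by
      rw [← hv, eE, map_sum, _root_.sum_apply]
      refine Finset.sum_congr rfl fun i _ => ?_
      rw [map_smul, _root_.smul_apply]
    have h2 := h.inj x hx v.ofLp (by rw [← ofLp_toEuclideanCLM (𝕜 := ℝ)]; exact congr_arg _ this)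
    ext i; exact congr_fun h2 i

noncomputable abbrev TT (Z : ι → Matrix m m ℝ) := Fop (fun i => eE (Z i))

lemma skew_ker {ι : Type*} [Fintype ι] [DecidableEq ι] (A : ι → Matrix m m ℝ) (hs : ∀ i, (A i)ᵀ = -A i)
    (ha : ∀ i j, i ≠ j → A i * A j = -(A j * A i)) (v : m → ℝ) (h : (∑ i, A i) *ᵥ v = 0) (i : ι) : A i *ᵥ v = 0 := by
  have e : ∀ i j, (A i *ᵥ v) ⬝ᵥ (A j *ᵥ v) = -(v ⬝ᵥ (A i * A j) *ᵥ v) := by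
    intro i j
    rw [← mulVec_mulVec, dotProduct_mulVec v (A i), ← mulVec_transpose, hs, neg_mulVec, neg_dotProduct, neg_neg]
  have h1 : ∑ i, (A i *ᵥ v) ⬝ᵥ (A i *ᵥ v) = 0 := by
    rw [← sum_symm (fun i j => (A i *ᵥ v) ⬝ᵥ (A j *ᵥ v)) _ (fun i => rfl)]
    · simp only [← dotProduct_sum, ← sum_mulVec]
      rw [h]; simp
    · intro i j hij
      rw [e, e, ha i j hij, neg_mulVec, dotProduct_neg]; ring
    · intro x hx; linarith
  have h2 := (Finset.sum_eq_zero_iff_of_nonneg (fun i _ => by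
    exact Finset.sum_nonneg fun k _ => mul_self_nonneg _)).1 h1 i (Finset.mem_univ i)
  exact dotProduct_self_eq_zero.1 h2

end IndexS

section IndexT
set_option linter.all false
open scoped InnerProductSpace Kronecker

variable {ι : Type*} [DecidableEq ι] [Fintype ι]
variable {m : Type*} [DecidableEq m] [Fintype m] {κ : Type*} [DecidableEq κ] [Fintype κ]

lemma inv_ker {A : Matrix m m ℝ} (h : A * A = 1 ∨ A * A = -1) (v : m → ℝ) (hv : A *ᵥ v = 0) : v = 0 := by
  have h1 : (A * A) *ᵥ v = 0 := by rw [← mulVec_mulVec, hv, mulVec_zero]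
  rcases h with h | h
  · rwa [h, one_mulVec] at h1
  · rw [h, neg_mulVec, one_mulVec] at h1; exact neg_eq_zero.1 h1

noncomputable def hX (X : ι → Matrix m m ℝ) (γ : ι → Matrix κ κ ℝ) (ω : Matrix κ κ ℝ) (s : ℝ) (i : ι) : Matrix (m × κ) (m × κ) ℝ :=
  (1 - s) • (X i ⊗ₖ ω) + s • ((1 : Matrix m m ℝ) ⊗ₖ (ω * γ i))

lemma kron_inj {A : Matrix m m ℝ} {ω : Matrix κ κ ℝ} (hω : ω * ω = 1) (hA : ∀ v, A *ᵥ v = 0 → v = 0) (v : m × κ → ℝ)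
    (hv : (A ⊗ₖ ω) *ᵥ v = 0) : v = 0 := by
  have hu : IsUnit A := by
    rw [← mulVec_injective_iff_isUnit]
    intro a b hab
    rw [← sub_eq_zero]
    apply hA
    rw [mulVec_sub]; exact sub_eq_zero.2 hab
  obtain ⟨B, hB⟩ := hu.exists_left_inv
  have h1 : ((B ⊗ₖ ω) * (A ⊗ₖ ω)) *ᵥ v = 0 := by rw [← mulVec_mulVec, hv, mulVec_zero]
  rwa [kron_mul, hB, hω, one_kronecker_one, one_mulVec] at h1

lemma CS.r_tr {γ : ι → Matrix κ κ ℝ} {ω : Matrix κ κ ℝ} (c : CS γ ω) (i : ι) : (ω * γ i)ᵀ = -(ω * γ i) := by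
  rw [transpose_mul, c.gs, c.ws, c.gw]
lemma CS.r_w {γ : ι → Matrix κ κ ℝ} {ω : Matrix κ κ ℝ} (c : CS γ ω) (i : ι) : (ω * γ i) * ω = -(ω * (ω * γ i)) := by
  rw [mul_assoc, c.gw, mul_neg]
lemma CS.r_r {γ : ι → Matrix κ κ ℝ} {ω : Matrix κ κ ℝ} (c : CS γ ω) (i j : ι) : (ω * γ i) * (ω * γ j) = -(γ i * γ j) := by
  rw [← mul_assoc, c.r_w, ← mul_assoc, c.w1, one_mul, neg_mul]

lemma MEll.hom {X Y : ι → Matrix m m ℝ} (h : MEll X Y) {γ : ι → Matrix κ κ ℝ} {ω : Matrix κ κ ℝ} (c : CS γ ω) (s : ℝ) :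
    MEll (hX X γ ω s) (fun i => Y i ⊗ₖ ω) where
  Xs i := by
    rw [hX, transpose_add, transpose_smul, transpose_smul, kron_tr, kron_tr, h.Xs, c.ws, c.r_tr, transpose_one, neg_kron, kron_neg]
    module
  Ys i := by rw [kron_tr, h.Ys, c.ws]
  XY i j := by
    simp only [hX, add_mul, mul_add, smul_mul, Matrix.mul_smul, kron_mul, h.XY i j, c.r_w, one_mul, mul_one, neg_kron, kron_neg]
    module
  YY1 i := by rw [kron_mul, h.YY1, c.w1, one_kronecker_one]
  YY i j hij := by rw [kron_mul, kron_mul, h.YY i j hij, neg_kron]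
  inj x hx v hv := by
    let A : Option ι → Matrix (m × κ) (m × κ) ℝ := fun o => match o with
      | none => (1 - s) • ((∑ i, x i • X i) ⊗ₖ ω)
      | some i => (s * x i) • ((1 : Matrix m m ℝ) ⊗ₖ (ω * γ i))
    have hXs : (∑ i, x i • X i)ᵀ = -∑ i, x i • X i := by
      rw [transpose_sum, ← Finset.sum_neg_distrib]
      exact Finset.sum_congr rfl fun i _ => by rw [transpose_smul, h.Xs, smul_neg]
    have hsum : ∑ o, A o = ∑ i, x i • hX X γ ω s i := by
      rw [Fintype.sum_option]
      simp only [A, hX, smul_add, Finset.sum_add_distrib]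
      congr 1
      · ext ⟨a, b⟩ ⟨a', b'⟩
        simp only [Matrix.smul_apply, kroneckerMap_apply, Matrix.sum_apply, smul_eq_mul, Finset.sum_mul, Finset.mul_sum]
        exact Finset.sum_congr rfl fun i _ => by ring
      · exact Finset.sum_congr rfl fun i _ => by rw [smul_smul, mul_comm]
    have key := skew_ker A ?_ ?_ v (by rw [hsum]; exact hv)
    · by_cases hs : s = 0
      · have := key none
        simp only [A, hs, sub_zero, one_smul] at this
        exact kron_inj c.w1 (h.inj x hx) v this
      · obtain ⟨i, hi⟩ : ∃ i, x i ≠ 0 := by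
          by_contra hh; push Not at hh; exact hx (funext hh)
        have := key (some i)
        simp only [A, smul_mulVec] at this
        have := (smul_eq_zero.1 this).resolve_left (mul_ne_zero hs hi)
        refine inv_ker (Or.inr ?_) v this
        rw [kron_mul, c.r_r, c.g1, one_mul, kron_neg, one_kronecker_one]
    · rintro (_ | i)
      · simp only [A]; rw [transpose_smul, kron_tr, hXs, c.ws, neg_kron, smul_neg]
      · simp only [A]; rw [transpose_smul, kron_tr, c.r_tr, transpose_one, kron_neg, smul_neg]
    · rintro (_ | i) (_ | j) hij
      · exact absurd rfl hij
      · simp only [A, smul_mul, Matrix.mul_smul, kron_mul, c.r_w, one_mul, mul_one, kron_neg]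
        module
      · simp only [A, smul_mul, Matrix.mul_smul, kron_mul, c.r_w, one_mul, mul_one, kron_neg]
        module
      · have : i ≠ j := fun h => hij (by rw [h])
        simp only [A, smul_mul, Matrix.mul_smul, kron_mul, c.r_r, one_mul, mul_one, kron_neg, c.gg i j this]
        module

noncomputable def prj (m : Type*) [Fintype m] {κ : Type*} [Fintype κ] (c : κ) : EuclideanSpace ℝ (m × κ) →L[ℝ] EuclideanSpace ℝ m :=
  LinearMap.toContinuousLinearMap
    { toFun := fun u => WithLp.toLp 2 (fun a => u (a, c))
      map_add' := fun u v => rfl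
      map_smul' := fun c u => rfl }
noncomputable def inc (m : Type*) [Fintype m] {κ : Type*} [Fintype κ] [DecidableEq κ] (c : κ) : EuclideanSpace ℝ m →L[ℝ] EuclideanSpace ℝ (m × κ) :=
  LinearMap.toContinuousLinearMap
    { toFun := fun u => WithLp.toLp 2 (fun a => if a.2 = c then u a.1 else 0)
      map_add' := fun u v => by ext a; by_cases h : a.2 = c <;> simp [h]
      map_smul' := fun r u => by ext a; by_cases h : a.2 = c <;> simp [h] }

lemma prj_apply (c : κ) (u : EuclideanSpace ℝ (m × κ)) (a) : prj m c u a = u (a, c) := rfl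
lemma inc_apply (c : κ) (u : EuclideanSpace ℝ m) (a) : inc m c u a = if a.2 = c then u a.1 else 0 := rfl

lemma prj_eE (Z : Matrix m m ℝ) (c : κ) (x) : prj m c (eE (Z ⊗ₖ (1 : Matrix κ κ ℝ)) x) = eE Z (prj m c x) := by
  ext a
  rw [prj_apply, eE, eE, ofLp_toEuclideanCLM, ofLp_toEuclideanCLM]
  simp only [mulVec, dotProduct, Fintype.sum_prod_type, kroneckerMap_apply, one_apply, mul_ite, mul_one, mul_zero, ite_mul, zero_mul,
    Finset.sum_ite_eq, Finset.mem_univ, if_true]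
  rfl

lemma inc_eE (Z : Matrix m m ℝ) (c : κ) (x) : inc m c (eE Z x) = eE (Z ⊗ₖ (1 : Matrix κ κ ℝ)) (inc m c x) := by
  ext ⟨a, b⟩
  rw [inc_apply, eE, eE, ofLp_toEuclideanCLM, ofLp_toEuclideanCLM]
  simp only [mulVec, dotProduct, Fintype.sum_prod_type, kroneckerMap_apply, one_apply, mul_ite, mul_one, mul_zero, ite_mul, zero_mul,
    Finset.sum_ite_eq, Finset.mem_univ, if_true, inc_apply]
  by_cases hb : b = c <;> simp [hb]

lemma kerP_tensor {Z : ι → Matrix m m ℝ} {ω : Matrix κ κ ℝ} (hω : ω * ω = 1) (hs : ωᵀ = ω) (e : ℝ)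
    (hf : FiniteDimensional ℝ (kerP (TT Z) (Pop ι _) e)) :
    Module.finrank ℝ (kerP (TT fun i => Z i ⊗ₖ ω) (Pop ι _) e) =
      Fintype.card κ * Module.finrank ℝ (kerP (TT Z) (Pop ι _) e) := by
  have hQ : Function.Injective (ContinuousLinearMap.id ℝ (EuclideanSpace ℝ m)) := fun _ _ h => h
  have hQ' : Function.Injective (eE ((1 : Matrix m m ℝ) ⊗ₖ ω)) := by
    intro a b hab
    have h1 : ∀ a, eE ((1 : Matrix m m ℝ) ⊗ₖ ω) (eE ((1 : Matrix m m ℝ) ⊗ₖ ω) a) = a := by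
      intro a
      have : eE ((1 : Matrix m m ℝ) ⊗ₖ ω) * eE ((1 : Matrix m m ℝ) ⊗ₖ ω) = 1 := by
        rw [eE, ← map_mul, kron_mul, hω, one_mul, one_kronecker_one, map_one]
      exact DFunLike.congr_fun this a
    rw [← h1 a, hab, h1]
  have eQ : ∀ (A : Matrix m m ℝ) (x), eE (A ⊗ₖ (1 : Matrix κ κ ℝ)) x = eE ((1 : Matrix m m ℝ) ⊗ₖ ω) (eE (A ⊗ₖ ω) x) := by
    intro A x
    have : eE (A ⊗ₖ (1 : Matrix κ κ ℝ)) = eE ((1 : Matrix m m ℝ) ⊗ₖ ω) * eE (A ⊗ₖ ω) := by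
      rw [eE, eE, eE, ← map_mul, kron_mul, hω, one_mul]
    rw [this]; rfl
  have step1 : kerP (TT fun i => Z i ⊗ₖ ω) (Pop ι _) e = kerP (TT fun i => Z i ⊗ₖ (1 : Matrix κ κ ℝ)) (Pop ι _) e := by
    have hF : ∀ u : Hl (ι → ℕ) (EuclideanSpace ℝ (m × κ)), TT (fun i => Z i ⊗ₖ (1 : Matrix κ κ ℝ)) u = Lop _ (eE ((1 : Matrix m m ℝ) ⊗ₖ ω)) (TT (fun i => Z i ⊗ₖ ω) u) := by
      intro u
      have := Lop_Fop (Z := fun i => eE (Z i ⊗ₖ (1 : Matrix κ κ ℝ))) (Z' := fun i => eE (Z i ⊗ₖ ω)) (ContinuousLinearMap.id ℝ _) (eE ((1 : Matrix m m ℝ) ⊗ₖ ω))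
        (fun i x => eQ _ _) (fun i x => by
          rw [eE_adj, eE_adj, kron_tr, kron_tr, hs, transpose_one]; exact eQ _ _) u
      exact this
    ext u
    show (_ = 0 ∧ _) ↔ (_ = 0 ∧ _)
    rw [hF]
    refine and_congr_left fun _ => ⟨fun h => by rw [h, map_zero], fun h => ?_⟩
    ext1
    funext β
    apply hQ'
    have := congr_arg (fun w : Hl (ι → ℕ) (EuclideanSpace ℝ (m × κ)) => w β) h
    rw [show (0 : Hl (ι → ℕ) (EuclideanSpace ℝ (m × κ))) β = 0 from rfl, map_zero]
    exact this
  rw [step1]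
  let P : ∀ c : κ, kerP (TT fun i => Z i ⊗ₖ (1 : Matrix κ κ ℝ)) (Pop ι _) e →ₗ[ℝ] kerP (TT Z) (Pop ι _) e := fun c =>
    kerMap (prj m c) (ContinuousLinearMap.id ℝ _) (fun _ _ h => h) (fun i x => prj_eE _ _ _) (fun i x => by
      rw [eE_adj, eE_adj, kron_tr, transpose_one]; exact prj_eE _ _ _) e
  let I : ∀ c : κ, kerP (TT Z) (Pop ι _) e →ₗ[ℝ] kerP (TT fun i => Z i ⊗ₖ (1 : Matrix κ κ ℝ)) (Pop ι _) e := fun c =>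
    kerMap (inc m c) (ContinuousLinearMap.id ℝ _) (fun _ _ h => h) (fun i x => inc_eE _ _ _) (fun i x => by
      rw [eE_adj, eE_adj, kron_tr, transpose_one]; exact inc_eE _ _ _) e
  let Φ : kerP (TT fun i => Z i ⊗ₖ (1 : Matrix κ κ ℝ)) (Pop ι _) e →ₗ[ℝ] (κ → kerP (TT Z) (Pop ι _) e) := LinearMap.pi P
  have hinj : Function.Injective Φ := by
    intro u v huv
    apply Subtype.ext
    ext1; funext β
    ext ⟨a, c⟩
    have h1 := congr_fun huv c
    have h2 := congr_arg (fun w : kerP (TT Z) (Pop ι _) e => (w.1 β) a) h1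
    exact h2
  have hsurj : Function.Surjective Φ := by
    intro w
    refine ⟨∑ c, I c (w c), ?_⟩
    funext c
    show P c (∑ c, I c (w c)) = w c
    rw [map_sum, Finset.sum_eq_single c]
    · apply Subtype.ext; ext1; funext β; ext a
      show (if c = c then _ else _) = _
      rw [if_pos rfl]; rfl
    · intro c' _ hc'
      apply Subtype.ext; ext1; funext β; ext a
      show (if c = c' then _ else _) = _
      rw [if_neg hc'.symm]; rfl
    · simp
  rw [(LinearEquiv.ofBijective Φ ⟨hinj, hsurj⟩).finrank_eq, Module.finrank_pi_fintype]
  simp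

lemma TT_add (A B : ι → Matrix m m ℝ) : TT (fun i => A i + B i) = Fop (fun i => eE (A i) + eE (B i)) := by
  simp only [TT, eE]; congr 1; funext i; exact map_add _ _ _

theorem idx_thm [Nonempty ι] [Nonempty κ] {X Y : ι → Matrix m m ℝ} (h : MEll X Y) {γ : ι → Matrix κ κ ℝ} {ω : Matrix κ κ ℝ} (c : CS γ ω) :
    2 ^ Fintype.card ι * idx (TT fun i => X i + Y i) (Pop ι _) = Fintype.card m := by
  have hcont := idx_const (P := Pop ι _) (fun s : ℝ => TT fun i => hX X γ ω s i + Y i ⊗ₖ ω) ?_ ?_ ?_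
  · have h1 : 2 ^ Fintype.card ι * idx (TT fun i => hX X γ ω 1 i + Y i ⊗ₖ ω) (Pop ι _) = Fintype.card (m × κ) := by
      have := idx_cliff (h.hom c 1).ell ?_ ?_
      · rw [TT_add, this]; simp
      · intro i
        simp only [hX, sub_self, zero_smul, zero_add, one_smul, eE]
        rw [← map_mul, kron_mul, c.r_r, c.g1, one_mul, kron_neg, one_kronecker_one, map_neg, map_one]
      · intro i j hij
        simp only [hX, sub_self, zero_smul, zero_add, one_smul, eE]
        rw [← map_mul, ← map_mul, kron_mul, kron_mul, c.r_r, c.r_r, c.gg i j hij, kron_neg, kron_neg, neg_neg]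
        rw [map_neg, neg_neg]
    have h0 : idx (TT fun i => hX X γ ω 0 i + Y i ⊗ₖ ω) (Pop ι _) = Fintype.card κ * idx (TT fun i => X i + Y i) (Pop ι _) := by
      have e0 : (fun i => hX X γ ω 0 i + Y i ⊗ₖ ω) = fun i => (X i + Y i) ⊗ₖ ω := by
        funext i
        rw [hX, add_kronecker]; simp
      have fr := h.ell.fred
      rw [← TT_add] at fr
      rw [e0, idx, idx, kerP_tensor c.w1 c.ws _ (finite_kerP fr _), kerP_tensor c.w1 c.ws _ (finite_kerP fr _)]
      push_cast; ring
    rw [← hcont, h0, Fintype.card_prod] at h1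
    have hk : (Fintype.card κ : ℤ) ≠ 0 := by exact_mod_cast Fintype.card_ne_zero
    apply mul_left_cancel₀ hk
    push_cast at h1
    linarith
  · have : (fun s : ℝ => TT fun i => hX X γ ω s i + Y i ⊗ₖ ω) = fun s : ℝ =>
        (TT fun i => X i ⊗ₖ ω + Y i ⊗ₖ ω) + s • (TT fun i => (1 : Matrix m m ℝ) ⊗ₖ (ω * γ i) - X i ⊗ₖ ω) := by
      funext s
      rw [← Fop_lin]
      simp only [TT]
      congr 1
      funext i
      simp only [eE]
      rw [← map_smul, ← map_add]
      congr 1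
      rw [hX]; module
    rw [this]
    fun_prop
  · intro s
    show SkewFred (TT fun i => hX X γ ω s i + Y i ⊗ₖ ω)
    rw [TT_add]
    exact (h.hom c s).ell.fred
  · intro s; exact Fop_odd _

end IndexT

section CliffS
set_option linter.all false
open scoped Kronecker

def sgn2 (a : ZMod 2) : ℝ := if a = 0 then 1 else -1

lemma sgn2_add (a b : ZMod 2) : sgn2 (a + b) = sgn2 a * sgn2 b := by
  have : ∀ a b : ZMod 2, (a + b = 0 ↔ (a = 0 ↔ b = 0)) := by decide
  simp only [sgn2, this]
  by_cases ha : a = 0 <;> by_cases hb : b = 0 <;> simp [ha, hb]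

lemma vec2_self {k : ℕ} (b : Fin k → ZMod 2) : b + b = 0 := by
  funext i
  have : ∀ x : ZMod 2, x + x = 0 := by decide
  exact this _

def pstr {k : ℕ} (p : (Fin k → ZMod 2) × (Fin k → ZMod 2)) : Matrix (Fin k → ZMod 2) (Fin k → ZMod 2) ℝ :=
  of fun r c => if c = r + p.2 then sgn2 (p.1 ⬝ᵥ r) else 0

lemma pstr_mul {k : ℕ} (p q : (Fin k → ZMod 2) × (Fin k → ZMod 2)) :
    pstr p * pstr q = sgn2 (q.1 ⬝ᵥ p.2) • pstr (p + q) := by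
  ext r c
  rw [Matrix.mul_apply, Finset.sum_eq_single (r + p.2)]
  · simp only [pstr, of_apply, Matrix.smul_apply, if_true, Prod.snd_add, Prod.fst_add, smul_eq_mul, add_assoc]
    split_ifs with h
    · rw [dotProduct_add, add_dotProduct, sgn2_add, sgn2_add]; ring
    · simp
  · intro s _ hs
    simp [pstr, hs]
  · simp

lemma pstr_tr {k : ℕ} (p : (Fin k → ZMod 2) × (Fin k → ZMod 2)) :
    (pstr p)ᵀ = sgn2 (p.1 ⬝ᵥ p.2) • pstr p := by
  ext r c
  simp only [pstr, transpose_apply, of_apply, Matrix.smul_apply, smul_eq_mul]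
  have : r = c + p.2 ↔ c = r + p.2 := by
    constructor
    · rintro rfl; rw [add_assoc, vec2_self, add_zero]
    · rintro rfl; rw [add_assoc, vec2_self, add_zero]
  simp only [this]
  split_ifs with h
  · rw [h, dotProduct_add, sgn2_add]; ring
  · simp

lemma pstr_zero {k : ℕ} : pstr (0 : (Fin k → ZMod 2) × (Fin k → ZMod 2)) = 1 := by
  ext r c
  simp only [pstr, of_apply, Prod.snd_zero, Prod.fst_zero, add_zero, zero_dotProduct, one_apply, sgn2, if_true, eq_comm]

lemma pstr_sq {k : ℕ} (p : (Fin k → ZMod 2) × (Fin k → ZMod 2)) : pstr p * pstr p = sgn2 (p.1 ⬝ᵥ p.2) • 1 := by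
  rw [pstr_mul, ← pstr_zero]
  congr 2
  exact Prod.ext (vec2_self _) (vec2_self _)

lemma sgn2_sq (a : ZMod 2) : sgn2 a * sgn2 a = 1 := by
  unfold sgn2; split_ifs <;> norm_num

lemma pstr_comm {k : ℕ} (p q : (Fin k → ZMod 2) × (Fin k → ZMod 2)) :
    pstr p * pstr q = sgn2 (p.1 ⬝ᵥ q.2 + q.1 ⬝ᵥ p.2) • (pstr q * pstr p) := by
  rw [pstr_mul, pstr_mul, smul_smul, add_comm q p, sgn2_add, mul_comm (sgn2 (p.1 ⬝ᵥ q.2)), mul_assoc, sgn2_sq, mul_one]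

lemma sgn2_zero : sgn2 0 = 1 := by simp [sgn2]
lemma sgn2_one : sgn2 1 = -1 := by simp [sgn2]

structure CSJ {ι : Type*} {κ : Type*} [DecidableEq κ] [Fintype κ] {r : ℕ} (γ : ι → Matrix κ κ ℝ) (ω : Matrix κ κ ℝ) (J : Fin r → Matrix κ κ ℝ) (ε : ℝ) : Prop
    extends CS γ ω where
  J1 : ∀ a, J a * J a = -1
  JJ : ∀ a b, a ≠ b → J a * J b = -(J b * J a)
  Jg : ∀ a i, J a * γ i = ε • (γ i * J a)
  Jw : ∀ a, J a * ω = ε • (ω * J a)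

lemma CSJ.comp {ι ι' κ : Type*} [DecidableEq κ] [Fintype κ] {r : ℕ} {γ : ι → Matrix κ κ ℝ} {ω : Matrix κ κ ℝ} {J : Fin r → Matrix κ κ ℝ} {ε : ℝ}
    (h : CSJ γ ω J ε) (e : ι' → ι) (he : Function.Injective e) : CSJ (fun i => γ (e i)) ω J ε where
  gs i := h.gs _
  ws := h.ws
  g1 i := h.g1 _
  w1 := h.w1
  gg i j hij := h.gg _ _ (he.ne hij)
  gw i := h.gw _
  J1 := h.J1
  JJ := h.JJ
  Jg a i := h.Jg _ _
  Jw := h.Jw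

lemma csj_pstr {k n r : ℕ} (P : Fin n → (Fin k → ZMod 2) × (Fin k → ZMod 2)) (w : (Fin k → ZMod 2) × (Fin k → ZMod 2))
    (J : Fin r → (Fin k → ZMod 2) × (Fin k → ZMod 2)) (ε : ZMod 2)
    (h1 : ∀ i, (P i).1 ⬝ᵥ (P i).2 = 0) (h2 : w.1 ⬝ᵥ w.2 = 0) (h3 : ∀ i, (J i).1 ⬝ᵥ (J i).2 = 1)
    (h4 : ∀ i j, i ≠ j → (P i).1 ⬝ᵥ (P j).2 + (P j).1 ⬝ᵥ (P i).2 = 1)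
    (h5 : ∀ i, (P i).1 ⬝ᵥ w.2 + w.1 ⬝ᵥ (P i).2 = 1)
    (h6 : ∀ i j, i ≠ j → (J i).1 ⬝ᵥ (J j).2 + (J j).1 ⬝ᵥ (J i).2 = 1)
    (h7 : ∀ i j, (J i).1 ⬝ᵥ (P j).2 + (P j).1 ⬝ᵥ (J i).2 = ε)
    (h8 : ∀ i, (J i).1 ⬝ᵥ w.2 + w.1 ⬝ᵥ (J i).2 = ε) :
    CSJ (fun i => pstr (P i)) (pstr w) (fun a => pstr (J a)) (sgn2 ε) where
  gs i := by rw [pstr_tr, h1, sgn2_zero, one_smul]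
  ws := by rw [pstr_tr, h2, sgn2_zero, one_smul]
  g1 i := by rw [pstr_sq, h1, sgn2_zero, one_smul]
  w1 := by rw [pstr_sq, h2, sgn2_zero, one_smul]
  gg i j hij := by rw [pstr_comm, h4 i j hij, sgn2_one, neg_one_smul]
  gw i := by rw [pstr_comm, h5 i, sgn2_one, neg_one_smul]
  J1 a := by rw [pstr_sq, h3, sgn2_one, neg_one_smul]
  JJ i j hij := by rw [pstr_comm, h6 i j hij, sgn2_one, neg_one_smul]
  Jg a i := by rw [pstr_comm, h7]
  Jw a := by rw [pstr_comm, h8]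

def P8 : Fin 8 → (Fin 4 → ZMod 2) × (Fin 4 → ZMod 2) :=
  ![(![0,0,0,0],![0,0,0,1]), (![0,0,0,1],![0,0,0,0]), (![0,0,1,1],![0,0,1,1]), (![0,1,0,1],![0,1,1,1]), (![0,1,1,1],![1,1,0,1]),
    (![1,0,0,1],![1,1,1,1]), (![1,0,1,1],![1,0,0,1]), (![1,1,0,1],![1,0,1,1])]
def w8 : (Fin 4 → ZMod 2) × (Fin 4 → ZMod 2) := (![1,1,1,1],![0,1,0,1])

lemma cs8 (J : Fin 0 → (Fin 4 → ZMod 2) × (Fin 4 → ZMod 2)) : CSJ (fun i => pstr (P8 i)) (pstr w8) (fun a => pstr (J a)) (sgn2 0) :=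
  csj_pstr P8 w8 J 0 (by decide) (by decide) (fun i => i.elim0) (by decide) (by decide) (fun i => i.elim0) (fun i => i.elim0) (fun i => i.elim0)

def P1 : Fin 1 → (Fin 1 → ZMod 2) × (Fin 1 → ZMod 2) := ![(![0],![1])]
def w1 : (Fin 1 → ZMod 2) × (Fin 1 → ZMod 2) := (![1],![0])
def J1 : Fin 1 → (Fin 1 → ZMod 2) × (Fin 1 → ZMod 2) := ![(![1],![1])]
lemma cs1 : CSJ (fun i => pstr (P1 i)) (pstr w1) (fun a => pstr (J1 a)) (sgn2 1) :=
  csj_pstr P1 w1 J1 1 (by decide) (by decide) (by decide) (by decide) (by decide) (by decide) (by decide) (by decide)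

def P4 : Fin 4 → (Fin 3 → ZMod 2) × (Fin 3 → ZMod 2) :=
  ![(![0,0,0],![0,0,1]), (![0,0,1],![0,0,0]), (![0,1,1],![0,1,1]), (![1,0,1],![1,1,1])]
def w4 : (Fin 3 → ZMod 2) × (Fin 3 → ZMod 2) := (![1,1,1],![1,0,1])
def J4 : Fin 2 → (Fin 3 → ZMod 2) × (Fin 3 → ZMod 2) := ![(![0,1,0],![1,1,0]), (![1,0,0],![1,0,0])]
lemma cs4 : CSJ (fun i => pstr (P4 i)) (pstr w4) (fun a => pstr (J4 a)) (sgn2 0) :=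
  csj_pstr P4 w4 J4 0 (by decide) (by decide) (by decide) (by decide) (by decide) (by decide) (by decide) (by decide)

def HasCS (n G r : ℕ) (ε : ℝ) : Prop :=
  ∃ (κ : Type) (_ : DecidableEq κ) (_ : Fintype κ) (γ : Fin n → Matrix κ κ ℝ) (ω : Matrix κ κ ℝ) (J : Fin r → Matrix κ κ ℝ),
    CSJ γ ω J ε ∧ Fintype.card κ = G

lemma HasCS.step {n G r : ℕ} {ε : ℝ} (h : HasCS n G r ε) : HasCS (n + 8) (G * 16) r ε := by
  obtain ⟨κ, _, _, γ, ω, J, h, hG⟩ := h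
  have c := cs8 (fun i => i.elim0)
  let γ' : Fin n ⊕ Fin 8 → Matrix (κ × (Fin 4 → ZMod 2)) (κ × (Fin 4 → ZMod 2)) ℝ :=
    Sum.elim (fun i => γ i ⊗ₖ 1) (fun i => ω ⊗ₖ pstr (P8 i))
  have key : CSJ γ' (ω ⊗ₖ pstr w8) (fun a => J a ⊗ₖ (1 : Matrix (Fin 4 → ZMod 2) (Fin 4 → ZMod 2) ℝ)) ε :=
    { gs := by
        rintro (i | i)
        · simp only [γ', Sum.elim_inl]; rw [kron_tr, h.gs, transpose_one]
        · simp only [γ', Sum.elim_inr]; rw [kron_tr, h.ws, c.gs]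
      ws := by rw [kron_tr, h.ws, c.ws]
      g1 := by
        rintro (i | i)
        · simp only [γ', Sum.elim_inl]; rw [kron_mul, h.g1, one_mul, one_kronecker_one]
        · simp only [γ', Sum.elim_inr]; rw [kron_mul, h.w1, c.g1, one_kronecker_one]
      w1 := by rw [kron_mul, h.w1, c.w1, one_kronecker_one]
      gg := by
        rintro (i | i) (j | j) hij
        · simp only [γ', Sum.elim_inl]; rw [kron_mul, kron_mul, h.gg i j (fun h => hij (by rw [h])), neg_kron]
        · simp only [γ', Sum.elim_inl, Sum.elim_inr]; rw [kron_mul, kron_mul, h.gw, neg_kron, one_mul, mul_one]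
        · simp only [γ', Sum.elim_inl, Sum.elim_inr]; rw [kron_mul, kron_mul, h.gw, neg_kron, one_mul, mul_one, neg_neg]
        · simp only [γ', Sum.elim_inr]; rw [kron_mul, kron_mul, c.gg i j (fun h => hij (by rw [h])), kron_neg]
      gw := by
        rintro (i | i)
        · simp only [γ', Sum.elim_inl]; rw [kron_mul, kron_mul, h.gw, neg_kron, one_mul, mul_one]
        · simp only [γ', Sum.elim_inr]; rw [kron_mul, kron_mul, c.gw, kron_neg]
      J1 := fun a => by rw [kron_mul, h.J1, one_mul, neg_kron, one_kronecker_one]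
      JJ := fun a b hab => by rw [kron_mul, kron_mul, h.JJ a b hab, neg_kron]
      Jg := by
        rintro a (i | i)
        · simp only [γ', Sum.elim_inl]; rw [kron_mul, kron_mul, h.Jg, smul_kronecker]
        · simp only [γ', Sum.elim_inr]; rw [kron_mul, kron_mul, h.Jw, smul_kronecker, one_mul, mul_one]
      Jw := fun a => by rw [kron_mul, kron_mul, h.Jw, smul_kronecker, one_mul, mul_one] }
  refine ⟨κ × (Fin 4 → ZMod 2), inferInstance, inferInstance, _, _, _,
    key.comp (finSumFinEquiv (m := n) (n := 8)).symm (Equiv.injective _), ?_⟩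
  rw [Fintype.card_prod, hG, Fintype.card_fun, ZMod.card, Fintype.card_fin]; norm_num

lemma HasCS.iter {n G r : ℕ} {ε : ℝ} (h : HasCS n G r ε) (j : ℕ) : HasCS (8 * j + n) (G * 16 ^ j) r ε := by
  induction j with
  | zero => simpa using h
  | succ j ih =>
    have := ih.step
    convert this using 1 <;> ring

lemma hasCS0 : HasCS 0 1 0 1 := by
  refine ⟨Unit, inferInstance, inferInstance, fun i => i.elim0, 1, fun i => i.elim0, ?_, by simp⟩
  constructor
  · constructor
    all_goals first | (intro i; exact i.elim0) | simp
  all_goals (intro i; exact i.elim0)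

lemma hasCS1 : HasCS 1 2 1 (-1) := by
  refine ⟨_, inferInstance, inferInstance, _, _, _, by simpa only [sgn2_one] using cs1, ?_⟩
  rw [Fintype.card_fun, ZMod.card, Fintype.card_fin]; norm_num
lemma hasCS4 : HasCS 4 8 2 1 := by
  refine ⟨_, inferInstance, inferInstance, _, _, _, by simpa only [sgn2_zero] using cs4, ?_⟩
  rw [Fintype.card_fun, ZMod.card, Fintype.card_fin]; norm_num

end CliffS

section AppS
set_option linter.all false
open scoped Kronecker

variable {ι : Type*} [DecidableEq ι] [Fintype ι]
variable {m : Type*} [DecidableEq m] [Fintype m]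

/-- pointwise symmetry acting on the kernel -/
lemma Jmaps {X Y : ι → Matrix m m ℝ} (h : MEll X Y) (J : Matrix m m ℝ) (ε : ℝ) (hε : ε ≠ 0)
    (hX : ∀ i, J * X i = ε • (X i * J)) (hY : ∀ i, J * Y i = ε • (Y i * J)) (e : ℝ) :
    ∃ L : kerP (TT fun i => X i + Y i) (Pop ι _) e →ₗ[ℝ] kerP (TT fun i => X i + Y i) (Pop ι _) e,
      ∀ u a, (L u).1 a = eE J (u.1 a) := by
  have aux : ∀ A : Matrix m m ℝ, J * A = ε • (A * J) → ∀ x, eE J (eE A x) = (ε • ContinuousLinearMap.id ℝ (EuclideanSpace ℝ m)) (eE A (eE J x)) := by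
    intro A hA x
    have : eE J * eE A = ε • (eE A * eE J) := by rw [eE, eE, ← map_mul, hA, map_smul, map_mul]
    exact DFunLike.congr_fun this x
  have hQ : Function.Injective (ε • ContinuousLinearMap.id ℝ (EuclideanSpace ℝ m)) := by
    intro a b hab
    exact smul_right_injective _ hε hab
  refine ⟨kerMap (eE J) (ε • ContinuousLinearMap.id ℝ _) hQ (fun i x => aux _ ?_ x) (fun i x => ?_) e, fun u a => rfl⟩
  · rw [mul_add, add_mul, hX, hY, smul_add]
  · rw [eE_adj]
    refine aux _ ?_ x
    rw [transpose_add, h.Xs, h.Ys, mul_add, add_mul, mul_neg, neg_mul, hX, hY, smul_add, smul_neg]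

lemma dvd2 [Nonempty ι] {X Y : ι → Matrix m m ℝ} (h : MEll X Y) (J : Matrix m m ℝ) (ε : ℝ) (hε : ε ≠ 0)
    (hX : ∀ i, J * X i = ε • (X i * J)) (hY : ∀ i, J * Y i = ε • (Y i * J)) (hJ : J * J = -1) :
    2 ∣ idx (TT fun i => X i + Y i) (Pop ι _) := by
  have fr := h.ell.fred
  rw [← TT_add] at fr
  have hJ' : ∀ x, eE J (eE J x) = -x := by
    intro x
    have : eE J * eE J = -1 := by rw [eE, ← map_mul, hJ, map_neg, map_one]
    exact DFunLike.congr_fun this x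
  have key : ∀ e : ℝ, 2 ∣ Module.finrank ℝ (kerP (TT fun i => X i + Y i) (Pop ι _) e) := by
    intro e
    obtain ⟨L, hL⟩ := Jmaps h J ε hε hX hY e
    haveI := finite_kerP (P := Pop ι _) fr e
    refine two_dvd_of_J L fun v => ?_
    apply Subtype.ext; ext1; funext a
    rw [hL, hL]; exact hJ' _
  exact dvd_sub (by exact_mod_cast key 1) (by exact_mod_cast key (-1))

lemma dvd4 [Nonempty ι] {X Y : ι → Matrix m m ℝ} (h : MEll X Y) (J K : Matrix m m ℝ) (ε δ : ℝ) (hε : ε ≠ 0) (hδ : δ ≠ 0)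
    (hX : ∀ i, J * X i = ε • (X i * J)) (hY : ∀ i, J * Y i = ε • (Y i * J)) (hJ : J * J = -1)
    (hX' : ∀ i, K * X i = δ • (X i * K)) (hY' : ∀ i, K * Y i = δ • (Y i * K)) (hK : K * K = -1) (hJK : J * K = -(K * J)) :
    4 ∣ idx (TT fun i => X i + Y i) (Pop ι _) := by
  have fr := h.ell.fred
  rw [← TT_add] at fr
  have sq : ∀ J : Matrix m m ℝ, J * J = -1 → ∀ x, eE J (eE J x) = -x := by
    intro J hJ x
    have : eE J * eE J = -1 := by rw [eE, ← map_mul, hJ, map_neg, map_one]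
    exact DFunLike.congr_fun this x
  have hJK' : ∀ x, eE J (eE K x) = -(eE K (eE J x)) := by
    intro x
    have : eE J * eE K = -(eE K * eE J) := by rw [eE, eE, ← map_mul, hJK, map_neg, map_mul]
    exact DFunLike.congr_fun this x
  have key : ∀ e : ℝ, 4 ∣ Module.finrank ℝ (kerP (TT fun i => X i + Y i) (Pop ι _) e) := by
    intro e
    obtain ⟨L, hL⟩ := Jmaps h J ε hε hX hY e
    obtain ⟨L', hL'⟩ := Jmaps h K δ hδ hX' hY' e
    haveI := finite_kerP (P := Pop ι _) fr e
    refine four_dvd_of_J L L' (fun v => ?_) (fun v => ?_) (fun v => ?_)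
    · apply Subtype.ext; ext1; funext a
      rw [hL, hL]; exact sq _ hJ _
    · apply Subtype.ext; ext1; funext a
      rw [hL', hL']; exact sq _ hK _
    · apply Subtype.ext; ext1; funext a
      rw [hL, hL']
      show _ = -((L' (L v)).1 a)
      rw [hL', hL]; exact hJK' _
  exact dvd_sub (by exact_mod_cast key 1) (by exact_mod_cast key (-1))

variable {κ : Type*} [DecidableEq κ] [Fintype κ]

lemma mell_of {φ : ι → Matrix m m ℝ} (hs : ∀ i, (φ i)ᵀ = -φ i)
    (hi : ∀ x : ι → ℝ, x ≠ 0 → ∀ v, (∑ i, x i • φ i) *ᵥ v = 0 → v = 0) {γ : ι → Matrix κ κ ℝ} {ω : Matrix κ κ ℝ} (c : CS γ ω) :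
    MEll (fun i => φ i ⊗ₖ ω) (fun i => (1 : Matrix m m ℝ) ⊗ₖ γ i) where
  Xs i := by rw [kron_tr, hs, c.ws, neg_kron]
  Ys i := by rw [kron_tr, transpose_one, c.gs]
  XY i j := by rw [kron_mul, kron_mul, c.gw, kron_neg, one_mul, mul_one, neg_neg]
  YY1 i := by rw [kron_mul, one_mul, c.g1, one_kronecker_one]
  YY i j hij := by rw [kron_mul, kron_mul, c.gg i j hij, kron_neg]
  inj x hx v hv := by
    refine kron_inj c.w1 (hi x hx) v ?_
    rw [← hv]
    congr 1
    ext ⟨a, b⟩ ⟨a', b'⟩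
    simp only [Matrix.smul_apply, kroneckerMap_apply, Matrix.sum_apply, smul_eq_mul, Finset.sum_mul]
    exact Finset.sum_congr rfl fun i _ => by ring

lemma caseA {n G r : ℕ} {ε : ℝ} (hn : n ≠ 0) (hG : G ≠ 0) (h : HasCS n G r ε) {φ : Fin n → Matrix m m ℝ} (hs : ∀ i, (φ i)ᵀ = -φ i)
    (hi : ∀ x : Fin n → ℝ, x ≠ 0 → ∀ v, (∑ i, x i • φ i) *ᵥ v = 0 → v = 0) :
    ((2 : ℤ) ^ n) ∣ Fintype.card m * G := by
  obtain ⟨κ, _, _, γ, ω, J, c, rfl⟩ := h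
  haveI : Nonempty κ := Fintype.card_pos_iff.1 (Nat.pos_of_ne_zero hG)
  haveI : Nonempty (Fin n) := ⟨⟨0, Nat.pos_of_ne_zero hn⟩⟩
  have := idx_thm (mell_of hs hi c.toCS) c.toCS
  rw [Fintype.card_fin, Fintype.card_prod] at this
  push_cast at this
  exact ⟨_, this.symm⟩

lemma caseB {n G r : ℕ} {ε : ℝ} (hn : n ≠ 0) (hG : G ≠ 0) (h : HasCS n G r ε) {φ : Fin n → Matrix m m ℝ} (hs : ∀ i, (φ i)ᵀ = -φ i)
    (hi : ∀ x : Fin n → ℝ, x ≠ 0 → ∀ v, (∑ i, x i • φ i) *ᵥ v = 0 → v = 0)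
    (I : Matrix m m ℝ) (hI : I * I = -1) (hφ : ∀ i, I * φ i = -(φ i * I)) :
    ((2 : ℤ) ^ n * 2) ∣ Fintype.card m * G := by
  obtain ⟨κ, _, _, γ, ω, J, c, rfl⟩ := h
  haveI : Nonempty κ := Fintype.card_pos_iff.1 (Nat.pos_of_ne_zero hG)
  haveI : Nonempty (Fin n) := ⟨⟨0, Nat.pos_of_ne_zero hn⟩⟩
  have hm := mell_of hs hi c.toCS
  have := idx_thm hm c.toCS
  rw [Fintype.card_fin, Fintype.card_prod] at this
  push_cast at this
  rw [← this]
  refine mul_dvd_mul_left _ (dvd2 hm (I ⊗ₖ ω) (-1) (by norm_num) (fun i => ?_) (fun i => ?_) ?_)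
  · rw [kron_mul, kron_mul, hφ, neg_kron, neg_one_smul]
  · rw [kron_mul, kron_mul, c.gw, kron_neg, neg_one_smul, neg_neg, one_mul, mul_one]
  · rw [kron_mul, hI, c.w1, neg_kron, one_kronecker_one]

lemma caseC {n G : ℕ} (hn : n ≠ 0) (hG : G ≠ 0) (h : HasCS n G 1 (-1)) {φ : Fin n → Matrix m m ℝ} (hs : ∀ i, (φ i)ᵀ = -φ i)
    (hi : ∀ x : Fin n → ℝ, x ≠ 0 → ∀ v, (∑ i, x i • φ i) *ᵥ v = 0 → v = 0)
    (I : Matrix m m ℝ) (hI : I * I = -1) (hφ : ∀ i, I * φ i = -(φ i * I)) :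
    ((2 : ℤ) ^ n * 4) ∣ Fintype.card m * G := by
  obtain ⟨κ, _, _, γ, ω, J, c, rfl⟩ := h
  haveI : Nonempty κ := Fintype.card_pos_iff.1 (Nat.pos_of_ne_zero hG)
  haveI : Nonempty (Fin n) := ⟨⟨0, Nat.pos_of_ne_zero hn⟩⟩
  have hm := mell_of hs hi c.toCS
  have := idx_thm hm c.toCS
  rw [Fintype.card_fin, Fintype.card_prod] at this
  push_cast at this
  rw [← this]
  refine mul_dvd_mul_left _ (dvd4 hm (I ⊗ₖ ω) ((1 : Matrix m m ℝ) ⊗ₖ J 0) (-1) (-1) (by norm_num) (by norm_num)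
    (fun i => ?_) (fun i => ?_) ?_ (fun i => ?_) (fun i => ?_) ?_ ?_)
  · rw [kron_mul, kron_mul, hφ, neg_kron, neg_one_smul]
  · rw [kron_mul, kron_mul, c.gw, kron_neg, neg_one_smul, neg_neg, one_mul, mul_one]
  · rw [kron_mul, hI, c.w1, neg_kron, one_kronecker_one]
  · rw [kron_mul, kron_mul, c.Jw, kronecker_smul, one_mul, mul_one]
  · rw [kron_mul, kron_mul, c.Jg, kronecker_smul]
  · rw [kron_mul, c.J1, kron_neg, one_mul, one_kronecker_one]
  · rw [kron_mul, kron_mul, c.Jw, neg_one_smul, kron_neg, neg_neg, one_mul, mul_one]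

lemma caseD {n G : ℕ} (hn : n ≠ 0) (hG : G ≠ 0) (h : HasCS n G 2 1) {φ : Fin n → Matrix m m ℝ} (hs : ∀ i, (φ i)ᵀ = -φ i)
    (hi : ∀ x : Fin n → ℝ, x ≠ 0 → ∀ v, (∑ i, x i • φ i) *ᵥ v = 0 → v = 0) :
    ((2 : ℤ) ^ n * 4) ∣ Fintype.card m * G := by
  obtain ⟨κ, _, _, γ, ω, J, c, rfl⟩ := h
  haveI : Nonempty κ := Fintype.card_pos_iff.1 (Nat.pos_of_ne_zero hG)
  haveI : Nonempty (Fin n) := ⟨⟨0, Nat.pos_of_ne_zero hn⟩⟩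
  have hm := mell_of hs hi c.toCS
  have := idx_thm hm c.toCS
  rw [Fintype.card_fin, Fintype.card_prod] at this
  push_cast at this
  rw [← this]
  have q1 : ∀ (a : Fin 2) (i), (1 : Matrix m m ℝ) ⊗ₖ J a * (φ i ⊗ₖ ω) = (1 : ℝ) • ((φ i ⊗ₖ ω) * ((1 : Matrix m m ℝ) ⊗ₖ J a)) := by
    intro a i
    rw [kron_mul, kron_mul, c.Jw, kronecker_smul, one_mul, mul_one]
  have q2 : ∀ (a : Fin 2) (i), (1 : Matrix m m ℝ) ⊗ₖ J a * ((1 : Matrix m m ℝ) ⊗ₖ γ i) = (1 : ℝ) • (((1 : Matrix m m ℝ) ⊗ₖ γ i) * ((1 : Matrix m m ℝ) ⊗ₖ J a)) := by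
    intro a i
    rw [kron_mul, kron_mul, c.Jg, kronecker_smul]
  have q3 : ∀ (a : Fin 2), (1 : Matrix m m ℝ) ⊗ₖ J a * ((1 : Matrix m m ℝ) ⊗ₖ J a) = -1 := by
    intro a
    rw [kron_mul, c.J1, kron_neg, one_mul, one_kronecker_one]
  refine mul_dvd_mul_left _ (dvd4 hm ((1 : Matrix m m ℝ) ⊗ₖ J 0) ((1 : Matrix m m ℝ) ⊗ₖ J 1) 1 1 (by norm_num) (by norm_num)
    (q1 0) (q2 0) (q3 0) (q1 1) (q2 1) (q3 1) ?_)
  rw [kron_mul, kron_mul, c.JJ 0 1 (by decide), kron_neg]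

end AppS

section UpperS
set_option linter.all false
open scoped Kronecker

def UF (N n : ℕ) : Prop := ∃ F : Fin n → Matrix (Fin N) (Fin N) ℂ, (∀ i, (F i)ᵀ = -F i) ∧
  ∀ x : Fin n → ℝ, x ≠ 0 → ∀ v, (∑ i, x i • F i) *ᵥ v = 0 → v = 0

lemma UF.mono {N n n' : ℕ} (h : UF N n) (hn : n' ≤ n) : UF N n' := by
  obtain ⟨F, h1, h2⟩ := h
  have he := Fin.castLE_injective hn
  refine ⟨fun i => F (Fin.castLE hn i), fun i => h1 _, fun x hx v hv => ?_⟩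
  refine h2 (Function.extend (Fin.castLE hn) x 0) ?_ v ?_
  · intro h
    apply hx
    funext i
    have := congr_fun h (Fin.castLE hn i)
    rwa [he.extend_apply] at this
  · rw [← hv]
    congr 1
    symm
    apply Fintype.sum_of_injective _ he
    · intro i hi
      rw [Function.extend_apply' _ _ _ (fun ⟨a, ha⟩ => hi ⟨a, ha⟩)]
      simp
    · intro i; rw [he.extend_apply]

noncomputable def Sm {N : ℕ} (A : Matrix (Fin N) (Fin N) ℂ) : Matrix (Fin N ⊕ Fin N) (Fin N ⊕ Fin N) ℝ :=
  fromBlocks (A.map Complex.re) (A.map Complex.im) (A.map Complex.im) (-A.map Complex.re)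

def Im2 (N : ℕ) : Matrix (Fin N ⊕ Fin N) (Fin N ⊕ Fin N) ℝ := fromBlocks 0 (-1) 1 0

lemma Im2_sq (N : ℕ) : Im2 N * Im2 N = -1 := by
  rw [Im2, fromBlocks_multiply, ← fromBlocks_one, fromBlocks_neg]; simp
lemma Im2_tr (N : ℕ) : (Im2 N)ᵀ = -Im2 N := by
  rw [Im2, fromBlocks_transpose, fromBlocks_neg]; simp
lemma Im2_Sm {N : ℕ} (A : Matrix (Fin N) (Fin N) ℂ) : Im2 N * Sm A = -(Sm A * Im2 N) := by
  rw [Im2, Sm, fromBlocks_multiply, fromBlocks_multiply, fromBlocks_neg]; simp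
lemma Sm_tr {N : ℕ} {A : Matrix (Fin N) (Fin N) ℂ} (h : Aᵀ = -A) : (Sm A)ᵀ = -Sm A := by
  have e : ∀ i j, A j i = -A i j := fun i j => congr_fun (congr_fun h i) j
  have h1 : (A.map Complex.re)ᵀ = -A.map Complex.re := by ext i j; simp [e i j]
  have h2 : (A.map Complex.im)ᵀ = -A.map Complex.im := by ext i j; simp [e i j]
  rw [Sm, fromBlocks_transpose, fromBlocks_neg, transpose_neg, h1, h2]
lemma Sm_sum {N n : ℕ} (F : Fin n → Matrix (Fin N) (Fin N) ℂ) (x : Fin n → ℝ) : Sm (∑ i, x i • F i) = ∑ i, x i • Sm (F i) := by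
  ext a b
  rcases a with a | a <;> rcases b with b | b <;> simp [Sm, Matrix.sum_apply]
lemma Sm_ker {N : ℕ} {A : Matrix (Fin N) (Fin N) ℂ} (h : ∀ v, A *ᵥ v = 0 → v = 0) (v) (hv : Sm A *ᵥ v = 0) : v = 0 := by
  have h1 := h (fun i => ⟨v (Sum.inl i), -v (Sum.inr i)⟩) (by
    funext i
    have e1 := congr_fun hv (Sum.inl i)
    have e2 := congr_fun hv (Sum.inr i)
    simp only [Sm, mulVec, dotProduct, Fintype.sum_sum_type, fromBlocks_apply₁₁, fromBlocks_apply₁₂, fromBlocks_apply₂₁, fromBlocks_apply₂₂,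
      map_apply, Matrix.neg_apply, Pi.zero_apply, ← Finset.sum_add_distrib] at e1 e2
    simp only [mulVec, dotProduct, Pi.zero_apply]
    apply Complex.ext
    · rw [Complex.re_sum, Complex.zero_re, ← e1]
      exact Finset.sum_congr rfl fun j _ => by rw [Complex.mul_re]; ring
    · rw [Complex.im_sum, Complex.zero_im, ← e2]
      exact Finset.sum_congr rfl fun j _ => by rw [Complex.mul_im]; ring)
  funext a
  rcases a with a | a
  · exact congr_arg Complex.re (congr_fun h1 a)
  · exact neg_eq_zero.1 (congr_arg Complex.im (congr_fun h1 a))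

lemma UF.real {N n : ℕ} (h : UF N n) : ∃ φ : Fin n → Matrix (Fin N ⊕ Fin N) (Fin N ⊕ Fin N) ℝ, (∀ i, (φ i)ᵀ = -φ i) ∧
    (∀ x : Fin n → ℝ, x ≠ 0 → ∀ v, (∑ i, x i • φ i) *ᵥ v = 0 → v = 0) ∧ ∀ i, Im2 N * φ i = -(φ i * Im2 N) := by
  obtain ⟨F, h1, h2⟩ := h
  refine ⟨fun i => Sm (F i), fun i => Sm_tr (h1 i), fun x hx v hv => ?_, fun i => Im2_Sm _⟩
  rw [← Sm_sum] at hv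
  exact Sm_ker (h2 x hx) v hv

lemma UF.real' {N n : ℕ} (h : UF N n) : ∃ φ : Fin (n + 1) → Matrix (Fin N ⊕ Fin N) (Fin N ⊕ Fin N) ℝ, (∀ i, (φ i)ᵀ = -φ i) ∧
    (∀ x : Fin (n + 1) → ℝ, x ≠ 0 → ∀ v, (∑ i, x i • φ i) *ᵥ v = 0 → v = 0) := by
  obtain ⟨φ, h1, h2, h3⟩ := h.real
  refine ⟨Fin.cons (Im2 N) φ, fun i => ?_, fun x hx v hv => ?_⟩
  · refine Fin.cases ?_ (fun i => ?_) i
    · exact Im2_tr N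
    · exact h1 i
  · rw [Fin.sum_univ_succ] at hv
    simp only [Fin.cons_zero, Fin.cons_succ] at hv
    have h4 : (∑ i, x (Fin.succ i) • φ i)ᵀ = -∑ i, x (Fin.succ i) • φ i := by
      rw [transpose_sum, ← Finset.sum_neg_distrib]
      exact Finset.sum_congr rfl fun i _ => by rw [transpose_smul, h1, smul_neg]
    have h5 : (x 0 • Im2 N) * (∑ i, x (Fin.succ i) • φ i) = -((∑ i, x (Fin.succ i) • φ i) * (x 0 • Im2 N)) := by
      rw [Finset.mul_sum, Finset.sum_mul, ← Finset.sum_neg_distrib]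
      refine Finset.sum_congr rfl fun i _ => ?_
      rw [smul_mul, Matrix.mul_smul, h3, smul_mul, Matrix.mul_smul, smul_neg, smul_neg, smul_comm]
    have key := skew_ker ![x 0 • Im2 N, ∑ i, x (Fin.succ i) • φ i] ?_ ?_ v (by rw [Fin.sum_univ_two]; exact hv)
    · by_cases h0 : x 0 = 0
      · refine h2 (fun i => x i.succ) ?_ v (key 1)
        intro h
        apply hx
        funext i
        refine Fin.cases h0 (fun i => congr_fun h i) i
      · have := key 0
        simp only [cons_val_zero, smul_mulVec] at this
        exact inv_ker (Or.inr (Im2_sq N)) v ((smul_eq_zero.1 this).resolve_left h0)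
    · intro i; fin_cases i
      · show (x 0 • Im2 N)ᵀ = -(x 0 • Im2 N)
        rw [transpose_smul, Im2_tr, smul_neg]
      · exact h4
    · intro i j hij
      fin_cases i <;> fin_cases j
      · exact absurd rfl hij
      · exact h5
      · show _ * _ = -(_ * _)
        exact neg_eq_iff_eq_neg.1 h5.symm
      · exact absurd rfl hij

lemma cancel2 {a b N c : ℕ} (k : ℕ) (h : (2 : ℤ) ^ a ∣ (2 : ℤ) ^ b * N) (hab : a = b + k) : 2 ^ k ∣ N := by
  subst hab
  rw [pow_add] at h
  have := (mul_dvd_mul_iff_left (by positivity)).1 h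
  exact_mod_cast this

lemma UF.A {N j : ℕ} (h : UF N (8 * j + 7)) : 2 ^ (4 * j + 3) ∣ N := by
  obtain ⟨φ, h1, h2⟩ := h.real'
  have := caseA (n := 8 * j + 7 + 1) (by omega) (by positivity) (hasCS0.iter (j + 1)) h1 h2
  refine cancel2 (a := 8 * j + 8) (b := 4 * j + 5) (c := 0) _ ?_ (by ring)
  convert this using 1
  rw [Fintype.card_sum, Fintype.card_fin]
  push_cast
  rw [show (16 : ℤ) = 2 ^ 4 by norm_num, ← pow_mul]
  ring

lemma UF.B {N j : ℕ} (h : UF N (8 * j + 8)) : 2 ^ (4 * j + 4) ∣ N := by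
  obtain ⟨φ, h1, h2, h3⟩ := h.real
  have := caseB (n := 8 * j + 8) (by omega) (by positivity) (hasCS0.iter (j + 1)) h1 h2 _ (Im2_sq N) h3
  refine cancel2 (a := 8 * j + 9) (b := 4 * j + 5) (c := 0) _ ?_ (by ring)
  convert this using 1
  · ring
  rw [Fintype.card_sum, Fintype.card_fin]
  push_cast
  rw [show (16 : ℤ) = 2 ^ 4 by norm_num, ← pow_mul]
  ring

lemma UF.C {N j : ℕ} (h : UF N (8 * j + 1)) : 2 ^ (4 * j + 1) ∣ N := by
  obtain ⟨φ, h1, h2, h3⟩ := h.real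
  have := caseC (n := 8 * j + 1) (by omega) (by positivity) (hasCS1.iter j) h1 h2 _ (Im2_sq N) h3
  refine cancel2 (a := 8 * j + 3) (b := 4 * j + 2) (c := 0) _ ?_ (by ring)
  convert this using 1
  · ring
  rw [Fintype.card_sum, Fintype.card_fin]
  push_cast
  rw [show (16 : ℤ) = 2 ^ 4 by norm_num, ← pow_mul]
  ring

lemma UF.D {N j : ℕ} (h : UF N (8 * j + 3)) : 2 ^ (4 * j + 2) ∣ N := by
  obtain ⟨φ, h1, h2⟩ := h.real'
  have := caseD (n := 8 * j + 3 + 1) (by omega) (by positivity) (hasCS4.iter j) h1 h2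
  refine cancel2 (a := 8 * j + 6) (b := 4 * j + 4) (c := 0) _ ?_ (by ring)
  convert this using 1
  · ring
  rw [Fintype.card_sum, Fintype.card_fin]
  push_cast
  rw [show (16 : ℤ) = 2 ^ 4 by norm_num, ← pow_mul]
  ring

end UpperS

section LowerS
set_option linter.all false
open scoped Kronecker

structure HF {ι κ : Type*} [DecidableEq κ] [Fintype κ] (F : ι → Matrix κ κ ℂ) : Prop where
  s : ∀ i, (F i)ᵀ = -F i
  u : ∀ i, F i * (F i)ᴴ = 1
  o : ∀ i j, i ≠ j → F i * (F j)ᴴ + F j * (F i)ᴴ = 0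

def HasF (N n : ℕ) : Prop := ∃ F : Fin n → Matrix (Fin N) (Fin N) ℂ, HF F

lemma HasF.of {ι κ : Type*} [Fintype ι] [DecidableEq κ] [Fintype κ] {F : ι → Matrix κ κ ℂ} (h : HF F) {N n : ℕ}
    (hN : Fintype.card κ = N) (hn : n ≤ Fintype.card ι) : HasF N n := by
  let e : κ ≃ Fin N := Fintype.equivFinOfCardEq hN
  let g : Fin n → ι := fun i => (Fintype.equivFin ι).symm (Fin.castLE hn i)
  have hg : Function.Injective g := (Equiv.injective _).comp (Fin.castLE_injective hn)
  refine ⟨fun i => reindex e e (F (g i)), fun i => ?_, fun i => ?_, fun i j hij => ?_⟩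
  · rw [transpose_reindex, h.s]; rfl
  · rw [conjTranspose_reindex, reindex_apply, reindex_apply, submatrix_mul_equiv, h.u, submatrix_one_equiv]
  · rw [conjTranspose_reindex, conjTranspose_reindex, reindex_apply, reindex_apply, reindex_apply, reindex_apply, submatrix_mul_equiv, submatrix_mul_equiv]
    have := h.o _ _ (hg.ne hij)
    ext a b
    exact congr_fun (congr_fun this _) _

lemma HasF.tensor {N n : ℕ} (h : HasF N n) (t : ℕ) {n' : ℕ} (hn : n' ≤ n) : HasF (N * t) n' := by
  obtain ⟨F, h⟩ := h
  refine HasF.of (F := fun i => F i ⊗ₖ (1 : Matrix (Fin t) (Fin t) ℂ)) ?_ (by simp) (by simpa using hn)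
  constructor
  · intro i; rw [← kroneckerMap_transpose, transpose_one, h.s]; ext; simp
  · intro i; rw [conjTranspose_kronecker, ← mul_kronecker_mul, h.u, conjTranspose_one, one_mul, one_kronecker_one]
  · intro i j hij
    rw [conjTranspose_kronecker, conjTranspose_kronecker, ← mul_kronecker_mul, ← mul_kronecker_mul, ← add_kronecker, h.o i j hij, zero_kronecker]

noncomputable def cm {κ : Type*} (A : Matrix κ κ ℝ) : Matrix κ κ ℂ := A.map Complex.ofReal

section
variable {κ : Type*} [DecidableEq κ] [Fintype κ]
lemma cm_mul (A B : Matrix κ κ ℝ) : cm (A * B) = cm A * cm B := Matrix.map_mul (f := Complex.ofRealHom)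
lemma cm_one : cm (1 : Matrix κ κ ℝ) = 1 := by simp [cm]
lemma cm_neg (A : Matrix κ κ ℝ) : cm (-A) = -cm A := by ext; simp [cm]
lemma cm_tr (A : Matrix κ κ ℝ) : (cm A)ᵀ = cm Aᵀ := rfl
lemma cm_ctr (A : Matrix κ κ ℝ) : (cm A)ᴴ = cm Aᵀ := by ext; simp [cm]
end

lemma HasF.step {N n k G r : ℕ} {ε : ℝ} (h : HasF N (n + 1)) (c : HasCS k G r ε) : HasF (N * G) (n + 1 + k) := by
  obtain ⟨F, h⟩ := h
  obtain ⟨κ, _, _, γ, ω, J, c, hG⟩ := c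
  let g : Option (Fin k) → Matrix κ κ ℂ := fun o => match o with
    | none => cm ω
    | some i => cm (γ i)
  have gt : ∀ o, (g o)ᵀ = g o := by
    rintro (_ | i)
    · simp only [g, cm_tr, c.ws]
    · simp only [g, cm_tr, c.gs]
  have gh : ∀ o, (g o)ᴴ = g o := by
    rintro (_ | i)
    · simp only [g, cm_ctr, c.ws]
    · simp only [g, cm_ctr, c.gs]
  have g1 : ∀ o, g o * g o = 1 := by
    rintro (_ | i)
    · simp only [g, ← cm_mul, c.w1, cm_one]
    · simp only [g, ← cm_mul, c.g1, cm_one]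
  have ga : ∀ o p, o ≠ p → g o * g p + g p * g o = 0 := by
    rintro (_ | i) (_ | j) hij
    · exact absurd rfl hij
    · simp only [g, ← cm_mul, c.gw, cm_neg]; simp
    · simp only [g, ← cm_mul, c.gw, cm_neg]; simp
    · simp only [g, ← cm_mul]; rw [c.gg i j (fun h => hij (by rw [h])), cm_neg]; simp
  let F' : Option (Fin k) ⊕ Fin n → Matrix (Fin N × κ) (Fin N × κ) ℂ :=
    Sum.elim (fun o => F 0 ⊗ₖ g o) (fun i => F i.succ ⊗ₖ 1)
  have nk : ∀ (A : Matrix (Fin N) (Fin N) ℂ) (B : Matrix κ κ ℂ), (-A) ⊗ₖ B = -(A ⊗ₖ B) := by intro A B; ext; simp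
  refine HasF.of (F := F') ?_ (by simp [hG]) (by simp; omega)
  constructor
  · rintro (o | i)
    · simp only [F', Sum.elim_inl]; rw [← kroneckerMap_transpose, h.s, gt, nk]
    · simp only [F', Sum.elim_inr]; rw [← kroneckerMap_transpose, h.s, transpose_one, nk]
  · rintro (o | i)
    · simp only [F', Sum.elim_inl]; rw [conjTranspose_kronecker, ← mul_kronecker_mul, h.u, gh, g1, one_kronecker_one]
    · simp only [F', Sum.elim_inr]; rw [conjTranspose_kronecker, ← mul_kronecker_mul, h.u, conjTranspose_one, one_mul, one_kronecker_one]
  · rintro (o | i) (p | j) hij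
    · simp only [F', Sum.elim_inl]
      rw [conjTranspose_kronecker, conjTranspose_kronecker, ← mul_kronecker_mul, ← mul_kronecker_mul, gh, gh, ← kronecker_add,
        ga o p (fun h => hij (by rw [h])), kronecker_zero]
    · simp only [F', Sum.elim_inl, Sum.elim_inr]
      rw [conjTranspose_kronecker, conjTranspose_kronecker, ← mul_kronecker_mul, ← mul_kronecker_mul, gh, conjTranspose_one, one_mul, mul_one, ← add_kronecker,
        h.o _ _ (Fin.succ_ne_zero j).symm, zero_kronecker]
    · simp only [F', Sum.elim_inl, Sum.elim_inr]
      rw [conjTranspose_kronecker, conjTranspose_kronecker, ← mul_kronecker_mul, ← mul_kronecker_mul, gh, conjTranspose_one, one_mul, mul_one, ← add_kronecker,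
        h.o _ _ (Fin.succ_ne_zero i), zero_kronecker]
    · simp only [F', Sum.elim_inr]
      have : i.succ ≠ j.succ := fun h => hij (by rw [Fin.succ_injective _ h])
      rw [conjTranspose_kronecker, conjTranspose_kronecker, ← mul_kronecker_mul, ← mul_kronecker_mul, ← add_kronecker,
        h.o _ _ this, zero_kronecker]

lemma HasF.iter {N n : ℕ} (h : HasF N (n + 1)) (q : ℕ) : HasF (N * 16 ^ q) (n + 1 + 8 * q) := by
  induction q with
  | zero => simpa using h
  | succ q ih =>
    have h' : HasF (N * 16 ^ q) ((n + 8 * q) + 1) := by convert ih using 1; ring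
    have := h'.step (hasCS0.iter 1)
    convert this using 1 <;> ring

lemma hf_pstr {k a b : ℕ} (L : Fin a → (Fin k → ZMod 2) × (Fin k → ZMod 2)) (R : Fin b → (Fin k → ZMod 2) × (Fin k → ZMod 2))
    (h1 : ∀ i, (L i).1 ⬝ᵥ (L i).2 = 1) (h2 : ∀ i, (R i).1 ⬝ᵥ (R i).2 = 1)
    (h3 : ∀ i j, i ≠ j → (L i).1 ⬝ᵥ (L j).2 + (L j).1 ⬝ᵥ (L i).2 = 1)
    (h4 : ∀ i j, i ≠ j → (R i).1 ⬝ᵥ (R j).2 + (R j).1 ⬝ᵥ (R i).2 = 1)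
    (h5 : ∀ i j, (L i).1 ⬝ᵥ (R j).2 + (R j).1 ⬝ᵥ (L i).2 = 0) :
    HasF (2 ^ k) (a + b) := by
  have tL : ∀ p : (Fin k → ZMod 2) × (Fin k → ZMod 2), p.1 ⬝ᵥ p.2 = 1 → (pstr p)ᵀ = -pstr p := by
    intro p hp; rw [pstr_tr, hp, sgn2_one, neg_one_smul]
  have sL : ∀ p : (Fin k → ZMod 2) × (Fin k → ZMod 2), p.1 ⬝ᵥ p.2 = 1 → pstr p * pstr p = -1 := by
    intro p hp; rw [pstr_sq, hp, sgn2_one, neg_one_smul]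
  have cI : (Complex.I) * (star Complex.I) = 1 := by simp
  refine HasF.of (F := Sum.elim (fun i => cm (pstr (L i))) (fun i => Complex.I • cm (pstr (R i)))) ?_ (by
    rw [Fintype.card_fun, ZMod.card, Fintype.card_fin]) (by simp)
  constructor
  · rintro (i | i)
    · simp only [Sum.elim_inl]; rw [cm_tr, tL _ (h1 i), cm_neg]
    · simp only [Sum.elim_inr]; rw [transpose_smul, cm_tr, tL _ (h2 i), cm_neg, smul_neg]
  · rintro (i | i)
    · simp only [Sum.elim_inl]; rw [cm_ctr, tL _ (h1 i), ← cm_mul, mul_neg, sL _ (h1 i), neg_neg, cm_one]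
    · simp only [Sum.elim_inr]; rw [conjTranspose_smul, cm_ctr, tL _ (h2 i), smul_mul, Matrix.mul_smul, ← cm_mul, mul_neg, sL _ (h2 i), neg_neg, cm_one,
        smul_smul, cI, one_smul]
  · rintro (i | i) (j | j) hij
    · simp only [Sum.elim_inl]
      rw [cm_ctr, cm_ctr, tL _ (h1 i), tL _ (h1 j), ← cm_mul, ← cm_mul, mul_neg, mul_neg, pstr_comm, h3 i j (fun h => hij (by rw [h])), sgn2_one,
        neg_one_smul, neg_neg, cm_neg, add_neg_cancel]
    · simp only [Sum.elim_inl, Sum.elim_inr]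
      rw [conjTranspose_smul, cm_ctr, cm_ctr, tL _ (h1 i), tL _ (h2 j), Matrix.mul_smul, smul_mul, ← cm_mul, ← cm_mul, mul_neg, mul_neg, pstr_comm, h5, sgn2_zero,
        one_smul, ← add_smul]
      simp
    · simp only [Sum.elim_inl, Sum.elim_inr]
      rw [conjTranspose_smul, cm_ctr, cm_ctr, tL _ (h1 j), tL _ (h2 i), Matrix.mul_smul, smul_mul, ← cm_mul, ← cm_mul, mul_neg, mul_neg, pstr_comm (L j), h5, sgn2_zero,
        one_smul, ← add_smul]
      simp
    · simp only [Sum.elim_inr]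
      rw [conjTranspose_smul, conjTranspose_smul, cm_ctr, cm_ctr, tL _ (h2 i), tL _ (h2 j), smul_mul, Matrix.mul_smul, smul_mul, Matrix.mul_smul,
        ← cm_mul, ← cm_mul, mul_neg, mul_neg, pstr_comm, h4 i j (fun h => hij (by rw [h])), sgn2_one,
        neg_one_smul, neg_neg, cm_neg, smul_neg, smul_neg, add_neg_cancel]

lemma hasF2 : HasF 2 2 := hf_pstr (k := 1) (a := 1) (b := 1) ![(![1],![1])] ![(![1],![1])] (by decide) (by decide) (by decide) (by decide) (by decide)
lemma hasF4 : HasF 4 6 := hf_pstr (k := 2) (a := 3) (b := 3) ![(![0,1],![0,1]),(![1,0],![1,1]),(![1,1],![1,0])]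
  ![(![0,1],![1,1]),(![1,0],![1,0]),(![1,1],![0,1])] (by decide) (by decide) (by decide) (by decide) (by decide)
lemma hasF8 : HasF 8 7 := hasF4.step (n := 5) hasCS1
lemma hasF16 : HasF 16 8 := hasF8.step (n := 6) hasCS1
lemma hasF_zero (N : ℕ) : HasF N 0 := ⟨fun i => i.elim0, ⟨fun i => i.elim0, fun i => i.elim0, fun i => i.elim0⟩⟩

/-- the maximal dimension for valuation `4 q + s` -/
def mxd (q s : ℕ) : ℕ := 8 * q + (if s = 0 then 0 else if s = 1 then 2 else if s = 2 then 6 else 7)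

lemma hasF_main (q s t n : ℕ) (hs : s < 4) (hn : n ≤ mxd q s) : HasF (2 ^ (4 * q + s) * t) n := by
  have e : ∀ q : ℕ, (2 : ℕ) ^ (4 * q) = 16 ^ q := by intro q; rw [pow_mul]; norm_num
  have r : s = 0 ∨ s = 1 ∨ s = 2 ∨ s = 3 := by omega
  rcases r with rfl | rfl | rfl | rfl
  · rcases q with _ | q
    · simp only [mxd] at hn
      obtain rfl : n = 0 := by simpa using hn
      exact hasF_zero _
    · refine HasF.tensor (n := 7 + 1 + 8 * q) ?_ t (by simp [mxd] at hn; omega)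
      have := hasF16.iter (n := 7) q
      convert this using 1
      rw [add_zero, e]; ring
  · refine HasF.tensor (n := 1 + 1 + 8 * q) ?_ t (by simp [mxd] at hn; omega)
    have := hasF2.iter (n := 1) q
    convert this using 1
    rw [pow_add, e]; ring
  · refine HasF.tensor (n := 5 + 1 + 8 * q) ?_ t (by simp [mxd] at hn; omega)
    have := hasF4.iter (n := 5) q
    convert this using 1
    rw [pow_add, e]; ring
  · refine HasF.tensor (n := 6 + 1 + 8 * q) ?_ t (by simp [mxd] at hn; omega)
    have := hasF8.iter (n := 6) q
    convert this using 1
    rw [pow_add, e]; ring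

lemma UF_main (q s t n : ℕ) (hs : s < 4) (ht : ¬ 2 ∣ t) (h : UF (2 ^ (4 * q + s) * t) n) : n ≤ mxd q s := by
  by_contra hlt
  push Not at hlt
  have key : ¬ 2 ^ (4 * q + s + 1) ∣ 2 ^ (4 * q + s) * t := by
    intro h
    rw [pow_succ] at h
    exact ht (Nat.dvd_of_mul_dvd_mul_left (by positivity) h)
  have r : s = 0 ∨ s = 1 ∨ s = 2 ∨ s = 3 := by omega
  apply key
  rcases r with rfl | rfl | rfl | rfl
  · exact (h.mono (n' := 8 * q + 1) (by simp [mxd] at hlt; omega)).C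
  · exact (h.mono (n' := 8 * q + 3) (by simp [mxd] at hlt; omega)).D
  · exact (h.mono (n' := 8 * q + 7) (by simp [mxd] at hlt; omega)).A
  · exact (h.mono (n' := 8 * q + 8) (by simp [mxd] at hlt; omega)).B

lemma exists_unit_fam {N n : ℕ} (h : HasF N n) : ∃ f : EuclideanSpace ℝ (Fin n) →ₗ[ℝ] Matrix (Fin N) (Fin N) ℂ,
        ∀ v, (f v)ᵀ = -(f v) ∧
          f v * (f v)ᴴ = (‖v‖ ^ 2 : ℝ) • (1 : Matrix (Fin N) (Fin N) ℂ) := by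
  obtain ⟨F, h⟩ := h
  refine ⟨{ toFun := fun v => ∑ i, v i • F i, map_add' := fun u v => ?_, map_smul' := fun c v => ?_ }, fun v => ⟨?_, ?_⟩⟩
  · simp only [PiLp.add_apply, add_smul, Finset.sum_add_distrib]
  · simp only [PiLp.smul_apply, smul_eq_mul, mul_smul, Finset.smul_sum, RingHom.id_apply]
  · show (∑ i, v i • F i)ᵀ = -(∑ i, v i • F i)
    rw [transpose_sum, ← Finset.sum_neg_distrib]
    exact Finset.sum_congr rfl fun i _ => by rw [transpose_smul, h.s, smul_neg]
  · show (∑ i, v i • F i) * (∑ i, v i • F i)ᴴ = _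
    have e1 : (∑ i, v i • F i) * (∑ i, v i • F i)ᴴ = ∑ i, ∑ j, (v i * v j) • (F i * (F j)ᴴ) := by
      rw [conjTranspose_sum, Finset.sum_mul]
      refine Finset.sum_congr rfl fun i _ => ?_
      rw [Finset.mul_sum]
      refine Finset.sum_congr rfl fun j _ => ?_
      rw [conjTranspose_smul, smul_mul, Matrix.mul_smul, smul_smul, star_trivial]
    have e2 : (∑ i, v i • F i) * (∑ i, v i • F i)ᴴ = ∑ i, ∑ j, (v i * v j) • (F j * (F i)ᴴ) := by
      rw [e1, Finset.sum_comm]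
      exact Finset.sum_congr rfl fun i _ => Finset.sum_congr rfl fun j _ => by rw [mul_comm]
    have e3 : (2 : ℝ) • ((∑ i, v i • F i) * (∑ i, v i • F i)ᴴ) = (2 : ℝ) • ((‖v‖ ^ 2 : ℝ) • (1 : Matrix (Fin N) (Fin N) ℂ)) := by
      rw [two_smul]
      nth_rw 1 [e1]
      rw [e2, ← Finset.sum_add_distrib]
      rw [EuclideanSpace.norm_sq_eq, Finset.sum_smul, Finset.smul_sum]
      refine Finset.sum_congr rfl fun i _ => ?_
      rw [← Finset.sum_add_distrib, Finset.sum_eq_single i]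
      · rw [h.u, two_smul, Real.norm_eq_abs, sq_abs, sq]
      · intro j _ hj
        rw [← smul_add, h.o i j hj.symm, smul_zero]
      · simp
    exact smul_right_injective _ (two_ne_zero) e3

lemma UF.of_f {N n : ℕ} (f : EuclideanSpace ℝ (Fin n) →ₗ[ℝ] Matrix (Fin N) (Fin N) ℂ)
    (h1 : ∀ v, (f v)ᵀ = -(f v)) (h2 : ∀ v, v ≠ 0 → IsUnit (f v)) : UF N n := by
  refine ⟨fun i => f (EuclideanSpace.single i 1), fun i => h1 _, fun x hx v hv => ?_⟩
  have e : ∑ i, x i • f (EuclideanSpace.single i 1) = f (WithLp.toLp 2 x) := by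
    simp only [← map_smul, ← map_sum]
    congr 1
    ext j
    simp [EuclideanSpace.single_apply, Pi.single_apply]
  rw [e] at hv
  have hne : (WithLp.toLp 2 x : EuclideanSpace ℝ (Fin n)) ≠ 0 := by
    intro h; apply hx; funext i
    exact congr_arg (fun w : EuclideanSpace ℝ (Fin n) => w i) h
  apply mulVec_injective_of_isUnit (h2 _ hne)
  show f _ *ᵥ v = f _ *ᵥ 0
  rw [hv, mulVec_zero]

end LowerS

/-- Extended Hurwitz–Radon number: writing the 2-adic valuation of `t` as `4a + b`
with `a ∈ ℤ` and `b ∈ {0,1,2,3}`, `ρ(t) := 8a + 2^b`. -/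
noncomputable def hrRho (t : ℚ) : ℤ :=
  8 * (padicValRat 2 t / 4) + 2 ^ (padicValRat 2 t % 4).toNat

section FinalS

lemma hrRho_eq (q s t : ℕ) (hs : s < 4) (ht : ¬ 2 ∣ t) :
    hrRho (((2 ^ (4 * q + s) * t : ℕ) : ℚ) / 8) + 6 = mxd q s := by
  have ht0 : t ≠ 0 := by rintro rfl; simp at ht
  have hp : padicValRat 2 (((2 ^ (4 * q + s) * t : ℕ) : ℚ) / 8) = 4 * (q : ℤ) + s - 3 := by
    have h8 : padicValRat 2 (8 : ℚ) = 3 := by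
      rw [show (8 : ℚ) = (2 : ℚ) ^ 3 by norm_num, padicValRat.pow (p := 2) (q := (2:ℚ))]
      have : padicValRat 2 (2 : ℚ) = 1 := by exact_mod_cast padicValRat.self (p := 2) (by norm_num)
      rw [this]; norm_num
    rw [padicValRat.div (by exact_mod_cast mul_ne_zero (by positivity) ht0) (by norm_num), h8, padicValRat.of_nat,
      padicValNat.mul (by positivity) ht0, padicValNat.prime_pow, padicValNat.eq_zero_of_not_dvd ht]
    push_cast; ring
  unfold hrRho
  rw [hp]
  have r : s = 0 ∨ s = 1 ∨ s = 2 ∨ s = 3 := by omega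
  rcases r with rfl | rfl | rfl | rfl
  · rw [show (4 * (q : ℤ) + (0 : ℕ) - 3) / 4 = q - 1 by push_cast; omega, show (4 * (q : ℤ) + (0 : ℕ) - 3) % 4 = 1 by push_cast; omega]
    simp [mxd]; ring
  · rw [show (4 * (q : ℤ) + (1 : ℕ) - 3) / 4 = q - 1 by push_cast; omega, show (4 * (q : ℤ) + (1 : ℕ) - 3) % 4 = 2 by push_cast; omega]
    simp [mxd]; ring
  · rw [show (4 * (q : ℤ) + (2 : ℕ) - 3) / 4 = q - 1 by push_cast; omega, show (4 * (q : ℤ) + (2 : ℕ) - 3) % 4 = 3 by push_cast; omega]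
    simp [mxd]; ring
  · rw [show (4 * (q : ℤ) + (3 : ℕ) - 3) / 4 = q by push_cast; omega, show (4 * (q : ℤ) + (3 : ℕ) - 3) % 4 = 0 by push_cast; omega]
    simp [mxd]; ring

end FinalS

/-- Entry `𝔤 = 𝔰𝔬*(2N)` of the Hurwitz–Radon value theorem:
`ρ⁽¹⁾ = ρ⁽²⁾ = ρ(N/8) + 6`, Au-Yeung's number `ℂ_{sk-s}(N)`. -/
theorem hurwitzRadon_so_star_2N (N : ℕ) (hN : 1 ≤ N) (n : ℕ) :
    ((∃ f : EuclideanSpace ℝ (Fin n) →ₗ[ℝ] Matrix (Fin N) (Fin N) ℂ,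
        ∀ v, (f v)ᵀ = -(f v) ∧
          f v * (f v)ᴴ = (‖v‖ ^ 2 : ℝ) • (1 : Matrix (Fin N) (Fin N) ℂ)) ↔
      (∃ f : EuclideanSpace ℝ (Fin n) →ₗ[ℝ] Matrix (Fin N) (Fin N) ℂ,
        (∀ v, (f v)ᵀ = -(f v)) ∧ ∀ v, v ≠ 0 → IsUnit (f v))) ∧
    ((∃ f : EuclideanSpace ℝ (Fin n) →ₗ[ℝ] Matrix (Fin N) (Fin N) ℂ,
        (∀ v, (f v)ᵀ = -(f v)) ∧ ∀ v, v ≠ 0 → IsUnit (f v)) ↔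
      (n : ℤ) ≤ hrRho ((N : ℚ) / 8) + 6) := by
  have h12 : (∃ f : EuclideanSpace ℝ (Fin n) →ₗ[ℝ] Matrix (Fin N) (Fin N) ℂ,
        ∀ v, (f v)ᵀ = -(f v) ∧
          f v * (f v)ᴴ = (‖v‖ ^ 2 : ℝ) • (1 : Matrix (Fin N) (Fin N) ℂ)) →
      (∃ f : EuclideanSpace ℝ (Fin n) →ₗ[ℝ] Matrix (Fin N) (Fin N) ℂ,
        (∀ v, (f v)ᵀ = -(f v)) ∧ ∀ v, v ≠ 0 → IsUnit (f v)) := by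
    rintro ⟨f, hf⟩
    refine ⟨f, fun v => (hf v).1, fun v hv => ?_⟩
    have hne : (‖v‖ ^ 2 : ℝ) ≠ 0 := pow_ne_zero _ (norm_ne_zero_iff.2 hv)
    refine IsUnit.of_mul_eq_one ((‖v‖ ^ 2 : ℝ)⁻¹ • (f v)ᴴ) ?_
    rw [Matrix.mul_smul, (hf v).2, smul_smul, inv_mul_cancel₀ hne, one_smul]
  obtain ⟨k, t, ht, hNt⟩ := Nat.exists_eq_pow_mul_and_not_dvd (n := N) (by omega) 2 (by norm_num)
  have hk : k = 4 * (k / 4) + k % 4 := by omega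
  rw [hk] at hNt
  have hs : k % 4 < 4 := Nat.mod_lt _ (by norm_num)
  have hr : hrRho ((N : ℚ) / 8) + 6 = mxd (k / 4) (k % 4) := by
    rw [hNt]; exact hrRho_eq _ _ _ hs ht
  have h23 : (∃ f : EuclideanSpace ℝ (Fin n) →ₗ[ℝ] Matrix (Fin N) (Fin N) ℂ,
        (∀ v, (f v)ᵀ = -(f v)) ∧ ∀ v, v ≠ 0 → IsUnit (f v)) →
      (n : ℤ) ≤ hrRho ((N : ℚ) / 8) + 6 := by
    rintro ⟨f, h1, h2⟩
    rw [hr]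
    have := UF.of_f f h1 h2
    rw [hNt] at this
    exact_mod_cast UF_main _ _ _ _ hs ht this
  have h31 : (n : ℤ) ≤ hrRho ((N : ℚ) / 8) + 6 → (∃ f : EuclideanSpace ℝ (Fin n) →ₗ[ℝ] Matrix (Fin N) (Fin N) ℂ,
        ∀ v, (f v)ᵀ = -(f v) ∧
          f v * (f v)ᴴ = (‖v‖ ^ 2 : ℝ) • (1 : Matrix (Fin N) (Fin N) ℂ)) := by
    intro h
    rw [hr] at h
    apply exists_unit_fam
    have := hasF_main (k / 4) (k % 4) t n hs (by exact_mod_cast h)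
    rwa [← hNt] at this
  exact ⟨⟨h12, fun h => h31 (h23 h)⟩, ⟨h23, fun h => h12 (h31 h)⟩⟩
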